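/- arXiv:2210.08155 — 7 statements merged into one kernel-verified Lean document; each statement's English description precedes it below -/
import Mathlib

section
/- Let u : ℝ⁴ → ℝ be a solution of the ultrahyperbolic equation. Then for all a, b, c, d ∈ ℝ and all r > 0, ∫₀^{2π} u(a + r·cos θ, b + r·sin θ, c, d) dθ = ∫₀^{2π} u(a, b, c + r·cos θ, d + r·sin θ) dθ. -/
/-!
Let `M(r, s)` be the integral of `u` over the product of the circle of radius `r` about `(a, b)` and
the circle of radius `s` about `(c, d)`. Since `M(r, 0)` and `M(0, r)` are `2π` times the two sides
of the claim, it suffices that `M(r, 0) = M(0, r)`.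

Integrating the polar form of the Laplacian over a circle removes the angular term
(`circle_identity`), so the ultrahyperbolic equation for `u` becomes the Euler–Poisson–Darboux
equation `M_rr + M_r / r = M_ss + M_s / s`. This equation is symmetric in `r` and `s`, hence also
holds for `M(r, s) - M(s, r)`, which moreover vanishes on the characteristic `r = s`. A weighted
energy estimate on the triangle between the lines `r = s`, `s = 0` and a characteristic `r + s =
const` (`eq_zero_of_characteristic`) shows that the difference vanishes on `s = 0`. The weight `s`
kills the boundary term on `s = 0` and the remaining singular term has a favourable sign, so no
estimate near the axes is needed.
-/

open MeasureTheory Real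

noncomputable section

/-- The neutral bilinear form of signature (2,2) on ℝ⁴. -/
def form22 (x y : Fin 4 → ℝ) : ℝ := x 0 * y 0 + x 1 * y 1 - x 2 * y 2 - x 3 * y 3

/-- Partial derivative of `u` in the `i`-th coordinate direction. -/
def pderiv4 (i : Fin 4) (u : (Fin 4 → ℝ) → ℝ) : (Fin 4 → ℝ) → ℝ :=
  fun x => fderiv ℝ u x (Pi.single i 1)

/-- `u` is a solution of the ultrahyperbolic equation: it is C² and
`∂²u/∂x₁² + ∂²u/∂x₂² − ∂²u/∂x₃² − ∂²u/∂x₄² = 0` everywhere. -/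
def IsUltrahyperbolic (u : (Fin 4 → ℝ) → ℝ) : Prop :=
  ContDiff ℝ 2 u ∧ ∀ x, pderiv4 0 (pderiv4 0 u) x + pderiv4 1 (pderiv4 1 u) x
    - pderiv4 2 (pderiv4 2 u) x - pderiv4 3 (pderiv4 3 u) x = 0

/-! ### Integrals over intervals and triangles -/

/-- Differentiation under the integral sign for a jointly continuous partial derivative. -/
theorem hasDerivAt_integral_of_continuous {F F' : ℝ → ℝ → ℝ} (a b : ℝ)
    (hF : Continuous fun p : ℝ × ℝ => F p.1 p.2) (hF' : Continuous fun p : ℝ × ℝ => F' p.1 p.2)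
    (h : ∀ x t, HasDerivAt (fun x => F x t) (F' x t) x) (x : ℝ) :
    HasDerivAt (fun x => ∫ t in a..b, F x t) (∫ t in a..b, F' x t) x := by
  obtain ⟨K, hK⟩ := ((isCompact_closedBall x 1).prod
    (isCompact_uIcc (a := a) (b := b))).exists_bound_of_continuousOn hF'.continuousOn
  refine (intervalIntegral.hasDerivAt_integral_of_dominated_loc_of_deriv_le (bound := fun _ => K)
    (Metric.closedBall_mem_nhds x one_pos) (.of_forall fun y => ?_) ?_ ?_ ?_ ?_ ?_).2
  · exact Continuous.aestronglyMeasurable (by fun_prop)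
  · exact Continuous.intervalIntegrable (by fun_prop) _ _
  · exact Continuous.aestronglyMeasurable (by fun_prop)
  · exact .of_forall fun t ht y hy => hK (y, t) ⟨hy, Set.uIoc_subset_uIcc ht⟩
  · exact intervalIntegrable_const
  · exact .of_forall fun t _ y _ => h y t

/-- Fubini on the triangle `0 ≤ y ≤ x ≤ X`. -/
theorem integral_integral_triangle {f : ℝ → ℝ → ℝ} (hf : Continuous fun p : ℝ × ℝ => f p.1 p.2)
    {X : ℝ} (hX : 0 ≤ X) :
    ∫ x in (0:ℝ)..X, ∫ y in (0:ℝ)..x, f x y = ∫ y in (0:ℝ)..X, ∫ x in y..X, f x y := by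
  set S : Set (ℝ × ℝ) := {p | p.2 ≤ p.1} with hS
  have hSm : MeasurableSet S := measurableSet_le measurable_snd measurable_fst
  set g : ℝ → ℝ → ℝ := fun x y => S.indicator (fun p => f p.1 p.2) (x, y) with hg
  have hint : Integrable (Function.uncurry g)
      ((volume.restrict (Set.Ioc 0 X)).prod (volume.restrict (Set.Ioc 0 X))) := by
    have h1 : Integrable (fun p : ℝ × ℝ => f p.1 p.2)
        ((volume.restrict (Set.Ioc 0 X)).prod (volume.restrict (Set.Ioc 0 X))) := by
      rw [Measure.prod_restrict, ← Measure.volume_eq_prod]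
      exact (hf.continuousOn.integrableOn_compact
        ((isCompact_Icc (a := (0:ℝ)) (b := X)).prod (isCompact_Icc (a := (0:ℝ)) (b := X)))).mono_set
          (Set.prod_mono Set.Ioc_subset_Icc_self Set.Ioc_subset_Icc_self)
    exact h1.indicator hSm
  have hl : ∀ x ∈ Set.Ioc 0 X, ∫ y in (0:ℝ)..x, f x y = ∫ y in Set.Ioc 0 X, g x y := by
    intro x hx
    have : g x = (Set.Iic x).indicator (f x) := by
      ext y; simp [hg, hS, Set.indicator]
    rw [this, setIntegral_indicator measurableSet_Iic, intervalIntegral.integral_of_le hx.1.le]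
    congr 2
    ext y; simp only [Set.mem_Ioc, Set.mem_inter_iff, Set.mem_Iic] at *; grind
  have hr : ∀ y ∈ Set.Ioc 0 X, ∫ x in y..X, f x y = ∫ x in Set.Ioc 0 X, g x y := by
    intro y hy
    have : (fun x => g x y) = (Set.Ici y).indicator (fun x => f x y) := by
      ext x; simp [hg, hS, Set.indicator]
    rw [this, setIntegral_indicator measurableSet_Ici, intervalIntegral.integral_of_le hy.2,
      ← integral_Icc_eq_integral_Ioc]
    congr 2
    ext y; simp only [Set.mem_Ioc, Set.mem_Icc, Set.mem_inter_iff, Set.mem_Ici] at *; grind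
  rw [intervalIntegral.integral_of_le hX, intervalIntegral.integral_of_le hX,
    setIntegral_congr_fun measurableSet_Ioc hl, setIntegral_congr_fun measurableSet_Ioc hr]
  exact integral_integral_swap hint

/-! ### The energy argument -/

/-- Uniqueness for the Euler–Poisson–Darboux equation `w_rr + w_r / r = w_ss + w_s / s` in
characteristic coordinates `r = ξ + η`, `s = ξ - η`, with zero data on the characteristic `η = 0`.
Here `A`, `B`, `C` stand for `W_ξ`, `W_η`, `W_ξη`, the first entering only through `hAη` and `hA0`,
and `hpde` is the equation multiplied by `2 r s`. The conclusion is that `W` vanishes on `s = 0`.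

The energy field `(s B², s A²)` has divergence `-(s / r) (A + B)² ≤ 0`. It has no flux through
`η = 0`, where `A = 0`, nor through `ξ = η`, where the weight `s` is zero, so its nonnegative flux
through the side `ξ = X` of the triangle `0 ≤ η ≤ ξ ≤ X` is also nonpositive. -/
theorem eq_zero_of_characteristic {W A B C : ℝ → ℝ → ℝ}
    (hA : Continuous fun p : ℝ × ℝ => A p.1 p.2) (hB : Continuous fun p : ℝ × ℝ => B p.1 p.2)
    (hC : Continuous fun p : ℝ × ℝ => C p.1 p.2)
    (hWη : ∀ ξ η, HasDerivAt (fun η => W ξ η) (B ξ η) η)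
    (hAη : ∀ ξ η, HasDerivAt (fun η => A ξ η) (C ξ η) η)
    (hBξ : ∀ ξ η, HasDerivAt (fun ξ => B ξ η) (C ξ η) ξ)
    (hpde : ∀ ξ η, 2 * ((ξ - η) * (ξ + η)) * C ξ η =
      (ξ + η) * (A ξ η - B ξ η) - (ξ - η) * (A ξ η + B ξ η))
    (hW0 : ∀ ξ, W ξ 0 = 0) (hA0 : ∀ ξ, A ξ 0 = 0) {X : ℝ} (hX : 0 < X) : W X X = 0 := by
  set P' : ℝ → ℝ → ℝ := fun ξ η => B ξ η ^ 2 + 2 * (ξ - η) * B ξ η * C ξ η with hP'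
  set Q' : ℝ → ℝ → ℝ := fun ξ η => - A ξ η ^ 2 + 2 * (ξ - η) * A ξ η * C ξ η with hQ'
  have hP'c : Continuous fun p : ℝ × ℝ => P' p.1 p.2 := by fun_prop
  have hQ'c : Continuous fun p : ℝ × ℝ => Q' p.1 p.2 := by fun_prop
  have hP : ∀ ξ η, HasDerivAt (fun ξ => (ξ - η) * B ξ η ^ 2) (P' ξ η) ξ := fun ξ η => by
    refine (((hasDerivAt_id ξ).sub_const η).mul ((hBξ ξ η).pow 2)).congr_deriv ?_
    simp [hP']; ring
  have hQ : ∀ ξ η, HasDerivAt (fun η => (ξ - η) * A ξ η ^ 2) (Q' ξ η) η := fun ξ η => by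
    refine (((hasDerivAt_id η).const_sub ξ).mul ((hAη ξ η).pow 2)).congr_deriv ?_
    simp [hQ']; ring
  have hle : ∀ ξ η, 0 < ξ → 0 ≤ η → η ≤ ξ → P' ξ η + Q' ξ η ≤ 0 := by
    intro ξ η h1 h2 h3
    -- Multiplying by `r = ξ + η` keeps the identity free of division.
    have key : (ξ + η) * (P' ξ η + Q' ξ η) = -((ξ - η) * (A ξ η + B ξ η) ^ 2) := by
      simp only [hP', hQ']
      linear_combination (A ξ η + B ξ η) * hpde ξ η
    have h4 : 0 ≤ (ξ - η) * (A ξ η + B ξ η) ^ 2 := mul_nonneg (by linarith) (sq_nonneg _)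
    by_contra! h5
    have := mul_pos (show 0 < ξ + η by linarith) h5
    linarith
  have hQint : ∀ ξ, ∫ η in (0:ℝ)..ξ, Q' ξ η = 0 := fun ξ => by
    rw [intervalIntegral.integral_eq_sub_of_hasDerivAt (fun η _ => hQ ξ η)
      (Continuous.intervalIntegrable (by fun_prop) _ _)]
    simp [hA0]
  have hPint : ∀ η, ∫ ξ in η..X, P' ξ η = (X - η) * B X η ^ 2 := fun η => by
    rw [intervalIntegral.integral_eq_sub_of_hasDerivAt (fun ξ _ => hP ξ η)
      (Continuous.intervalIntegrable (by fun_prop) _ _)]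
    simp
  have hG : ∫ η in (0:ℝ)..X, (X - η) * B X η ^ 2 ≤ 0 := by
    simp_rw [← hPint]
    rw [← integral_integral_triangle hP'c hX.le, intervalIntegral.integral_of_le hX.le]
    refine setIntegral_nonpos measurableSet_Ioc fun ξ hξ => ?_
    have hadd : ∫ η in (0:ℝ)..ξ, P' ξ η = ∫ η in (0:ℝ)..ξ, (P' ξ η + Q' ξ η) := by
      rw [intervalIntegral.integral_add
        (Continuous.intervalIntegrable (u := P' ξ) (by fun_prop) _ _)
        (Continuous.intervalIntegrable (u := Q' ξ) (by fun_prop) _ _), hQint, add_zero]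
    rw [hadd, intervalIntegral.integral_of_le hξ.1.le]
    exact setIntegral_nonpos measurableSet_Ioc fun η hη => hle ξ η hξ.1 hη.1.le hη.2
  have hBX : ∀ η ∈ Set.Ioo 0 X, B X η = 0 := by
    intro η hη
    by_contra hne
    refine hG.not_gt (intervalIntegral.integral_pos hX (by fun_prop) (fun η hη => ?_)
      ⟨η, Set.Ioo_subset_Icc_self hη, ?_⟩)
    · exact mul_nonneg (sub_nonneg.2 hη.2) (sq_nonneg _)
    · exact mul_pos (sub_pos.2 hη.2) (by positivity)
  have hFTC := intervalIntegral.integral_eq_sub_of_hasDerivAt (a := 0) (b := X) (fun η _ => hWη X η)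
    (Continuous.intervalIntegrable (by fun_prop) _ _)
  rw [hW0, sub_zero] at hFTC
  rw [← hFTC, intervalIntegral.integral_of_le hX.le, integral_Ioc_eq_integral_Ioo,
    setIntegral_congr_fun measurableSet_Ioo hBX]
  simp

/-! ### Integrals over two angles -/

/-- The integral of `f` over the torus `[0, 2π]²`, not normalised by `4π²`. -/
def torusInt (f : ℝ → ℝ → ℝ) : ℝ := ∫ θ in (0:ℝ)..(2 * π), ∫ φ in (0:ℝ)..(2 * π), f θ φ

theorem torusInt_swap {f : ℝ → ℝ → ℝ} (hf : Continuous fun p : ℝ × ℝ => f p.1 p.2) :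
    torusInt f = torusInt fun θ φ => f φ θ := by
  refine intervalIntegral_intervalIntegral_swap ?_
  rw [IntegrableOn, Measure.volume_eq_prod]
  exact (hf.continuousOn.integrableOn_compact (isCompact_uIcc.prod isCompact_uIcc)).mono_set
    (Set.prod_mono Set.uIoc_subset_uIcc Set.uIoc_subset_uIcc)

theorem torusInt_lin {f g : ℝ → ℝ → ℝ} (hf : Continuous fun p : ℝ × ℝ => f p.1 p.2)
    (hg : Continuous fun p : ℝ × ℝ => g p.1 p.2) (a b : ℝ) :
    torusInt (fun θ φ => a * f θ φ + b * g θ φ) = a * torusInt f + b * torusInt g := by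
  unfold torusInt
  rw [← intervalIntegral.integral_const_mul, ← intervalIntegral.integral_const_mul,
    ← intervalIntegral.integral_add (Continuous.intervalIntegrable (by fun_prop) _ _)
      (Continuous.intervalIntegrable (by fun_prop) _ _)]
  refine intervalIntegral.integral_congr fun θ _ => ?_
  simp only
  rw [← intervalIntegral.integral_const_mul, ← intervalIntegral.integral_const_mul,
    ← intervalIntegral.integral_add (Continuous.intervalIntegrable (by fun_prop) _ _)
      (Continuous.intervalIntegrable (by fun_prop) _ _)]

theorem hasDerivAt_torusInt {F F' : ℝ → ℝ → ℝ → ℝ}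
    (hF : Continuous fun p : ℝ × ℝ × ℝ => F p.1 p.2.1 p.2.2)
    (hF' : Continuous fun p : ℝ × ℝ × ℝ => F' p.1 p.2.1 p.2.2)
    (h : ∀ x θ φ, HasDerivAt (fun x => F x θ φ) (F' x θ φ) x) (x : ℝ) :
    HasDerivAt (fun x => torusInt (F x)) (torusInt (F' x)) x := by
  unfold torusInt
  refine hasDerivAt_integral_of_continuous (F := fun x θ => ∫ φ in (0:ℝ)..(2 * π), F x θ φ)
    (F' := fun x θ => ∫ φ in (0:ℝ)..(2 * π), F' x θ φ) _ _ ?_ ?_ (fun x θ => ?_) x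
  · exact intervalIntegral.continuous_parametric_intervalIntegral_of_continuous'
      (f := fun (p : ℝ × ℝ) φ => F p.1 p.2 φ) (by unfold Function.uncurry; fun_prop) _ _
  · exact intervalIntegral.continuous_parametric_intervalIntegral_of_continuous'
      (f := fun (p : ℝ × ℝ) φ => F' p.1 p.2 φ) (by unfold Function.uncurry; fun_prop) _ _
  · exact hasDerivAt_integral_of_continuous (F := fun x φ => F x θ φ)
      (F' := fun x φ => F' x θ φ) _ _ (by fun_prop) (by fun_prop) (fun x φ => h x θ φ) x

theorem continuous_torusInt {F : ℝ × ℝ → ℝ → ℝ → ℝ}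
    (hF : Continuous fun p : (ℝ × ℝ) × ℝ × ℝ => F p.1 p.2.1 p.2.2) :
    Continuous fun p => torusInt (F p) := by
  unfold torusInt
  refine intervalIntegral.continuous_parametric_intervalIntegral_of_continuous'
    (f := fun p θ => ∫ φ in (0:ℝ)..(2 * π), F p θ φ) ?_ _ _
  exact intervalIntegral.continuous_parametric_intervalIntegral_of_continuous'
    (f := fun (p : (ℝ × ℝ) × ℝ) φ => F p.1 p.2 φ) (by unfold Function.uncurry; fun_prop) _ _

/-! ### Circular means of a C² function -/

variable {V : Type*} [NormedAddCommGroup V] [NormedSpace ℝ V]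

/-- The point at angle `θ` of the circle with conjugate radii `e₁`, `e₂`. -/
def circ (e₁ e₂ : V) (θ : ℝ) : V := cos θ • e₁ + sin θ • e₂

@[fun_prop]
theorem continuous_circ (e₁ e₂ : V) : Continuous (circ e₁ e₂) := by
  unfold circ; fun_prop

theorem contDiff_fderiv_one {u : V → ℝ} (hu : ContDiff ℝ 2 u) : ContDiff ℝ 1 (fderiv ℝ u) :=
  hu.fderiv_right (by norm_num)

theorem continuous_snd_fderiv {u : V → ℝ} (hu : ContDiff ℝ 2 u) :
    Continuous (fderiv ℝ (fderiv ℝ u)) :=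
  (hu.fderiv_right (m := 1) (by norm_num)).continuous_fderiv (by norm_num)

theorem hasDerivAt_comp_curve {u : V → ℝ} (hu : ContDiff ℝ 2 u) {γ : ℝ → V} {γ' : V}
    {t : ℝ} (hγ : HasDerivAt γ γ' t) :
    HasDerivAt (fun t => u (γ t)) (fderiv ℝ u (γ t) γ') t :=
  ((hu.differentiable (by norm_num)) (γ t)).hasFDerivAt.comp_hasDerivAt t hγ

theorem hasDerivAt_fderiv_comp_curve {u : V → ℝ} (hu : ContDiff ℝ 2 u) {γ v : ℝ → V}
    {γ' v' : V} {t : ℝ} (hγ : HasDerivAt γ γ' t)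
    (hv : HasDerivAt v v' t) :
    HasDerivAt (fun t => fderiv ℝ u (γ t) (v t))
      (fderiv ℝ (fderiv ℝ u) (γ t) γ' (v t) + fderiv ℝ u (γ t) v') t := by
  have h := (((contDiff_fderiv_one hu).differentiable (by norm_num)) (γ t)).hasFDerivAt.comp_hasDerivAt
    t hγ
  exact h.clm_apply hv

/-- The polar form of the Laplacian integrated over a circle: with `m r` the integral of `u` over
the circle of radius `r`, this is `r ∫ Δu - r m'' - m' = 0`. The integrand is the `θ`-derivative
of the tangential derivative of `u`, which is `2π`-periodic. -/
theorem circle_identity {u : V → ℝ} (hu : ContDiff ℝ 2 u) (p e₁ e₂ : V) (r : ℝ) :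
    ∫ θ in (0:ℝ)..(2 * π),
      (r * (fderiv ℝ (fderiv ℝ u) (p + r • circ e₁ e₂ θ) e₁ e₁
          + fderiv ℝ (fderiv ℝ u) (p + r • circ e₁ e₂ θ) e₂ e₂)
        - r * fderiv ℝ (fderiv ℝ u) (p + r • circ e₁ e₂ θ) (circ e₁ e₂ θ) (circ e₁ e₂ θ)
        - fderiv ℝ u (p + r • circ e₁ e₂ θ) (circ e₁ e₂ θ)) = 0 := by
  have h1 := hu.continuous_fderiv (by norm_num)
  have h2 := continuous_snd_fderiv hu
  have hd : ∀ θ, HasDerivAt (fun θ => fderiv ℝ u (p + r • circ e₁ e₂ θ) (circ e₂ (-e₁) θ))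
      (r * (fderiv ℝ (fderiv ℝ u) (p + r • circ e₁ e₂ θ) e₁ e₁
          + fderiv ℝ (fderiv ℝ u) (p + r • circ e₁ e₂ θ) e₂ e₂)
        - r * fderiv ℝ (fderiv ℝ u) (p + r • circ e₁ e₂ θ) (circ e₁ e₂ θ) (circ e₁ e₂ θ)
        - fderiv ℝ u (p + r • circ e₁ e₂ θ) (circ e₁ e₂ θ)) θ := by
    intro θ
    have hc : ∀ a b : V, HasDerivAt (circ a b) (circ b (-a) θ) θ := fun a b => by
      refine (((hasDerivAt_cos θ).smul_const a).add ((hasDerivAt_sin θ).smul_const b)).congr_deriv ?_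
      simp only [circ]; module
    have hγ : HasDerivAt (fun θ => p + r • circ e₁ e₂ θ) (r • circ e₂ (-e₁) θ) θ :=
      ((hc e₁ e₂).const_smul r).const_add p
    refine (hasDerivAt_fderiv_comp_curve hu hγ (hc e₂ (-e₁))).congr_deriv ?_
    generalize fderiv ℝ (fderiv ℝ u) (p + r • circ e₁ e₂ θ) = H
    generalize fderiv ℝ u (p + r • circ e₁ e₂ θ) = D
    simp only [circ, map_add, map_smul, map_neg, add_apply,
      smul_apply, neg_apply, smul_eq_mul]
    linear_combination r * (H e₁ e₁ + H e₂ e₂) * sin_sq_add_cos_sq θ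
  rw [intervalIntegral.integral_eq_sub_of_hasDerivAt (fun θ _ => hd θ)
    (Continuous.intervalIntegrable (by fun_prop) _ _)]
  simp [circ]

/-! ### The mean value theorem -/

/-- The mean value theorem in a coordinate-free setting: `e₁, e₂` and `f₁, f₂` are any four vectors
for which the corresponding sums of second derivatives of `u` agree. -/
theorem asgeirsson_general {u : V → ℝ} (hu : ContDiff ℝ 2 u) (p e₁ e₂ f₁ f₂ : V)
    (hpde : ∀ x, fderiv ℝ (fderiv ℝ u) x e₁ e₁ + fderiv ℝ (fderiv ℝ u) x e₂ e₂ =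
      fderiv ℝ (fderiv ℝ u) x f₁ f₁ + fderiv ℝ (fderiv ℝ u) x f₂ f₂) {r : ℝ} (hr : 0 < r) :
    ∫ θ in (0:ℝ)..(2 * π), u (p + r • circ e₁ e₂ θ) =
      ∫ θ in (0:ℝ)..(2 * π), u (p + r • circ f₁ f₂ θ) := by
  have h0 := hu.continuous
  have h1 := hu.continuous_fderiv (by norm_num)
  have h2 := continuous_snd_fderiv hu
  set e := circ e₁ e₂
  set f := circ f₁ f₂
  have he : Continuous e := continuous_circ _ _
  have hf : Continuous f := continuous_circ _ _
  set Φ : ℝ → ℝ → ℝ → ℝ → V := fun ξ η θ φ => p + (ξ + η) • e θ + (ξ - η) • f φ with hΦ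
  have hΦξ : ∀ ξ η θ φ, HasDerivAt (fun ξ => Φ ξ η θ φ) (e θ + f φ) ξ := fun ξ η θ φ => by
    refine (((((hasDerivAt_id ξ).add_const η).smul_const (e θ)).const_add p).add
      (((hasDerivAt_id ξ).sub_const η).smul_const (f φ))).congr_deriv ?_
    module
  have hΦη : ∀ ξ η θ φ, HasDerivAt (fun η => Φ ξ η θ φ) (e θ - f φ) η := fun ξ η θ φ => by
    refine (((((hasDerivAt_id η).const_add ξ).smul_const (e θ)).const_add p).add
      (((hasDerivAt_id η).const_sub ξ).smul_const (f φ))).congr_deriv ?_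
    module
  have hsymm : ∀ x v w, fderiv ℝ (fderiv ℝ u) x v w = fderiv ℝ (fderiv ℝ u) x w v :=
    fun x v w => (hu.contDiffAt.isSymmSndFDerivAt (by simp)) v w
  -- The double circular integral with radii `ξ + η` and `ξ - η`, and its derivatives
  -- `w_ξ`, `w_η`, `w_ξη`.
  set w : ℝ → ℝ → ℝ := fun ξ η => torusInt fun θ φ => u (Φ ξ η θ φ) with hw
  set A : ℝ → ℝ → ℝ := fun ξ η => torusInt fun θ φ => fderiv ℝ u (Φ ξ η θ φ) (e θ + f φ) with hA
  set B : ℝ → ℝ → ℝ := fun ξ η => torusInt fun θ φ => fderiv ℝ u (Φ ξ η θ φ) (e θ - f φ) with hB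
  set C : ℝ → ℝ → ℝ := fun ξ η => torusInt fun θ φ =>
    fderiv ℝ (fderiv ℝ u) (Φ ξ η θ φ) (e θ + f φ) (e θ - f φ) with hC
  have hAc : Continuous fun p : ℝ × ℝ => A p.1 p.2 := continuous_torusInt
    (F := fun p θ φ => fderiv ℝ u (Φ p.1 p.2 θ φ) (e θ + f φ)) (by fun_prop)
  have hBc : Continuous fun p : ℝ × ℝ => B p.1 p.2 := continuous_torusInt
    (F := fun p θ φ => fderiv ℝ u (Φ p.1 p.2 θ φ) (e θ - f φ)) (by fun_prop)
  have hCc : Continuous fun p : ℝ × ℝ => C p.1 p.2 := continuous_torusInt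
    (F := fun p θ φ => fderiv ℝ (fderiv ℝ u) (Φ p.1 p.2 θ φ) (e θ + f φ) (e θ - f φ))
    (by fun_prop)
  have hwξ : ∀ ξ η, HasDerivAt (fun ξ => w ξ η) (A ξ η) ξ := fun ξ η =>
    hasDerivAt_torusInt (F := fun ξ θ φ => u (Φ ξ η θ φ))
      (F' := fun ξ θ φ => fderiv ℝ u (Φ ξ η θ φ) (e θ + f φ)) (by fun_prop) (by fun_prop)
      (fun ξ θ φ => hasDerivAt_comp_curve hu (hΦξ ξ η θ φ)) ξ
  have hwη : ∀ ξ η, HasDerivAt (fun η => w ξ η) (B ξ η) η := fun ξ η =>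
    hasDerivAt_torusInt (F := fun η θ φ => u (Φ ξ η θ φ))
      (F' := fun η θ φ => fderiv ℝ u (Φ ξ η θ φ) (e θ - f φ)) (by fun_prop) (by fun_prop)
      (fun η θ φ => hasDerivAt_comp_curve hu (hΦη ξ η θ φ)) η
  have hAη : ∀ ξ η, HasDerivAt (fun η => A ξ η) (C ξ η) η := fun ξ η =>
    hasDerivAt_torusInt (F := fun η θ φ => fderiv ℝ u (Φ ξ η θ φ) (e θ + f φ))
      (F' := fun η θ φ => fderiv ℝ (fderiv ℝ u) (Φ ξ η θ φ) (e θ + f φ) (e θ - f φ))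
      (by fun_prop) (by fun_prop)
      (fun η θ φ => (hasDerivAt_fderiv_comp_curve hu (hΦη ξ η θ φ)
        (hasDerivAt_const η (e θ + f φ))).congr_deriv (by rw [map_zero, add_zero, hsymm])) η
  have hBξ : ∀ ξ η, HasDerivAt (fun ξ => B ξ η) (C ξ η) ξ := fun ξ η =>
    hasDerivAt_torusInt (F := fun ξ θ φ => fderiv ℝ u (Φ ξ η θ φ) (e θ - f φ))
      (F' := fun ξ θ φ => fderiv ℝ (fderiv ℝ u) (Φ ξ η θ φ) (e θ + f φ) (e θ - f φ))
      (by fun_prop) (by fun_prop)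
      (fun ξ θ φ => (hasDerivAt_fderiv_comp_curve hu (hΦξ ξ η θ φ)
        (hasDerivAt_const ξ (e θ - f φ))).congr_deriv (by rw [map_zero, add_zero])) ξ
  -- The Euler–Poisson–Darboux equation, cleared of denominators.
  have hEPD : ∀ ξ η, 2 * ((ξ - η) * (ξ + η)) * C ξ η =
      (ξ + η) * (A ξ η - B ξ η) - (ξ - η) * (A ξ η + B ξ η) := by
    intro ξ η
    set Z₁ : ℝ → ℝ → ℝ := fun θ φ =>
      (ξ + η) * (fderiv ℝ (fderiv ℝ u) (Φ ξ η θ φ) e₁ e₁ + fderiv ℝ (fderiv ℝ u) (Φ ξ η θ φ) e₂ e₂)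
        - (ξ + η) * fderiv ℝ (fderiv ℝ u) (Φ ξ η θ φ) (e θ) (e θ)
        - fderiv ℝ u (Φ ξ η θ φ) (e θ) with hZ₁
    set Z₂ : ℝ → ℝ → ℝ := fun θ φ =>
      (ξ - η) * (fderiv ℝ (fderiv ℝ u) (Φ ξ η θ φ) f₁ f₁ + fderiv ℝ (fderiv ℝ u) (Φ ξ η θ φ) f₂ f₂)
        - (ξ - η) * fderiv ℝ (fderiv ℝ u) (Φ ξ η θ φ) (f φ) (f φ)
        - fderiv ℝ u (Φ ξ η θ φ) (f φ) with hZ₂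
    have hZ₁c : Continuous fun p : ℝ × ℝ => Z₁ p.1 p.2 := by fun_prop
    have hZ₂c : Continuous fun p : ℝ × ℝ => Z₂ p.1 p.2 := by fun_prop
    have hI₁ : torusInt Z₁ = 0 := by
      rw [torusInt_swap hZ₁c]
      refine (intervalIntegral.integral_congr fun φ _ => ?_).trans intervalIntegral.integral_zero
      have := circle_identity hu (p + (ξ - η) • f φ) e₁ e₂ (ξ + η)
      simp_rw [add_right_comm p] at this
      exact this
    have hI₂ : torusInt Z₂ = 0 := by
      refine (intervalIntegral.integral_congr fun θ _ => ?_).trans intervalIntegral.integral_zero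
      exact circle_identity hu (p + (ξ + η) • e θ) f₁ f₂ (ξ - η)
    have hZ : torusInt (fun θ φ => (-2 * (ξ - η)) * Z₁ θ φ + (2 * (ξ + η)) * Z₂ θ φ) = 0 := by
      rw [torusInt_lin hZ₁c hZ₂c, hI₁, hI₂]; simp
    have hAB : torusInt (fun θ φ => (-2 * η) * fderiv ℝ u (Φ ξ η θ φ) (e θ + f φ)
        + (2 * ξ) * fderiv ℝ u (Φ ξ η θ φ) (e θ - f φ)) = -2 * η * A ξ η + 2 * ξ * B ξ η :=
      torusInt_lin (by fun_prop) (by fun_prop) _ _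
    have hABC : torusInt (fun θ φ => (2 * ((ξ - η) * (ξ + η))) *
          fderiv ℝ (fderiv ℝ u) (Φ ξ η θ φ) (e θ + f φ) (e θ - f φ)
        + 1 * ((-2 * η) * fderiv ℝ u (Φ ξ η θ φ) (e θ + f φ)
        + (2 * ξ) * fderiv ℝ u (Φ ξ η θ φ) (e θ - f φ))) =
        2 * ((ξ - η) * (ξ + η)) * C ξ η + 1 * (-2 * η * A ξ η + 2 * ξ * B ξ η) := by
      rw [← hAB]
      exact torusInt_lin (by fun_prop) (by fun_prop) _ _
    have heq : (fun θ φ => (-2 * (ξ - η)) * Z₁ θ φ + (2 * (ξ + η)) * Z₂ θ φ) =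
        (fun θ φ => (2 * ((ξ - η) * (ξ + η))) *
          fderiv ℝ (fderiv ℝ u) (Φ ξ η θ φ) (e θ + f φ) (e θ - f φ)
        + 1 * ((-2 * η) * fderiv ℝ u (Φ ξ η θ φ) (e θ + f φ)
        + (2 * ξ) * fderiv ℝ u (Φ ξ η θ φ) (e θ - f φ))) := by
      ext θ φ
      simp only [hZ₁, hZ₂, map_add, map_sub, add_apply]
      linear_combination (-2 * (ξ - η) * (ξ + η)) * hpde (Φ ξ η θ φ)
        + 2 * (ξ - η) * (ξ + η) * hsymm (Φ ξ η θ φ) (e θ) (f φ)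
    rw [heq, hABC] at hZ
    linear_combination hZ
  have hneg : ∀ {g : ℝ → ℝ} {g' : ℝ} {x : ℝ}, HasDerivAt g g' (-x) →
      HasDerivAt (fun x => g (-x)) (-g') x := fun {g g' x} h => by
    simpa [Function.comp_def] using h.comp x (hasDerivAt_neg x)
  -- Exchanging the two radii is `η ↦ -η`, so the odd part of `w` in `η` is to be shown zero.
  have hfinal := eq_zero_of_characteristic (W := fun ξ η => w ξ η - w ξ (-η))
    (A := fun ξ η => A ξ η - A ξ (-η))
    (B := fun ξ η => B ξ η + B ξ (-η)) (C := fun ξ η => C ξ η + C ξ (-η))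
    (by fun_prop) (by fun_prop) (by fun_prop)
    (fun ξ η => ((hwη ξ η).sub (hneg (hwη ξ (-η)))).congr_deriv (by ring))
    (fun ξ η => ((hAη ξ η).sub (hneg (hAη ξ (-η)))).congr_deriv (by ring))
    (fun ξ η => (hBξ ξ η).add (hBξ ξ (-η)))
    (fun ξ η => by linear_combination hEPD ξ η + hEPD ξ (-η))
    (by simp) (by simp) (half_pos hr)
  -- At `ξ = η = r / 2` one radius is `r` and the other is zero, so each double integral is `2π`
  -- times a single one.
  simp only [hw, hΦ, torusInt, add_neg_cancel, sub_neg_eq_add, add_halves, sub_self, zero_smul,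
    add_zero, intervalIntegral.integral_const, smul_eq_mul, sub_zero,
    intervalIntegral.integral_const_mul, ← mul_sub] at hfinal
  have := (mul_eq_zero.1 hfinal).resolve_left (by positivity)
  linarith

theorem pderiv4_pderiv4 {u : (Fin 4 → ℝ) → ℝ} (hu : ContDiff ℝ 2 u) (i : Fin 4) (x : Fin 4 → ℝ) :
    pderiv4 i (pderiv4 i u) x = fderiv ℝ (fderiv ℝ u) x (Pi.single i 1) (Pi.single i 1) := by
  have h := (((contDiff_fderiv_one hu).differentiable (by norm_num)) x).hasFDerivAt
  change fderiv ℝ (fun y => fderiv ℝ u y (Pi.single i 1)) x (Pi.single i 1) = _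
  rw [(h.clm_apply (hasFDerivAt_const (Pi.single i (1:ℝ)) x)).fderiv]
  simp

theorem asgeirsson (u : (Fin 4 → ℝ) → ℝ) (hu : IsUltrahyperbolic u) :
    ∀ (a b c d r : ℝ), 0 < r →
      (∫ θ in (0:ℝ)..(2 * π), u ![a + r * Real.cos θ, b + r * Real.sin θ, c, d]) =
      ∫ θ in (0:ℝ)..(2 * π), u ![a, b, c + r * Real.cos θ, d + r * Real.sin θ] := by
  intro a b c d r hr
  have h := asgeirsson_general hu.1 ![a, b, c, d] (Pi.single 0 1) (Pi.single 1 1)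
    (Pi.single 2 1) (Pi.single 3 1) (fun x => by
      have := hu.2 x
      simp only [pderiv4_pderiv4 hu.1] at this
      linarith) hr
  convert h using 4 with θ θ
  · ext i; fin_cases i <;> simp [circ]
  · ext i; fin_cases i <;> simp [circ]
end
end

section
/- Let u : ℝ⁴ → ℝ be a solution of the ultrahyperbolic equation. Let e₁, e₂, e₃, e₄ ∈ ℝ⁴ satisfy ⟨eᵢ, eⱼ⟩ = 0 for i ≠ j, ‖e₁‖² = ‖e₂‖² = 1 and ‖e₃‖² = ‖e₄‖² = −1. Then for every p ∈ ℝ⁴ and r > 0, ∫₀^{2π} u(p + r·cos θ·e₁ + r·sin θ·e₂) dθ = ∫₀^{2π} u(p + r·cos θ·e₃ + r·sin θ·e₄) dθ (the mean value property over conjugate circles: a pair of circles with common center and opposite radius-square lying in complementary definite 2-planes of ℝ^{2,2}). -/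
/-!
Averaging `u` over both circles, of radius `s` in the positive plane and radius `t` in the negative
plane, gives a `C²` function `M (s, t)`; the two sides of the theorem are `M (r, 0)` and `M (0, r)`
up to the factor `2 π`. Writing the ultrahyperbolic operator in the pseudo-orthonormal basis
(`neutral_trace`) and in polar coordinates (`circlePair_pde`), and discarding the exact second
angular derivatives, shows that `M` solves the Euler–Poisson–Darboux equation
`M_ss + M_s / s = M_tt + M_t / t` (`doubleAverage_pde`).

This equation is symmetric in `s` and `t`, so `F (s, t) = M (s, t) - M (t, s)` solves it too and
vanishes on the characteristic `s = t`. Such a solution vanishes for `t = 0` (`epd_goursat`): the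
energy `E(s) = ∫₀ˢ t (F_s² + F_t²) dt` satisfies
`E'(s) = s (F_s + F_t)² (s, s) - (2 / s) ∫₀ˢ t F_s² dt ≤ 0`, since `F_s + F_t = 0` on the diagonal,
while `E(0) = 0` and `E ≥ 0`. Hence `E = 0`, so `F_t = 0` for `0 < t < s` and
`F (r, 0) = F (r, r) = 0`.
-/

open MeasureTheory Real

noncomputable section

/-- The associated neutral quadratic form `‖x‖² = x₁² + x₂² − x₃² − x₄²`. -/
def q22 (x : Fin 4 → ℝ) : ℝ := form22 x x

/-! ### Directional derivatives and integrals depending on parameters -/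

section Calculus

variable {E V G : Type*} [NormedAddCommGroup E] [NormedSpace ℝ E]
  [NormedAddCommGroup V] [NormedSpace ℝ V] [NormedAddCommGroup G] [NormedSpace ℝ G]

/-- The derivative of `f` in the fixed direction `w`, as a function of the base point. -/
def dirD (w : E) (f : E → ℝ) : E → ℝ := fun x => fderiv ℝ f x w

/-- Integration of the last variable over `[0, b]`. -/
def intLast (b : ℝ) (f : E × ℝ → G) : E → G := fun x => ∫ t in (0:ℝ)..b, f (x, t)

theorem dirD_contDiff {f : E → ℝ} (hf : ContDiff ℝ 2 f) (w : E) : ContDiff ℝ 1 (dirD w f) :=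
  (hf.fderiv_right (m := 1) (by norm_num)).clm_apply contDiff_const

theorem dirD_continuous {f : E → ℝ} (hf : ContDiff ℝ 1 f) (w : E) : Continuous (dirD w f) :=
  (hf.continuous_fderiv (by norm_num)).clm_apply continuous_const

theorem dirD_comm {f : E → ℝ} (hf : ContDiff ℝ 2 f) (v w : E) :
    dirD v (dirD w f) = dirD w (dirD v f) := by
  have key : ∀ a b x, dirD a (dirD b f) x = fderiv ℝ (fderiv ℝ f) x a b := by
    intro a b x
    have hd : DifferentiableAt ℝ (fderiv ℝ f) x :=
      ((hf.fderiv_right (m := 1) (by norm_num)).differentiable (by norm_num)) x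
    have h := hd.hasFDerivAt.clm_apply (hasFDerivAt_const b x)
    unfold dirD
    rw [h.fderiv]
    simp
  ext x
  rw [key, key]
  exact (hf.contDiffAt.isSymmSndFDerivAt (by simp)) v w

omit [NormedSpace ℝ E] in
theorem intLast_continuous {f : E × ℝ → G} (hf : Continuous f) (b : ℝ) :
    Continuous (intLast b f) :=
  intervalIntegral.continuous_parametric_intervalIntegral_of_continuous'
    (f := fun x t => f (x, t)) hf 0 b

/-- Differentiation under the integral sign; the partial derivative of a `C¹` integrand is bounded
on the compact set `closedBall x 1 × [0, b]`. -/
theorem intLast_hasFDerivAt [FiniteDimensional ℝ E] {f : E × ℝ → G} (hf : ContDiff ℝ 1 f)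
    (b : ℝ) (x : E) :
    HasFDerivAt (intLast b f)
      (intLast b (fun z => (fderiv ℝ f z).comp (ContinuousLinearMap.inl ℝ E ℝ)) x) x := by
  have : ProperSpace E := FiniteDimensional.proper ℝ E
  have hfc := hf.continuous
  have hdc : Continuous (fun z => (fderiv ℝ f z).comp (ContinuousLinearMap.inl ℝ E ℝ)) :=
    (hf.continuous_fderiv (by norm_num)).clm_comp continuous_const
  obtain ⟨C, hC⟩ := ((isCompact_closedBall x 1).prod
    (isCompact_uIcc (a := 0) (b := b))).exists_bound_of_continuousOn hdc.continuousOn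
  refine intervalIntegral.hasFDerivAt_integral_of_dominated_of_fderiv_le
    (s := Metric.closedBall x 1) (bound := fun _ => C)
    (F := fun x t => f (x, t))
    (F' := fun x t => (fderiv ℝ f (x, t)).comp (ContinuousLinearMap.inl ℝ E ℝ))
    (Metric.closedBall_mem_nhds x one_pos) ?_ ?_ ?_ ?_ ?_ ?_
  · exact Filter.Eventually.of_forall fun y =>
      (hfc.comp (Continuous.prodMk_right y)).aestronglyMeasurable
  · exact (hfc.comp (Continuous.prodMk_right x)).intervalIntegrable _ _
  · exact (hdc.comp (Continuous.prodMk_right x)).aestronglyMeasurable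
  · exact Filter.Eventually.of_forall fun t ht y hy =>
      hC (y, t) ⟨hy, Set.uIoc_subset_uIcc ht⟩
  · exact intervalIntegrable_const
  · refine Filter.Eventually.of_forall fun t _ y _ => ?_
    have h1 : HasFDerivAt f (fderiv ℝ f (y, t)) (y, t) :=
      (hf.differentiable (by norm_num) _).hasFDerivAt
    exact h1.comp y (hasFDerivAt_prodMk_left y t)

theorem intLast_contDiff_one [FiniteDimensional ℝ E] {f : E × ℝ → G} (hf : ContDiff ℝ 1 f)
    (b : ℝ) : ContDiff ℝ 1 (intLast b f) := by
  rw [contDiff_one_iff_fderiv]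
  refine ⟨fun x => (intLast_hasFDerivAt hf b x).differentiableAt, ?_⟩
  rw [funext fun x => (intLast_hasFDerivAt hf b x).fderiv]
  exact intLast_continuous
    ((hf.continuous_fderiv (by norm_num)).clm_comp continuous_const) b

theorem intLast_contDiff_two [FiniteDimensional ℝ E] {f : E × ℝ → G} (hf : ContDiff ℝ 2 f)
    (b : ℝ) : ContDiff ℝ 2 (intLast b f) := by
  have hf1 : ContDiff ℝ 1 f := hf.of_le (by norm_num)
  have h2 : (2 : WithTop ℕ∞) = 1 + 1 := by norm_num
  rw [h2, contDiff_succ_iff_fderiv]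
  refine ⟨fun x => (intLast_hasFDerivAt hf1 b x).differentiableAt, by simp, ?_⟩
  rw [funext fun x => (intLast_hasFDerivAt hf1 b x).fderiv]
  exact intLast_contDiff_one
    ((hf.fderiv_right (m := 1) (by norm_num)).clm_comp contDiff_const) b

theorem dirD_intLast [FiniteDimensional ℝ E] {f : E × ℝ → ℝ} (hf : ContDiff ℝ 1 f)
    (b : ℝ) (w : E) : dirD w (intLast b f) = intLast b (dirD (w, 0) f) := by
  ext x
  have hdc : Continuous (fun z => (fderiv ℝ f z).comp (ContinuousLinearMap.inl ℝ E ℝ)) :=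
    (hf.continuous_fderiv (by norm_num)).clm_comp continuous_const
  unfold dirD
  rw [(intLast_hasFDerivAt hf b x).fderiv]
  unfold intLast
  have h := ContinuousLinearMap.intervalIntegral_apply (μ := volume)
    ((hdc.comp (Continuous.prodMk_right x)).intervalIntegrable 0 b) w
  simpa using h

/-- Over a full period, the integral of the derivative in the periodic variable vanishes. -/
theorem intLast_dirD_periodic {f : E × ℝ → ℝ} (hf : ContDiff ℝ 1 f) {b : ℝ}
    (hper : ∀ x t, f (x, t + b) = f (x, t)) (x : E) : intLast b (dirD (0, 1) f) x = 0 := by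
  have hd : ∀ t, HasDerivAt (fun t => f (x, t)) (dirD (0, 1) f (x, t)) t := by
    intro t
    have h1 : HasFDerivAt f (fderiv ℝ f (x, t)) (x, t) :=
      (hf.differentiable (by norm_num) _).hasFDerivAt
    exact h1.comp_hasDerivAt t ((hasDerivAt_const t x).prodMk (hasDerivAt_id t))
  unfold intLast
  rw [intervalIntegral.integral_eq_sub_of_hasDerivAt (fun t _ => hd t)
    (((dirD_continuous hf _).comp (Continuous.prodMk_right x)).intervalIntegrable _ _)]
  have := hper x 0
  rw [zero_add] at this
  rw [this, sub_self]

theorem dirD_periodic {f : E → ℝ} {c : E} (hper : ∀ x, f (x + c) = f x) (w x : E) :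
    dirD w f (x + c) = dirD w f x := by
  unfold dirD
  have h : (fun y => f (y + c)) = f := funext hper
  rw [← fderiv_comp_add_right, h]

theorem dirD_eq {f : E → ℝ} (hf : ContDiff ℝ 1 f) {w x : E} {d : ℝ}
    (h : HasDerivAt (fun τ : ℝ => f (x + τ • w)) d 0) : dirD w f x = d := by
  have h1 : HasFDerivAt f (fderiv ℝ f x) (x + (0:ℝ) • w) := by
    simpa using (hf.differentiable (by norm_num) x).hasFDerivAt
  have h2 : HasDerivAt (fun τ : ℝ => x + τ • w) w 0 := by
    simpa using ((hasDerivAt_id (0:ℝ)).smul_const w).const_add x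
  exact (h1.comp_hasDerivAt (0:ℝ) h2).unique h

theorem dirD_comp {u : V → ℝ} (hu : ContDiff ℝ 2 u) {φ ψ : E → V} (hφ : ContDiff ℝ 2 φ)
    {w : E} (h : ∀ z, HasDerivAt (fun τ : ℝ => φ (z + τ • w)) (ψ z) 0) (z : E) :
    dirD w (u ∘ φ) z = fderiv ℝ u (φ z) (ψ z) := by
  refine dirD_eq ((hu.comp hφ).of_le (by norm_num)) ?_
  have h1 : HasFDerivAt u (fderiv ℝ u (φ z)) (φ (z + (0:ℝ) • w)) := by
    simpa using (hu.differentiable (by norm_num) (φ z)).hasFDerivAt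
  exact h1.comp_hasDerivAt (0:ℝ) (h z)

/-- Second directional derivative of a composition `u ∘ φ`, where `ψ` and `χ` are the first and
second derivatives of `φ` in the direction `w`. -/
theorem dirD_dirD_comp {u : V → ℝ} (hu : ContDiff ℝ 2 u) {φ ψ χ : E → V} (hφ : ContDiff ℝ 2 φ)
    {w : E} (h : ∀ z, HasDerivAt (fun τ : ℝ => φ (z + τ • w)) (ψ z) 0)
    (h' : ∀ z, HasDerivAt (fun τ : ℝ => ψ (z + τ • w)) (χ z) 0) (z : E) :
    dirD w (dirD w (u ∘ φ)) z =
      fderiv ℝ (fderiv ℝ u) (φ z) (ψ z) (ψ z) + fderiv ℝ u (φ z) (χ z) := by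
  refine dirD_eq (dirD_contDiff (hu.comp hφ) w) ?_
  rw [funext (dirD_comp hu hφ h)]
  have hu' : ContDiff ℝ 1 (fderiv ℝ u) := hu.fderiv_right (by norm_num)
  have h1 : HasFDerivAt (fderiv ℝ u) (fderiv ℝ (fderiv ℝ u) (φ z)) (φ (z + (0:ℝ) • w)) := by
    rw [zero_smul, add_zero]
    exact (hu'.differentiable (by norm_num) (φ z)).hasFDerivAt
  have h2 : HasDerivAt (fun τ : ℝ => fderiv ℝ u (φ (z + τ • w)))
      (fderiv ℝ (fderiv ℝ u) (φ z) (ψ z)) 0 := h1.comp_hasDerivAt (0:ℝ) (h z)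
  have h3 := h2.clm_apply (h' z)
  rw [zero_smul, add_zero] at h3
  exact h3

end Calculus

/-! ### The Goursat problem for the Euler–Poisson–Darboux equation -/

set_option maxHeartbeats 1000000 in
/-- Uniqueness for the Goursat problem of the Euler–Poisson–Darboux equation
`F_ss + F_s / s = F_tt + F_t / t`: a `C²` solution vanishing on the characteristic `s = t`
vanishes on the axis `t = 0`. -/
theorem epd_goursat (F : ℝ × ℝ → ℝ) (hF : ContDiff ℝ 2 F) (hdiag : ∀ s, F (s, s) = 0)
    (hpde : ∀ s t, 0 < s → 0 < t →
      s * t * (dirD (1, 0) (dirD (1, 0) F) (s, t) - dirD (0, 1) (dirD (0, 1) F) (s, t))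
        + t * dirD (1, 0) F (s, t) - s * dirD (0, 1) F (s, t) = 0)
    (r : ℝ) (hr : 0 < r) : F (r, 0) = 0 := by
  set A := dirD (1, 0) F with hA
  set B := dirD (0, 1) F with hB
  have hF1 : ContDiff ℝ 1 F := hF.of_le (by norm_num)
  have hA1 : ContDiff ℝ 1 A := dirD_contDiff hF _
  have hB1 : ContDiff ℝ 1 B := dirD_contDiff hF _
  have hsymm : dirD (0, 1) A = dirD (1, 0) B := dirD_comm hF _ _
  have hlin : ∀ (f : ℝ × ℝ → ℝ) (z : ℝ × ℝ) (a b : ℝ),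
      fderiv ℝ f z (a, b) = a * dirD (1, 0) f z + b * dirD (0, 1) f z := by
    intro f z a b
    have : ((a, b) : ℝ × ℝ) = a • ((1, 0) : ℝ × ℝ) + b • ((0, 1) : ℝ × ℝ) := by simp
    rw [this, map_add, map_smul, map_smul]
    rfl
  have hcurve_s : ∀ (f : ℝ × ℝ → ℝ), ContDiff ℝ 1 f → ∀ s τ,
      HasDerivAt (fun s => f (s, s * τ))
        (dirD (1, 0) f (s, s * τ) + τ * dirD (0, 1) f (s, s * τ)) s := by
    intro f hf s τ
    have h1 := (hf.differentiable (by norm_num) (s, s * τ)).hasFDerivAt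
    have h2 : HasDerivAt (fun s : ℝ => (s, s * τ)) (1, τ) s := by
      simpa using (hasDerivAt_id s).prodMk ((hasDerivAt_id s).mul_const τ)
    have h3 := h1.comp_hasDerivAt s h2
    rw [hlin, one_mul] at h3
    exact h3
  have hcurve_t : ∀ (f : ℝ × ℝ → ℝ), ContDiff ℝ 1 f → ∀ s τ,
      HasDerivAt (fun τ => f (s, s * τ)) (s * dirD (0, 1) f (s, s * τ)) τ := by
    intro f hf s τ
    have h1 := (hf.differentiable (by norm_num) (s, s * τ)).hasFDerivAt
    have h2 : HasDerivAt (fun τ : ℝ => (s, s * τ)) (0, s) τ := by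
      simpa using (hasDerivAt_const τ s).prodMk ((hasDerivAt_id τ).const_mul s)
    have h3 := h1.comp_hasDerivAt τ h2
    rw [hlin, zero_mul, zero_add] at h3
    exact h3
  have hAB : ∀ s, A (s, s) + B (s, s) = 0 := by
    intro s
    have h := hcurve_s F hF1 s 1
    simp only [mul_one, one_mul, hdiag] at h
    exact h.unique (hasDerivAt_const s (0:ℝ))
  -- `k` is the energy density, with the domain of integration `0 ≤ t ≤ s` rescaled by `t = s τ`.
  let k : ℝ × ℝ → ℝ := fun z =>
    z.1 ^ 2 * z.2 * (A (z.1, z.1 * z.2) ^ 2 + B (z.1, z.1 * z.2) ^ 2)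
  have hk : ContDiff ℝ 1 k := by
    have hm : ContDiff ℝ 1 (fun z : ℝ × ℝ => (z.1, z.1 * z.2)) := by fun_prop
    have ha := hA1.comp hm
    have hb := hB1.comp hm
    simp only [Function.comp_def] at ha hb
    fun_prop
  have hks : ∀ s τ, dirD (1, 0) k (s, τ) =
      2 * s * τ * (A (s, s * τ) ^ 2 + B (s, s * τ) ^ 2) + s ^ 2 * τ *
        (2 * A (s, s * τ) * (dirD (1, 0) A (s, s * τ) + τ * dirD (0, 1) A (s, s * τ))
        + 2 * B (s, s * τ) * (dirD (1, 0) B (s, s * τ) + τ * dirD (0, 1) B (s, s * τ))) := by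
    intro s τ
    have h1 := (hk.differentiable (by norm_num) (s, τ)).hasFDerivAt
    have h2 : HasDerivAt (fun s : ℝ => (s, τ)) (1, 0) s :=
      (hasDerivAt_id s).prodMk (hasDerivAt_const s τ)
    have h3 := h1.comp_hasDerivAt s h2
    have h4 := (((hasDerivAt_id' s).pow 2).mul_const τ).mul
      (((hcurve_s A hA1 s τ).pow 2).add ((hcurve_s B hB1 s τ).pow 2))
    refine (h3.unique h4).trans ?_
    simp only [Pi.add_apply, Pi.pow_apply, Nat.cast_ofNat, Nat.reduceSub, pow_one]
    ring
  let e : ℝ → ℝ := intLast 1 k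
  have he1 : ContDiff ℝ 1 e := intLast_contDiff_one hk 1
  have hcτ : ∀ (f : ℝ × ℝ → ℝ) (s : ℝ), Continuous f → Continuous fun τ : ℝ => f (s, s * τ) :=
    fun f s hf => hf.comp (by fun_prop)
  have hderiv : ∀ s, 0 < s → deriv e s ≤ 0 := by
    intro s hs
    have hde : deriv e s = intLast 1 (dirD (1, 0) k) s := by
      rw [← dirD_intLast hk]; rfl
    -- The `s`-derivative of the integrand is an exact `τ`-derivative minus a nonnegative term;
    -- the boundary term at `τ = 1` is `s (F_s + F_t)² = 0`.
    let Φ : ℝ → ℝ := fun τ => s * τ ^ 2 * (A (s, s * τ) ^ 2 + B (s, s * τ) ^ 2)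
      + 2 * s * τ * (A (s, s * τ) * B (s, s * τ))
    have hAc := hcτ A s hA1.continuous
    have hBc := hcτ B s hB1.continuous
    have hΦc : Continuous Φ := by fun_prop
    have hkc : Continuous fun τ : ℝ => dirD (1, 0) k (s, τ) :=
      (dirD_continuous hk _).comp (Continuous.prodMk_right s)
    have hgc : Continuous fun τ : ℝ => dirD (1, 0) k (s, τ) + 2 * s * τ * A (s, s * τ) ^ 2 := by
      fun_prop
    have hΦ : ∀ τ ∈ Set.Ioo (0:ℝ) 1,
        HasDerivAt Φ (dirD (1, 0) k (s, τ) + 2 * s * τ * A (s, s * τ) ^ 2) τ := by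
      intro τ hτ
      have hAτ := hcurve_t A hA1 s τ
      have hBτ := hcurve_t B hB1 s τ
      have h4 := ((((hasDerivAt_id' τ).pow 2).const_mul s).mul
        ((hAτ.pow 2).add (hBτ.pow 2))).add
        (((hasDerivAt_id' τ).const_mul (2 * s)).mul (hAτ.mul hBτ))
      refine HasDerivAt.congr_deriv (f := Φ) h4 ?_
      have hp := hpde s (s * τ) hs (mul_pos hs hτ.1)
      rw [hks, ← hsymm]
      simp only [Pi.add_apply, Pi.mul_apply, Pi.pow_apply, Nat.cast_ofNat, Nat.reduceSub, pow_one]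
      -- The equation carries a factor `s > 0` that has to be cancelled.
      have hp' : s * τ * (dirD (1, 0) A (s, s * τ) - dirD (0, 1) B (s, s * τ))
        + τ * A (s, s * τ) - B (s, s * τ) = 0 := by
        apply (mul_eq_zero.mp (_ : s * _ = 0)).resolve_left hs.ne'
        linear_combination hp
      linear_combination -2 * s * A (s, s * τ) * hp'
    have hftc := intervalIntegral.integral_eq_sub_of_hasDerivAt_of_le (zero_le_one' ℝ)
      hΦc.continuousOn hΦ (hgc.intervalIntegrable 0 1)
    have hΦ1 : Φ 1 - Φ 0 = 0 := by
      simp only [Φ]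
      have := hAB s
      simp only [mul_one]
      linear_combination s * (A (s, s) + B (s, s)) * this
    have hnc : Continuous fun τ : ℝ => 2 * s * τ * A (s, s * τ) ^ 2 := by fun_prop
    rw [intervalIntegral.integral_add (hkc.intervalIntegrable _ _)
      (hnc.intervalIntegrable _ _), hΦ1] at hftc
    have hpos : 0 ≤ ∫ τ in (0:ℝ)..1, 2 * s * τ * A (s, s * τ) ^ 2 := by
      refine intervalIntegral.integral_nonneg zero_le_one fun τ hτ => ?_
      have := hτ.1
      positivity
    rw [hde]
    unfold intLast
    linarith
  have hanti : AntitoneOn e (Set.Ici 0) := by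
    refine antitoneOn_of_deriv_nonpos (convex_Ici 0) he1.continuous.continuousOn
      (he1.differentiable (by norm_num)).differentiableOn ?_
    intro s hs
    rw [interior_Ici] at hs
    exact hderiv s hs
  have he0 : e 0 = 0 := by simp [e, intLast, k]
  -- Together with nonnegativity of the density this forces `F_t = 0` on the segment
  -- `{r} × (0, r)`.
  have her : e r ≤ 0 := he0 ▸ hanti Set.self_mem_Ici hr.le hr.le
  have hAc := hcτ A r hA1.continuous
  have hBc := hcτ B r hB1.continuous
  have hBz : ∀ τ ∈ Set.Ioo (0:ℝ) 1, B (r, r * τ) = 0 := by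
    intro τ hτ
    by_contra hne
    have hpos : 0 < ∫ τ in (0:ℝ)..1, k (r, τ) := by
      refine intervalIntegral.integral_pos zero_lt_one
        (hk.continuous.comp (Continuous.prodMk_right r)).continuousOn ?_
        ⟨τ, ⟨hτ.1.le, hτ.2.le⟩, ?_⟩
      · intro x hx
        have := hx.1
        simp only [k]
        positivity
      · have := hτ.1
        simp only [k]
        positivity
    exact absurd her (not_le.mpr hpos)
  have hFc : Continuous fun τ : ℝ => F (r, r * τ) := hcτ F r hF.continuous
  have hftc := intervalIntegral.integral_eq_sub_of_hasDerivAt_of_le (f' := fun _ => (0:ℝ))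
    (zero_le_one' ℝ) hFc.continuousOn
    (fun τ hτ => by
      have h := hcurve_t F hF1 r τ
      rw [← hB, hBz τ hτ, mul_zero] at h
      exact h) (intervalIntegrable_const)
  simp [hdiag] at hftc
  exact hftc

/-! ### The ultrahyperbolic operator in polar coordinates -/

/-- The trace of a bilinear form with respect to the neutral metric may be computed in any
pseudo-orthonormal basis. -/
theorem neutral_trace (B : (Fin 4 → ℝ) →L[ℝ] (Fin 4 → ℝ) →L[ℝ] ℝ)
    (hB : B (Pi.single 0 1) (Pi.single 0 1) + B (Pi.single 1 1) (Pi.single 1 1)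
      - B (Pi.single 2 1) (Pi.single 2 1) - B (Pi.single 3 1) (Pi.single 3 1) = 0)
    (e : Fin 4 → (Fin 4 → ℝ))
    (horth : ∀ i j, i ≠ j → form22 (e i) (e j) = 0)
    (he1 : q22 (e 0) = 1) (he2 : q22 (e 1) = 1)
    (he3 : q22 (e 2) = -1) (he4 : q22 (e 3) = -1) :
    B (e 0) (e 0) + B (e 1) (e 1) - B (e 2) (e 2) - B (e 3) (e 3) = 0 := by
  let ε : Fin 4 → ℝ := ![1, 1, -1, -1]
  -- With `M i j = e i j` and `η = diag ε`, orthonormality says `(η M η) Mᵀ = 1`; a one-sided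
  -- inverse is two-sided, which gives `Mᵀ η M = η`.
  let M : Matrix (Fin 4) (Fin 4) ℝ := Matrix.of fun i j => ε i * e i j * ε j
  let N : Matrix (Fin 4) (Fin 4) ℝ := Matrix.of fun i j => e j i
  have hMN : M * N = 1 := by
    ext i j
    rw [Matrix.mul_apply, Fin.sum_univ_four]
    have h : form22 (e i) (e j) = if i = j then ε i else 0 := by
      split_ifs with hij
      · subst hij
        fin_cases i
        · exact he1
        · exact he2
        · exact he3
        · exact he4
      · exact horth i j hij
    have hε : ε i * ε i = 1 := by fin_cases i <;> simp [ε]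
    have h1 : M i 0 * N 0 j + M i 1 * N 1 j + M i 2 * N 2 j + M i 3 * N 3 j
        = ε i * form22 (e i) (e j) := by
      simp [M, N, ε, form22]
      ring
    rw [h1, h, Matrix.one_apply]
    split_ifs <;> simp [hε]
  have hNM : N * M = 1 := mul_eq_one_comm.mp hMN
  have hent : ∀ j k, e 0 j * e 0 k + e 1 j * e 1 k - e 2 j * e 2 k - e 3 j * e 3 k
      = if j = k then ε k else 0 := by
    intro j k
    have h := congrFun (congrFun hNM j) k
    rw [Matrix.mul_apply, Fin.sum_univ_four, Matrix.one_apply] at h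
    have hε : ε k * ε k = 1 := by fin_cases k <;> simp [ε]
    have h1 : N j 0 * M 0 k + N j 1 * M 1 k + N j 2 * M 2 k + N j 3 * M 3 k =
        (e 0 j * e 0 k + e 1 j * e 1 k - e 2 j * e 2 k - e 3 j * e 3 k) * ε k := by
      simp [M, N, ε]
      ring
    rw [h1] at h
    split_ifs at h ⊢
    · linear_combination ε k * h - (e 0 j * e 0 k + e 1 j * e 1 k - e 2 j * e 2 k
        - e 3 j * e 3 k) * hε
    · linear_combination ε k * h - (e 0 j * e 0 k + e 1 j * e 1 k - e 2 j * e 2 k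
        - e 3 j * e 3 k) * hε
  have hexp : ∀ x : Fin 4 → ℝ, B x x
      = ∑ j, ∑ k, x j * x k * B (Pi.single j 1) (Pi.single k 1) := by
    intro x
    have hx : x = ∑ j, x j • (Pi.single j 1 : Fin 4 → ℝ) := pi_eq_sum_univ' x
    conv_lhs => rw [hx]
    simp only [map_sum, map_smul, _root_.sum_apply, _root_.smul_apply,
      smul_eq_mul, Finset.mul_sum]
    rw [Finset.sum_comm]
    refine Finset.sum_congr rfl fun j _ => Finset.sum_congr rfl fun k _ => ?_
    ring
  have hsum : B (e 0) (e 0) + B (e 1) (e 1) - B (e 2) (e 2) - B (e 3) (e 3)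
      = ∑ j, ∑ k, (if j = k then ε k else 0) * B (Pi.single j 1) (Pi.single k 1) := by
    simp only [hexp, ← hent, ← Finset.sum_add_distrib, ← Finset.sum_sub_distrib]
    refine Finset.sum_congr rfl fun j _ => Finset.sum_congr rfl fun k _ => ?_
    ring
  rw [hsum]
  simp only [ite_mul, zero_mul, Finset.sum_ite_eq, Finset.mem_univ, if_true]
  rw [Fin.sum_univ_four]
  simp [ε]
  linear_combination hB

/-- Parametrization of pairs of points on two circles with centre `p`: radii `s = z.1.1.1` and
`t = z.1.1.2`, angles `β = z.1.2` in the plane of `e 2, e 3` and `α = z.2` in that of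
`e 0, e 1`. -/
def circlePair (p : Fin 4 → ℝ) (e : Fin 4 → (Fin 4 → ℝ)) (z : ((ℝ × ℝ) × ℝ) × ℝ) : Fin 4 → ℝ :=
  p + (z.1.1.1 * Real.cos z.2) • e 0 + (z.1.1.1 * Real.sin z.2) • e 1
    + (z.1.1.2 * Real.cos z.1.2) • e 2 + (z.1.1.2 * Real.sin z.1.2) • e 3

theorem circlePair_contDiff (p : Fin 4 → ℝ) (e : Fin 4 → (Fin 4 → ℝ)) :
    ContDiff ℝ 2 (circlePair p e) := by
  unfold circlePair
  fun_prop

theorem hasDerivAt_circle (c x : ℝ) :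
    HasDerivAt (fun τ : ℝ => c * Real.cos (x + τ)) (-(c * Real.sin x)) 0 ∧
    HasDerivAt (fun τ : ℝ => c * Real.sin (x + τ)) (c * Real.cos x) 0 := by
  have h := (hasDerivAt_id' (0:ℝ)).const_add x
  constructor
  · simpa using h.cos.const_mul c
  · simpa using h.sin.const_mul c

theorem hasDerivAt_radius (x c : ℝ) : HasDerivAt (fun τ : ℝ => (x + τ) * c) c 0 := by
  simpa using ((hasDerivAt_id' (0:ℝ)).const_add x).mul_const c

/-- Polar form of the ultrahyperbolic equation before averaging over the two angles. -/
theorem circlePair_pde (u : (Fin 4 → ℝ) → ℝ) (hu : IsUltrahyperbolic u)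
    (e : Fin 4 → (Fin 4 → ℝ))
    (horth : ∀ i j, i ≠ j → form22 (e i) (e j) = 0)
    (he1 : q22 (e 0) = 1) (he2 : q22 (e 1) = 1)
    (he3 : q22 (e 2) = -1) (he4 : q22 (e 3) = -1)
    (p : Fin 4 → ℝ) (s t β α : ℝ) :
    s ^ 2 * t ^ 2 * dirD (((1, 0), 0), 0) (dirD (((1, 0), 0), 0) (u ∘ circlePair p e))
        (((s, t), β), α)
      - s ^ 2 * t ^ 2 * dirD (((0, 1), 0), 0) (dirD (((0, 1), 0), 0) (u ∘ circlePair p e))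
        (((s, t), β), α)
      + s * t ^ 2 * dirD (((1, 0), 0), 0) (u ∘ circlePair p e) (((s, t), β), α)
      - s ^ 2 * t * dirD (((0, 1), 0), 0) (u ∘ circlePair p e) (((s, t), β), α)
      + t ^ 2 * dirD (0, 1) (dirD (0, 1) (u ∘ circlePair p e)) (((s, t), β), α)
      - s ^ 2 * dirD ((0, 1), 0) (dirD ((0, 1), 0) (u ∘ circlePair p e)) (((s, t), β), α)
      = 0 := by
  obtain ⟨hu2, hpde⟩ := hu
  have hφ := circlePair_contDiff p e
  have hs : ∀ z : ((ℝ × ℝ) × ℝ) × ℝ, HasDerivAt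
      (fun τ : ℝ => circlePair p e (z + τ • ((((1, 0), 0), 0) : ((ℝ × ℝ) × ℝ) × ℝ)))
      (Real.cos z.2 • e 0 + Real.sin z.2 • e 1) 0 := by
    rintro ⟨⟨⟨s, t⟩, β⟩, α⟩
    have h := ((((((hasDerivAt_radius s (Real.cos α)).smul_const (e 0)).const_add p).add
      ((hasDerivAt_radius s (Real.sin α)).smul_const (e 1))).add_const
      ((t * Real.cos β) • e 2)).add_const ((t * Real.sin β) • e 3))
    simpa [circlePair] using h
  have ht : ∀ z : ((ℝ × ℝ) × ℝ) × ℝ, HasDerivAt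
      (fun τ : ℝ => circlePair p e (z + τ • ((((0, 1), 0), 0) : ((ℝ × ℝ) × ℝ) × ℝ)))
      (Real.cos z.1.2 • e 2 + Real.sin z.1.2 • e 3) 0 := by
    rintro ⟨⟨⟨s, t⟩, β⟩, α⟩
    have h := (((hasDerivAt_radius t (Real.cos β)).smul_const (e 2)).const_add
      (p + (s * Real.cos α) • e 0 + (s * Real.sin α) • e 1)).fun_add
      ((hasDerivAt_radius t (Real.sin β)).smul_const (e 3))
    simpa [circlePair] using h
  have hα : ∀ z : ((ℝ × ℝ) × ℝ) × ℝ, HasDerivAt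
      (fun τ : ℝ => circlePair p e (z + τ • ((0, 1) : ((ℝ × ℝ) × ℝ) × ℝ)))
      (-(z.1.1.1 * Real.sin z.2) • e 0 + (z.1.1.1 * Real.cos z.2) • e 1) 0 := by
    rintro ⟨⟨⟨s, t⟩, β⟩, α⟩
    have h := ((((((hasDerivAt_circle s α).1.smul_const (e 0)).const_add p).add
      ((hasDerivAt_circle s α).2.smul_const (e 1))).add_const
      ((t * Real.cos β) • e 2)).add_const ((t * Real.sin β) • e 3))
    simpa [circlePair] using h
  have hβ : ∀ z : ((ℝ × ℝ) × ℝ) × ℝ, HasDerivAt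
      (fun τ : ℝ => circlePair p e (z + τ • (((0, 1), 0) : ((ℝ × ℝ) × ℝ) × ℝ)))
      (-(z.1.1.2 * Real.sin z.1.2) • e 2 + (z.1.1.2 * Real.cos z.1.2) • e 3) 0 := by
    rintro ⟨⟨⟨s, t⟩, β⟩, α⟩
    have h := (((hasDerivAt_circle t β).1.smul_const (e 2)).const_add
      (p + (s * Real.cos α) • e 0 + (s * Real.sin α) • e 1)).fun_add
      ((hasDerivAt_circle t β).2.smul_const (e 3))
    simpa [circlePair] using h
  have hss : ∀ z : ((ℝ × ℝ) × ℝ) × ℝ, HasDerivAt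
      (fun τ : ℝ => (fun z : ((ℝ × ℝ) × ℝ) × ℝ => Real.cos z.2 • e 0 + Real.sin z.2 • e 1)
        (z + τ • ((((1, 0), 0), 0) : ((ℝ × ℝ) × ℝ) × ℝ))) ((fun _ => 0) z) 0 := by
    rintro ⟨⟨⟨s, t⟩, β⟩, α⟩
    simpa using hasDerivAt_const (0:ℝ) (Real.cos α • e 0 + Real.sin α • e 1)
  have htt : ∀ z : ((ℝ × ℝ) × ℝ) × ℝ, HasDerivAt
      (fun τ : ℝ => (fun z : ((ℝ × ℝ) × ℝ) × ℝ => Real.cos z.1.2 • e 2 + Real.sin z.1.2 • e 3)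
        (z + τ • ((((0, 1), 0), 0) : ((ℝ × ℝ) × ℝ) × ℝ))) ((fun _ => 0) z) 0 := by
    rintro ⟨⟨⟨s, t⟩, β⟩, α⟩
    simpa using hasDerivAt_const (0:ℝ) (Real.cos β • e 2 + Real.sin β • e 3)
  have hαα : ∀ z : ((ℝ × ℝ) × ℝ) × ℝ, HasDerivAt
      (fun τ : ℝ => (fun z : ((ℝ × ℝ) × ℝ) × ℝ =>
        -(z.1.1.1 * Real.sin z.2) • e 0 + (z.1.1.1 * Real.cos z.2) • e 1)
        (z + τ • ((0, 1) : ((ℝ × ℝ) × ℝ) × ℝ)))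
      ((fun z => (-z.1.1.1) • (Real.cos z.2 • e 0 + Real.sin z.2 • e 1)) z) 0 := by
    rintro ⟨⟨⟨s, t⟩, β⟩, α⟩
    have h := ((hasDerivAt_circle s α).2.neg.smul_const (e 0)).fun_add
      ((hasDerivAt_circle s α).1.smul_const (e 1))
    refine HasDerivAt.congr_deriv (f' := _) ?_
      (show -(s * Real.cos α) • e 0 + -(s * Real.sin α) • e 1 = _ from by
        ext i
        simp
        ring)
    simpa using h
  have hββ : ∀ z : ((ℝ × ℝ) × ℝ) × ℝ, HasDerivAt
      (fun τ : ℝ => (fun z : ((ℝ × ℝ) × ℝ) × ℝ =>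
        -(z.1.1.2 * Real.sin z.1.2) • e 2 + (z.1.1.2 * Real.cos z.1.2) • e 3)
        (z + τ • (((0, 1), 0) : ((ℝ × ℝ) × ℝ) × ℝ)))
      ((fun z => (-z.1.1.2) • (Real.cos z.1.2 • e 2 + Real.sin z.1.2 • e 3)) z) 0 := by
    rintro ⟨⟨⟨s, t⟩, β⟩, α⟩
    have h := ((hasDerivAt_circle t β).2.neg.smul_const (e 2)).fun_add
      ((hasDerivAt_circle t β).1.smul_const (e 3))
    refine HasDerivAt.congr_deriv (f' := _) ?_
      (show -(t * Real.cos β) • e 2 + -(t * Real.sin β) • e 3 = _ from by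
        ext i
        simp
        ring)
    simpa using h
  rw [dirD_dirD_comp hu2 hφ hs hss, dirD_dirD_comp hu2 hφ ht htt, dirD_dirD_comp hu2 hφ hα hαα,
    dirD_dirD_comp hu2 hφ hβ hββ, dirD_comp hu2 hφ hs, dirD_comp hu2 hφ ht]
  generalize circlePair p e (((s, t), β), α) = x
  have hsecond : ∀ i, pderiv4 i (pderiv4 i u) x
      = fderiv ℝ (fderiv ℝ u) x (Pi.single i 1) (Pi.single i 1) := by
    intro i
    have hd : DifferentiableAt ℝ (fderiv ℝ u) x :=
      ((hu2.fderiv_right (m := 1) (by norm_num)).differentiable (by norm_num)) x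
    have h := hd.hasFDerivAt.clm_apply (hasFDerivAt_const (Pi.single i (1:ℝ)) x)
    unfold pderiv4
    rw [h.fderiv]
    simp
  have hx := hpde x
  simp only [hsecond] at hx
  have htr := neutral_trace (fderiv ℝ (fderiv ℝ u) x) hx e horth he1 he2 he3 he4
  generalize fderiv ℝ (fderiv ℝ u) x = B at htr
  generalize fderiv ℝ u x = L
  simp only [map_add, map_smul, map_zero, _root_.add_apply,
    _root_.smul_apply, smul_eq_mul]
  have ha := Real.sin_sq_add_cos_sq α
  have hb := Real.sin_sq_add_cos_sq β
  linear_combination s ^ 2 * t ^ 2 * htr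
    + s ^ 2 * t ^ 2 * (B (e 0) (e 0) + B (e 1) (e 1)) * ha
    - s ^ 2 * t ^ 2 * (B (e 2) (e 2) + B (e 3) (e 3)) * hb

/-! ### Averaging over both circles -/

/-- The second derivative of a function in a periodic variable has zero integral over a
period. -/
theorem intLast_dirD_dirD_periodic {E : Type*} [NormedAddCommGroup E] [NormedSpace ℝ E]
    {f : E × ℝ → ℝ} (hf : ContDiff ℝ 2 f) {b : ℝ}
    (hper : ∀ x t, f (x, t + b) = f (x, t)) (x : E) :
    intLast b (dirD (0, 1) (dirD (0, 1) f)) x = 0 := by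
  refine intLast_dirD_periodic (dirD_contDiff hf _) (fun y t => ?_) x
  have h := dirD_periodic (f := f) (c := ((0, b) : E × ℝ)) (by
    rintro ⟨y, t⟩
    simpa using hper y t) (0, 1) (y, t)
  simpa using h

theorem dirD_dirD_intLast {E : Type*} [NormedAddCommGroup E] [NormedSpace ℝ E]
    [FiniteDimensional ℝ E] {f : E × ℝ → ℝ} (hf : ContDiff ℝ 2 f) (b : ℝ) (w : E) :
    dirD w (dirD w (intLast b f)) = intLast b (dirD (w, 0) (dirD (w, 0) f)) := by
  rw [dirD_intLast (hf.of_le (by norm_num)), dirD_intLast (dirD_contDiff hf _)]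

theorem intLast_intLast_lin {f g : ((ℝ × ℝ) × ℝ) × ℝ → ℝ} (hf : Continuous f)
    (hg : Continuous g) (b c d : ℝ) (x : ℝ × ℝ) :
    intLast b (intLast b (fun z => c * f z + d * g z)) x
      = c * intLast b (intLast b f) x + d * intLast b (intLast b g) x := by
  have h : intLast b (fun z => c * f z + d * g z)
      = fun y => c * intLast b f y + d * intLast b g y := by
    ext y
    have h1 : Continuous fun t => f (y, t) := hf.comp (Continuous.prodMk_right y)
    have h2 : Continuous fun t => g (y, t) := hg.comp (Continuous.prodMk_right y)
    simp only [intLast]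
    rw [intervalIntegral.integral_add ((h1.const_mul c).intervalIntegrable _ _)
      ((h2.const_mul d).intervalIntegrable _ _), intervalIntegral.integral_const_mul,
      intervalIntegral.integral_const_mul]
  rw [h]
  have h1 : Continuous fun t => intLast b f (x, t) :=
    (intLast_continuous hf b).comp (Continuous.prodMk_right x)
  have h2 : Continuous fun t => intLast b g (x, t) :=
    (intLast_continuous hg b).comp (Continuous.prodMk_right x)
  simp only [intLast] at h1 h2 ⊢
  rw [intervalIntegral.integral_add ((h1.const_mul c).intervalIntegrable _ _)
    ((h2.const_mul d).intervalIntegrable _ _), intervalIntegral.integral_const_mul,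
    intervalIntegral.integral_const_mul]

/-- The double average over both circles satisfies the Euler–Poisson–Darboux equation, here
multiplied by `s² t²`. -/
theorem doubleAverage_pde (u : (Fin 4 → ℝ) → ℝ) (hu : IsUltrahyperbolic u)
    (e : Fin 4 → (Fin 4 → ℝ))
    (horth : ∀ i j, i ≠ j → form22 (e i) (e j) = 0)
    (he1 : q22 (e 0) = 1) (he2 : q22 (e 1) = 1)
    (he3 : q22 (e 2) = -1) (he4 : q22 (e 3) = -1)
    (p : Fin 4 → ℝ) (M : ℝ × ℝ → ℝ)
    (hM : M = intLast (2 * π) (intLast (2 * π) (u ∘ circlePair p e))) (s t : ℝ) :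
    s ^ 2 * t ^ 2 * dirD (1, 0) (dirD (1, 0) M) (s, t)
      - s ^ 2 * t ^ 2 * dirD (0, 1) (dirD (0, 1) M) (s, t)
      + s * t ^ 2 * dirD (1, 0) M (s, t) - s ^ 2 * t * dirD (0, 1) M (s, t) = 0 := by
  set g := u ∘ circlePair p e with hg
  have hg2 : ContDiff ℝ 2 g := hu.1.comp (circlePair_contDiff p e)
  have hg1 : ContDiff ℝ 1 g := hg2.of_le (by norm_num)
  have hG2 := intLast_contDiff_two hg2 (2 * π)
  have hG1 := intLast_contDiff_one hg1 (2 * π)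
  have h1 : ∀ w, dirD w M = intLast (2 * π) (intLast (2 * π) (dirD ((w, 0), 0) g)) := by
    intro w
    rw [hM, dirD_intLast hG1, dirD_intLast hg1]
  have h2 : ∀ w, dirD w (dirD w M) = intLast (2 * π) (intLast (2 * π)
      (dirD ((w, 0), 0) (dirD ((w, 0), 0) g))) := by
    intro w
    rw [hM, dirD_dirD_intLast hG2, dirD_dirD_intLast hg2]
  have hperα : ∀ x a, g (x, a + 2 * π) = g (x, a) := by
    intro x a
    simp [hg, circlePair]
  have hperβ : ∀ x b, intLast (2 * π) g (x, b + 2 * π) = intLast (2 * π) g (x, b) := by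
    intro x b
    simp [intLast, hg, circlePair]
  have hα : intLast (2 * π) (intLast (2 * π) (dirD (0, 1) (dirD (0, 1) g))) (s, t) = 0 := by
    rw [funext (intLast_dirD_dirD_periodic hg2 hperα)]
    simp [intLast]
  have hβ : intLast (2 * π) (intLast (2 * π) (dirD ((0, 1), 0) (dirD ((0, 1), 0) g))) (s, t)
      = 0 := by
    rw [← dirD_dirD_intLast hg2]
    exact intLast_dirD_dirD_periodic hG2 hperβ (s, t)
  have hc2 : ∀ w, Continuous (dirD w (dirD w g)) := fun w =>
    dirD_continuous (dirD_contDiff hg2 w) w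
  have hc1 : ∀ w, Continuous (dirD w g) := fun w => dirD_continuous hg1 w
  rw [h2, h2, h1, h1]
  -- The pointwise identity integrated over both angles; the integrand vanishes on the whole
  -- fibre over `(s, t)`.
  have key : intLast (2 * π) (intLast (2 * π) (fun z =>
      1 * (s ^ 2 * t ^ 2 * dirD (((1, 0), 0), 0) (dirD (((1, 0), 0), 0) g) z
        + -(s ^ 2 * t ^ 2) * dirD (((0, 1), 0), 0) (dirD (((0, 1), 0), 0) g) z)
      + 1 * (1 * (s * t ^ 2 * dirD (((1, 0), 0), 0) g z
        + -(s ^ 2 * t) * dirD (((0, 1), 0), 0) g z)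
      + 1 * (t ^ 2 * dirD (0, 1) (dirD (0, 1) g) z
        + -(s ^ 2) * dirD ((0, 1), 0) (dirD ((0, 1), 0) g) z)))) (s, t) = 0 := by
    have h0 : ∀ β α, _ := circlePair_pde u hu e horth he1 he2 he3 he4 p s t
    rw [← hg] at h0
    simp only [intLast]
    have : ∀ β α, _ = (0:ℝ) := fun β α =>
      (show 1 * (s ^ 2 * t ^ 2 * dirD (((1, 0), 0), 0) (dirD (((1, 0), 0), 0) g) (((s, t), β), α)
        + -(s ^ 2 * t ^ 2) * dirD (((0, 1), 0), 0) (dirD (((0, 1), 0), 0) g) (((s, t), β), α))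
      + 1 * (1 * (s * t ^ 2 * dirD (((1, 0), 0), 0) g (((s, t), β), α)
        + -(s ^ 2 * t) * dirD (((0, 1), 0), 0) g (((s, t), β), α))
      + 1 * (t ^ 2 * dirD (0, 1) (dirD (0, 1) g) (((s, t), β), α)
        + -(s ^ 2) * dirD ((0, 1), 0) (dirD ((0, 1), 0) g) (((s, t), β), α))) = 0 from by
        linear_combination h0 β α)
    simp only [this]
    simp
  have k1 := hc2 (((1, 0), 0), 0)
  have k2 := hc2 (((0, 1), 0), 0)
  have k3 := hc1 (((1, 0), 0), 0)
  have k4 := hc1 (((0, 1), 0), 0)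
  have k5 := hc2 (0, 1)
  have k6 := hc2 ((0, 1), 0)
  rw [intLast_intLast_lin (by fun_prop) (by fun_prop), intLast_intLast_lin k1 k2,
    intLast_intLast_lin (by fun_prop) (by fun_prop), intLast_intLast_lin k3 k4,
    intLast_intLast_lin k5 k6, hα, hβ] at key
  linear_combination key

theorem mean_value_conjugate_circles (u : (Fin 4 → ℝ) → ℝ) (hu : IsUltrahyperbolic u)
    (e : Fin 4 → (Fin 4 → ℝ))
    (horth : ∀ i j, i ≠ j → form22 (e i) (e j) = 0)
    (he1 : q22 (e 0) = 1) (he2 : q22 (e 1) = 1)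
    (he3 : q22 (e 2) = -1) (he4 : q22 (e 3) = -1)
    (p : Fin 4 → ℝ) (r : ℝ) (hr : 0 < r) :
    (∫ θ in (0:ℝ)..(2 * π), u (p + (r * Real.cos θ) • e 0 + (r * Real.sin θ) • e 1)) =
    ∫ θ in (0:ℝ)..(2 * π), u (p + (r * Real.cos θ) • e 2 + (r * Real.sin θ) • e 3) := by
  set M : ℝ × ℝ → ℝ := intLast (2 * π) (intLast (2 * π) (u ∘ circlePair p e)) with hM
  have hM2 : ContDiff ℝ 2 M := intLast_contDiff_two
    (intLast_contDiff_two (hu.1.comp (circlePair_contDiff p e)) _) _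
  have hpde := doubleAverage_pde u hu e horth he1 he2 he3 he4 p M hM
  have hM1 : ContDiff ℝ 1 M := hM2.of_le (by norm_num)
  -- `F` is antisymmetric under exchange of the radii, so it vanishes on the diagonal.
  let F : ℝ × ℝ → ℝ := fun z => M z - M z.swap
  have hswap : ContDiff ℝ 2 (Prod.swap : ℝ × ℝ → ℝ × ℝ) := contDiff_snd.prodMk contDiff_fst
  have hF2 : ContDiff ℝ 2 F := hM2.sub (hM2.comp hswap)
  have hD : ∀ (f h : ℝ × ℝ → ℝ), ContDiff ℝ 1 f → ContDiff ℝ 1 h → ∀ w,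
      dirD w (fun z => f z - h z.swap) = fun z => dirD w f z - dirD w.swap h z.swap := by
    intro f h hf hh w
    ext z
    have h1 := (hf.differentiable (by norm_num) z).hasFDerivAt
    have h2 := (hh.differentiable (by norm_num) z.swap).hasFDerivAt
    have h3 := h1.sub (h2.comp z
      ((ContinuousLinearMap.snd ℝ ℝ ℝ).prod (ContinuousLinearMap.fst ℝ ℝ ℝ)).hasFDerivAt)
    exact congrArg (fun L => L w) h3.fderiv
  have hFs : ∀ w, dirD w F = fun z => dirD w M z - dirD w.swap M z.swap := hD M M hM1 hM1
  have hFss : ∀ w, dirD w (dirD w F)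
      = fun z => dirD w (dirD w M) z - dirD w.swap (dirD w.swap M) z.swap := by
    intro w
    rw [hFs]
    exact hD _ _ (dirD_contDiff hM2 _) (dirD_contDiff hM2 _) w
  have hF0 : F (r, 0) = 0 := by
    refine epd_goursat F hF2 (fun s => by simp [F]) ?_ r hr
    intro s t hs ht
    rw [hFss, hFss, hFs, hFs]
    simp only [Prod.swap_prod_mk]
    have h1 := hpde s t
    have h2 := hpde t s
    apply (mul_eq_zero.mp (_ : (s * t) * _ = 0)).resolve_left (mul_pos hs ht).ne'
    linear_combination h1 + h2
  have hF0' : M (r, 0) = M (0, r) := sub_eq_zero.mp hF0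
  have hL : M (r, 0) = 2 * π * ∫ θ in (0:ℝ)..(2 * π),
      u (p + (r * Real.cos θ) • e 0 + (r * Real.sin θ) • e 1) := by
    simp [hM, intLast, circlePair]
  have hR : M (0, r) = 2 * π * ∫ θ in (0:ℝ)..(2 * π),
      u (p + (r * Real.cos θ) • e 2 + (r * Real.sin θ) • e 3) := by
    simp [hM, intLast, circlePair]
  rw [hL, hR] at hF0'
  exact mul_left_cancel₀ (by positivity) hF0'
end
end

section
/- Let P = {s ∈ ℝ⁶ : s₀ + s₅ = 0}, so that the (·,·)-orthogonal complement of P is P^⊥ = span{(1,0,0,0,0,−1)} ⊆ P. Let V be a 3-dimensional linear subspace of ℝ⁶ on which the form (·,·) is nondegenerate and indefinite, and let V^⊥ be its orthogonal complement. Suppose that (1,0,0,0,0,−1) ∉ V and (1,0,0,0,0,−1) ∉ V^⊥. Then V ∩ P and V^⊥ ∩ P are both 2-dimensional, and: the restriction of (·,·) to V ∩ P is definite (positive or negative definite) if and only if its restriction to V^⊥ ∩ P is definite; and the restriction of (·,·) to V ∩ P is degenerate if and only if its restriction to V^⊥ ∩ P is degenerate. -/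
/-!
Let `n = (1,0,0,0,0,-1)`. Then `s₀ + s₅ = (s, n)`, so `P = n^⊥`, and `n` is a null vector. As `V` is
nondegenerate, `ℝ⁶ = V ⊕ V^⊥`; write `n = a + b` with `a ∈ V`, `b ∈ V^⊥`. Both components are
nonzero, `V ∩ P` is the orthogonal complement of `a` in `V`, `V^⊥ ∩ P` that of `b` in `V^⊥`, and
`(a,a) + (b,b) = (n,n) = 0`. This is symmetric in `(V, a)` and `(V^⊥, b)`, so each equivalence needs
only one direction (`SplitPair`, `SplitPair.symm`).

* `V ∩ P` is degenerate iff `(a,a) = 0`, iff `(b,b) = 0`.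
* Suppose that `V ∩ P` is positive definite. Since `V` is indefinite, `(a,a) < 0`, hence
  `(b,b) > 0`. A nonzero `w ∈ V^⊥ ∩ P` with `(w,w) ≥ 0` would make `(V ∩ P) ⊕ ℝb ⊕ ℝw` a
  four-dimensional subspace on which the form is nonnegative; this is impossible in signature
  `(3,3)` (`finrank_le_three`). So `V^⊥ ∩ P` is negative definite. The negative case is the same
  argument with the form replaced by its opposite, which a sign `σ = ±1` takes care of.

The indefiniteness of `V^⊥` needed for the symmetry comes from the same dimension bound.
-/

noncomputable section

/-- The neutral bilinear form of signature (3,3) on ℝ⁶. -/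
def form33 (s t : Fin 6 → ℝ) : ℝ :=
  s 0 * t 0 + s 1 * t 1 + s 2 * t 2 - s 3 * t 3 - s 4 * t 4 - s 5 * t 5

/-- The (·,·)-orthogonal complement of a subspace of ℝ⁶. -/
def perp33 (V : Submodule ℝ (Fin 6 → ℝ)) : Submodule ℝ (Fin 6 → ℝ) where
  carrier := {s | ∀ v ∈ V, form33 s v = 0}
  zero_mem' := by intro v hv; simp [form33]
  add_mem' := by
    intro a b ha hb v hv
    have h1 := ha v hv
    have h2 := hb v hv
    simp only [form33, Pi.add_apply] at *
    linarith [h1, h2, mul_comm (a 0) (v 0)]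
  smul_mem' := by
    intro c a ha v hv
    have h := ha v hv
    simp only [form33, Pi.smul_apply, smul_eq_mul] at *
    linear_combination c * h

/-- The hyperplane `P = {s : s₀ + s₅ = 0}` of ℝ⁶, consisting of the DPC of hyperplanes. -/
def P33 : Submodule ℝ (Fin 6 → ℝ) :=
  LinearMap.ker ((LinearMap.proj 0 : ((Fin 6 → ℝ)) →ₗ[ℝ] ℝ) + LinearMap.proj 5)

/-- The restriction of the (3,3)-form to `W` is (positive or negative) definite. -/
def DefiniteOn (W : Submodule ℝ (Fin 6 → ℝ)) : Prop :=
  (∀ w ∈ W, w ≠ 0 → 0 < form33 w w) ∨ (∀ w ∈ W, w ≠ 0 → form33 w w < 0)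

/-- The restriction of the (3,3)-form to `W` is degenerate. -/
def DegenerateOn (W : Submodule ℝ (Fin 6 → ℝ)) : Prop :=
  ∃ w ∈ W, w ≠ 0 ∧ ∀ w' ∈ W, form33 w w' = 0

/-- The restriction of the (3,3)-form to `W` is nondegenerate. -/
def NondegenerateOn (W : Submodule ℝ (Fin 6 → ℝ)) : Prop :=
  ∀ w ∈ W, (∀ w' ∈ W, form33 w w' = 0) → w = 0

/-- The restriction of the (3,3)-form to `W` is nondegenerate and indefinite. -/
def IndefiniteOn (W : Submodule ℝ (Fin 6 → ℝ)) : Prop :=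
  NondegenerateOn W ∧ (∃ w ∈ W, 0 < form33 w w) ∧ (∃ w ∈ W, form33 w w < 0)

/-! ### Bilinearity and nondegeneracy of the form -/

lemma form33_comm (s t : Fin 6 → ℝ) : form33 s t = form33 t s := by
  simp only [form33]; ring

lemma form33_add_left (s s' t : Fin 6 → ℝ) : form33 (s + s') t = form33 s t + form33 s' t := by
  simp only [form33, Pi.add_apply]; ring

lemma form33_smul_left (c : ℝ) (s t : Fin 6 → ℝ) : form33 (c • s) t = c * form33 s t := by
  simp only [form33, Pi.smul_apply, smul_eq_mul]; ring

lemma form33_add_right (s t t' : Fin 6 → ℝ) : form33 s (t + t') = form33 s t + form33 s t' := by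
  simp only [form33, Pi.add_apply]; ring

lemma form33_smul_right (c : ℝ) (s t : Fin 6 → ℝ) : form33 s (c • t) = c * form33 s t := by
  simp only [form33, Pi.smul_apply, smul_eq_mul]; ring

/-- The form `form33` as a Mathlib bilinear form. -/
def formB : LinearMap.BilinForm ℝ (Fin 6 → ℝ) :=
  LinearMap.mk₂ ℝ form33 form33_add_left form33_smul_left form33_add_right form33_smul_right

lemma formB_apply (s t : Fin 6 → ℝ) : formB s t = form33 s t := rfl

lemma perp33_eq_orthogonal (V : Submodule ℝ (Fin 6 → ℝ)) : perp33 V = formB.orthogonal V := by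
  ext s
  simp only [LinearMap.BilinForm.mem_orthogonal_iff, formB_apply]
  exact forall₂_congr fun v _ => by rw [form33_comm]

/-- The form is nondegenerate on ℝ⁶. -/
lemma eq_zero_of_form33 (s : Fin 6 → ℝ) (h : ∀ t, form33 s t = 0) : s = 0 := by
  ext i
  have := h (Pi.single i 1)
  fin_cases i <;> simpa [form33, Pi.single_apply] using this

/-! ### The hyperplane `P` and its normal vector -/

/-- The null vector `(1,0,0,0,0,-1)` spanning the orthogonal complement of `P33`. -/
def nvec : Fin 6 → ℝ := ![1, 0, 0, 0, 0, -1]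

lemma form33_nvec (s : Fin 6 → ℝ) : form33 nvec s = s 0 + s 5 := by
  simp [form33, nvec]

lemma mem_P33 (s : Fin 6 → ℝ) : s ∈ P33 ↔ form33 nvec s = 0 := by
  rw [form33_nvec]; simp [P33]

lemma nvec_mem_P33 : nvec ∈ P33 := by
  rw [mem_P33, form33_nvec]; simp [nvec]

lemma perp33_P33 : perp33 P33 = Submodule.span ℝ {nvec} := by
  apply le_antisymm
  · intro s hs
    have h (t : Fin 6 → ℝ) (ht : t 0 + t 5 = 0) : form33 s t = 0 :=
      hs t (by rwa [mem_P33, form33_nvec])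
    have e1 := h ![0, 1, 0, 0, 0, 0] (by simp)
    have e2 := h ![0, 0, 1, 0, 0, 0] (by simp)
    have e3 := h ![0, 0, 0, 1, 0, 0] (by simp)
    have e4 := h ![0, 0, 0, 0, 1, 0] (by simp)
    have e5 := h ![1, 0, 0, 0, 0, -1] (by simp)
    simp [form33] at e1 e2 e3 e4 e5
    refine Submodule.mem_span_singleton.2 ⟨s 0, ?_⟩
    ext i
    fin_cases i <;> simp [nvec, e1, e2, e3, e4]
    linarith
  · rw [Submodule.span_singleton_le_iff_mem]
    exact fun v hv => (mem_P33 v).1 hv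

/-- The condition `nvec ∉ perp33 V` says that `V` is not contained in the hyperplane `P33`. -/
lemma finrank_inf_P33 (V : Submodule ℝ (Fin 6 → ℝ)) (hV : Module.finrank ℝ V = 3)
    (hn : nvec ∉ perp33 V) : Module.finrank ℝ ↥(V ⊓ P33) = 2 := by
  have hP : Module.finrank ℝ P33 + 1 = Module.finrank ℝ (Fin 6 → ℝ) :=
    Module.Dual.finrank_ker_add_one_of_ne_zero (f := _) (by
      intro h
      simpa using LinearMap.congr_fun h (Pi.single 0 1 : Fin 6 → ℝ))
  have hlt : P33 < V ⊔ P33 := by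
    refine lt_of_le_of_ne le_sup_right fun h => hn fun v hv => ?_
    exact (mem_P33 v).1 (h ▸ Submodule.mem_sup_left hv)
  have h1 := Submodule.finrank_lt_finrank_of_lt hlt
  have h2 := Submodule.finrank_le (V ⊔ P33)
  have h3 := Submodule.finrank_sup_add_finrank_inf_eq V P33
  rw [Module.finrank_fin_fun] at hP h2
  omega

/-! ### Dimension bound for semidefinite subspaces -/

/-- In signature `(3,3)`, a subspace on which `σ * form33` is nonnegative has dimension at most
three: it meets the three-dimensional subspace on which `σ * form33` is negative definite
trivially. -/
lemma finrank_le_three {σ : ℝ} (hσ : σ = 1 ∨ σ = -1) (U : Submodule ℝ (Fin 6 → ℝ))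
    (hU : ∀ u ∈ U, 0 ≤ σ * form33 u u) : Module.finrank ℝ U ≤ 3 := by
  by_contra! hlt
  have key (e : Fin 3 → Fin 6) : ∃ u ∈ U, u ≠ 0 ∧ ∀ i, u (e i) = 0 := by
    have hker : LinearMap.ker ((LinearMap.funLeft ℝ ℝ e).comp U.subtype) ≠ ⊥ :=
      LinearMap.ker_ne_bot_of_finrank_lt (by rwa [Module.finrank_fin_fun])
    obtain ⟨u, hu, hu0⟩ := Submodule.exists_mem_ne_zero_of_ne_bot hker
    exact ⟨u, u.2, by simpa using hu0, fun i => congr_fun (LinearMap.mem_ker.1 hu) i⟩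
  rcases hσ with rfl | rfl
  · obtain ⟨u, hu, hu0, hz⟩ := key ![0, 1, 2]
    have h0 : u 0 = 0 := hz 0
    have h1 : u 1 = 0 := hz 1
    have h2 : u 2 = 0 := hz 2
    have h := hU u hu
    simp only [form33, h0, h1, h2] at h
    refine hu0 (funext fun i => ?_)
    fin_cases i <;> simp only [h0, h1, h2, Pi.zero_apply, Fin.isValue, Fin.reduceFinMk,
      Fin.mk_one, Fin.zero_eta] <;>
      nlinarith [sq_nonneg (u 3), sq_nonneg (u 4), sq_nonneg (u 5)]
  · obtain ⟨u, hu, hu0, hz⟩ := key ![3, 4, 5]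
    have h3 : u 3 = 0 := hz 0
    have h4 : u 4 = 0 := hz 1
    have h5 : u 5 = 0 := hz 2
    have h := hU u hu
    simp only [form33, h3, h4, h5] at h
    refine hu0 (funext fun i => ?_)
    fin_cases i <;> simp only [h3, h4, h5, Pi.zero_apply, Fin.isValue, Fin.reduceFinMk,
      Fin.mk_one, Fin.zero_eta] <;>
      nlinarith [sq_nonneg (u 0), sq_nonneg (u 1), sq_nonneg (u 2)]

lemma nonneg_sup_span {σ : ℝ} {U : Submodule ℝ (Fin 6 → ℝ)} {x : Fin 6 → ℝ}
    (hU : ∀ u ∈ U, 0 ≤ σ * form33 u u) (hx : 0 ≤ σ * form33 x x)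
    (hxU : ∀ u ∈ U, form33 u x = 0) :
    ∀ u ∈ U ⊔ Submodule.span ℝ {x}, 0 ≤ σ * form33 u u := by
  intro u hu
  obtain ⟨y, hy, z, hz, rfl⟩ := Submodule.mem_sup.1 hu
  obtain ⟨c, rfl⟩ := Submodule.mem_span_singleton.1 hz
  have e : σ * form33 (y + c • x) (y + c • x) = σ * form33 y y + c ^ 2 * (σ * form33 x x) := by
    simp only [form33_add_left, form33_add_right, form33_smul_left, form33_smul_right,
      form33_comm x y, hxU y hy]
    ring
  rw [e]
  have := hU y hy
  positivity

/-! ### Orthogonal splittings and the components of the normal vector -/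

/-- An orthogonal splitting `ℝ⁶ = V ⊕ W` into three-dimensional subspaces, both indefinite, with
`a ∈ V` and `b ∈ W` the components, both nonzero, of `nvec`. Indefiniteness is expressed by saying
that for either sign `σ` the form `σ * form33` takes a negative value. -/
structure SplitPair (V W : Submodule ℝ (Fin 6 → ℝ)) (a b : Fin 6 → ℝ) : Prop where
  compl : IsCompl V W
  orth : ∀ v ∈ V, ∀ w ∈ W, form33 v w = 0
  dimV : Module.finrank ℝ V = 3
  dimW : Module.finrank ℝ W = 3
  indV : ∀ σ : ℝ, σ = 1 ∨ σ = -1 → ∃ v ∈ V, σ * form33 v v < 0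
  indW : ∀ σ : ℝ, σ = 1 ∨ σ = -1 → ∃ w ∈ W, σ * form33 w w < 0
  ha : a ∈ V
  hb : b ∈ W
  ha0 : a ≠ 0
  hb0 : b ≠ 0
  add_eq : a + b = nvec

namespace SplitPair

variable {V W : Submodule ℝ (Fin 6 → ℝ)} {a b : Fin 6 → ℝ}

lemma symm (h : SplitPair V W a b) : SplitPair W V b a where
  compl := h.compl.symm
  orth w hw v hv := by rw [form33_comm, h.orth v hv w hw]
  dimV := h.dimW
  dimW := h.dimV
  indV := h.indW
  indW := h.indV
  ha := h.hb
  hb := h.ha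
  ha0 := h.hb0
  hb0 := h.ha0
  add_eq := by rw [add_comm, h.add_eq]

lemma mem_P33_iff (h : SplitPair V W a b) {v : Fin 6 → ℝ} (hv : v ∈ V) :
    v ∈ P33 ↔ form33 v a = 0 := by
  rw [mem_P33, ← h.add_eq, form33_add_left, form33_comm b v, h.orth v hv b h.hb, add_zero,
    form33_comm]

lemma form_add_form (h : SplitPair V W a b) : form33 a a + form33 b b = 0 := by
  have h1 := (mem_P33 _).1 nvec_mem_P33
  rw [← h.add_eq] at h1
  simp only [form33_add_left, form33_add_right, form33_comm b a, h.orth a h.ha b h.hb] at h1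
  linarith

lemma nvec_notMem_perp (h : SplitPair V W a b) : nvec ∉ perp33 V := by
  intro hn
  refine h.ha0 (eq_zero_of_form33 a fun t => ?_)
  obtain ⟨v, hv, w, hw, rfl⟩ :=
    Submodule.mem_sup.1 (h.compl.sup_eq_top ▸ Submodule.mem_top : t ∈ V ⊔ W)
  rw [form33_add_right, h.orth a h.ha w hw, add_zero, form33_comm,
    ← h.mem_P33_iff hv, mem_P33]
  exact hn v hv

/-- If `a` is not null, then `V = (V ∩ P) ⊕ ℝa`. -/
lemma exists_decomp (h : SplitPair V W a b) (haa : form33 a a ≠ 0) {v : Fin 6 → ℝ} (hv : v ∈ V) :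
    ∃ u ∈ V ⊓ P33, ∃ t : ℝ, v = u + t • a := by
  set t := form33 v a / form33 a a with ht
  have hu : v + (-t) • a ∈ V := V.add_mem hv (V.smul_mem _ h.ha)
  refine ⟨v + (-t) • a, ⟨hu, (h.mem_P33_iff hu).2 ?_⟩, t, by simp⟩
  rw [form33_add_left, form33_smul_left, ht]
  field_simp
  ring

lemma degenerateOn_iff (h : SplitPair V W a b) : DegenerateOn (V ⊓ P33) ↔ form33 a a = 0 := by
  constructor
  · rintro ⟨w, hw, hw0, hz⟩
    by_contra haa
    refine hw0 (eq_zero_of_form33 w fun t => ?_)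
    obtain ⟨v, hv, y, hy, rfl⟩ :=
      Submodule.mem_sup.1 (h.compl.sup_eq_top ▸ Submodule.mem_top : t ∈ V ⊔ W)
    obtain ⟨u, hu, c, rfl⟩ := h.exists_decomp haa hv
    rw [form33_add_right, form33_add_right, form33_smul_right, h.orth w hw.1 y hy, hz u hu,
      (h.mem_P33_iff hw.1).1 hw.2]
    ring
  · intro haa
    refine ⟨a, ⟨h.ha, (h.mem_P33_iff h.ha).2 haa⟩, h.ha0, fun w hw => ?_⟩
    rw [form33_comm]
    exact (h.mem_P33_iff hw.1).1 hw.2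

/-- If `V ∩ P` is definite, then `W ∩ P` is definite of the opposite sign. -/
lemma definite_transfer (h : SplitPair V W a b) {σ : ℝ} (hσ : σ = 1 ∨ σ = -1)
    (hpos : ∀ w ∈ V ⊓ P33, w ≠ 0 → 0 < σ * form33 w w) :
    ∀ w ∈ W ⊓ P33, w ≠ 0 → σ * form33 w w < 0 := by
  have hnn : ∀ w ∈ V ⊓ P33, 0 ≤ σ * form33 w w := by
    intro w hw
    by_cases h0 : w = 0
    · simp [h0, form33]
    · exact (hpos w hw h0).le
  have haa0 : form33 a a ≠ 0 := by
    intro haa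
    have := hpos a ⟨h.ha, (h.mem_P33_iff h.ha).2 haa⟩ h.ha0
    simp [haa] at this
  have hbb0 : form33 b b ≠ 0 := fun hbb => haa0 (by linarith [h.form_add_form])
  have haneg : σ * form33 a a < 0 := by
    by_contra! hge
    obtain ⟨v, hv, hneg⟩ := h.indV σ hσ
    obtain ⟨u, hu, c, rfl⟩ := h.exists_decomp haa0 hv
    refine absurd hneg (not_lt.2 (nonneg_sup_span hnn hge
      (fun x hx => (h.mem_P33_iff hx.1).1 hx.2) _ ?_))
    exact Submodule.add_mem_sup hu (Submodule.smul_mem _ _ (Submodule.mem_span_singleton_self a))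
  have hbpos : 0 ≤ σ * form33 b b := by
    have : σ * form33 a a + σ * form33 b b = 0 := by rw [← mul_add, h.form_add_form, mul_zero]
    linarith
  intro w hw hw0
  by_contra! hge
  have hwb : form33 w b = 0 := (h.symm.mem_P33_iff hw.1).1 hw.2
  have hdisj {x : Fin 6 → ℝ} (hxV : x ∈ V) (hxW : x ∈ W) : x = 0 :=
    Submodule.disjoint_def.1 h.compl.disjoint x hxV hxW
  have hb1 : b ∉ V ⊓ P33 := fun hm => h.hb0 (hdisj hm.1 h.hb)
  have hw1 : w ∉ (V ⊓ P33) ⊔ Submodule.span ℝ {b} := by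
    intro hm
    obtain ⟨y, hy, z, hz, hyz⟩ := Submodule.mem_sup.1 hm
    obtain ⟨c, rfl⟩ := Submodule.mem_span_singleton.1 hz
    have hy0 : y = 0 := hdisj hy.1 (by
      rw [eq_sub_of_add_eq hyz]
      exact W.sub_mem hw.1 (W.smul_mem _ h.hb))
    rw [hy0, zero_add] at hyz
    rw [← hyz, form33_smul_left] at hwb
    have hc : c = 0 := (mul_eq_zero.1 hwb).resolve_right hbb0
    exact hw0 (by rw [← hyz, hc, zero_smul])
  have hU := nonneg_sup_span (nonneg_sup_span hnn hbpos fun u hu => h.orth u hu.1 b h.hb) hge (by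
    intro u hu
    obtain ⟨y, hy, z, hz, rfl⟩ := Submodule.mem_sup.1 hu
    obtain ⟨c, rfl⟩ := Submodule.mem_span_singleton.1 hz
    rw [form33_add_left, form33_smul_left, h.orth y hy.1 w hw.1, form33_comm b w, hwb]
    ring)
  have hle := finrank_le_three hσ _ hU
  rw [Submodule.finrank_sup_span_singleton hw1, Submodule.finrank_sup_span_singleton hb1,
    finrank_inf_P33 V h.dimV h.nvec_notMem_perp] at hle
  omega

lemma definiteOn_of_definiteOn (h : SplitPair V W a b) (hd : DefiniteOn (V ⊓ P33)) :
    DefiniteOn (W ⊓ P33) := by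
  rcases hd with hd | hd
  · right
    intro w hw hw0
    simpa using h.definite_transfer (σ := 1) (Or.inl rfl) (by simpa using hd) w hw hw0
  · left
    intro w hw hw0
    simpa using h.definite_transfer (σ := -1) (Or.inr rfl) (by simpa using hd) w hw hw0

end SplitPair

/-- The orthogonal splitting `ℝ⁶ = V ⊕ V^⊥` and the components of `nvec` in it. -/
lemma exists_splitPair (V : Submodule ℝ (Fin 6 → ℝ)) (hdim : Module.finrank ℝ V = 3)
    (hind : IndefiniteOn V) (h1 : nvec ∉ V) (h2 : nvec ∉ perp33 V) :
    ∃ a b, SplitPair V (perp33 V) a b := by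
  have hsymm : formB.IsSymm := ⟨fun s t => form33_comm s t⟩
  have hcompl : IsCompl V (perp33 V) := by
    rw [perp33_eq_orthogonal]
    refine LinearMap.BilinForm.isCompl_orthogonal_of_restrict_nondegenerate hsymm.isRefl
      ⟨fun x hx => ?_, fun x hx => ?_⟩
    · exact Subtype.ext (hind.1 x x.2 fun y hy => hx ⟨y, hy⟩)
    · exact Subtype.ext (hind.1 x x.2 fun y hy => (form33_comm _ _).trans (hx ⟨y, hy⟩))
  have horth : ∀ v ∈ V, ∀ w ∈ perp33 V, form33 v w = 0 := fun v hv w hw =>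
    (form33_comm _ _).trans (hw v hv)
  have hdimW : Module.finrank ℝ (perp33 V) = 3 := by
    have := Submodule.finrank_add_eq_of_isCompl hcompl
    rw [Module.finrank_fin_fun] at this
    omega
  have hindV (σ : ℝ) (hσ : σ = 1 ∨ σ = -1) : ∃ v ∈ V, σ * form33 v v < 0 := by
    obtain ⟨_, ⟨p, hp, hp'⟩, ⟨q, hq, hq'⟩⟩ := hind
    rcases hσ with rfl | rfl
    · exact ⟨q, hq, by linarith⟩
    · exact ⟨p, hp, by linarith⟩
  have hindW (σ : ℝ) (hσ : σ = 1 ∨ σ = -1) : ∃ w ∈ perp33 V, σ * form33 w w < 0 := by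
    by_contra! hnn
    -- Otherwise `V^⊥` together with a vector of `V` of sign `σ` violates the dimension bound.
    obtain ⟨v, hv, hneg⟩ := hindV (-σ) (by rcases hσ with rfl | rfl <;> simp)
    have hvW : v ∉ perp33 V := fun hm => by
      rw [hm v hv] at hneg
      simp at hneg
    have hle := finrank_le_three hσ _
      (nonneg_sup_span hnn (by linarith : 0 ≤ σ * form33 v v) fun u hu => hu v hv)
    rw [Submodule.finrank_sup_span_singleton hvW] at hle
    omega
  obtain ⟨a, ha, b, hb, hab⟩ :=
    Submodule.mem_sup.1 (hcompl.sup_eq_top ▸ Submodule.mem_top : nvec ∈ V ⊔ perp33 V)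
  refine ⟨a, b, hcompl, horth, hdim, hdimW, hindV, hindW, ha, hb, ?_, ?_, hab⟩
  · rintro rfl
    exact h2 (by rwa [← hab, zero_add])
  · rintro rfl
    exact h1 (by rwa [← hab, add_zero])

/-! ### The two intersections with `P` -/

theorem technical_lemma_case2 (V : Submodule ℝ (Fin 6 → ℝ))
    (hdim : Module.finrank ℝ V = 3) (hind : IndefiniteOn V)
    (h1 : (![1, 0, 0, 0, 0, -1] : Fin 6 → ℝ) ∉ V)
    (h2 : (![1, 0, 0, 0, 0, -1] : Fin 6 → ℝ) ∉ perp33 V) :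
    perp33 P33 = Submodule.span ℝ {(![1, 0, 0, 0, 0, -1] : Fin 6 → ℝ)} ∧
    perp33 P33 ≤ P33 ∧
    Module.finrank ℝ ↥(V ⊓ P33) = 2 ∧
    Module.finrank ℝ ↥(perp33 V ⊓ P33) = 2 ∧
    (DefiniteOn (V ⊓ P33) ↔ DefiniteOn (perp33 V ⊓ P33)) ∧
    (DegenerateOn (V ⊓ P33) ↔ DegenerateOn (perp33 V ⊓ P33)) := by
  obtain ⟨a, b, h⟩ := exists_splitPair V hdim hind h1 h2
  refine ⟨perp33_P33, ?_, finrank_inf_P33 V hdim h2,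
    finrank_inf_P33 _ h.dimW h.symm.nvec_notMem_perp,
    ⟨h.definiteOn_of_definiteOn, h.symm.definiteOn_of_definiteOn⟩, ?_⟩
  · rw [perp33_P33, Submodule.span_singleton_le_iff_mem]
    exact nvec_mem_P33
  · rw [h.degenerateOn_iff, h.symm.degenerateOn_iff]
    have := h.form_add_form
    constructor <;> intro h0 <;> linarith
end
end

section
/- Let a, a', a'' ∈ ℝ⁴. The vectors s_a, s_{a'}, s_{a''} span a 3-dimensional subspace of ℝ⁶ on which the form (·,·) is nondegenerate (and then necessarily indefinite) if and only if the three points are pairwise non-null-separated, i.e. ‖a − a'‖² ≠ 0, ‖a' − a''‖² ≠ 0 and ‖a − a''‖² ≠ 0. Equivalently, three isotropic cones in ℝ^{2,2} intersect on a non-degenerate conic if and only if their centers are pairwise non-null-separated. -/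
/-!
The polyspherical coordinates satisfy `(s_x, s_y) = -‖x - y‖² / 2`, so each `s_x` is isotropic and the
Gram matrix of `s_a, s_{a'}, s_{a''}` has zero diagonal and off-diagonal entries `p, q, r` equal to
`-1/2` times the squared separations. Its determinant is `2pqr`. If `pqr ≠ 0`, a combination of the
three vectors orthogonal to all of them has zero coefficients (`coeffs_eq_zero`), which gives both
linear independence and nondegeneracy. If one entry vanishes and the vectors are
independent, the span contains an explicit nonzero vector of the radical (`form33_ne_zero`).
-/

noncomputable section

/-- Diagonal polyspherical coordinates of the isotropic cone centered at `x`. -/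
def sx (x : Fin 4 → ℝ) : Fin 6 → ℝ :=
  ![(1 - q22 x) / 2, x 0, x 1, x 2, x 3, (1 + q22 x) / 2]

lemma form33_sx (x y : Fin 4 → ℝ) : form33 (sx x) (sx y) = -(q22 (x - y)) / 2 := by
  simp [form33, sx, q22, form22]
  ring

lemma form33_sx_self (x : Fin 4 → ℝ) : form33 (sx x) (sx x) = 0 := by
  simp [form33_sx, q22, form22]

lemma form33_comb_left (u v w t : Fin 6 → ℝ) (α β γ : ℝ) :
    form33 (α • u + β • v + γ • w) t = α * form33 u t + β * form33 v t + γ * form33 w t := by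
  simp [form33]; ring

lemma form33_comb_right (u v w t : Fin 6 → ℝ) (α β γ : ℝ) :
    form33 t (α • u + β • v + γ • w) = α * form33 t u + β * form33 t v + γ * form33 t w := by
  simp [form33]; ring

lemma linearIndependent_triple_iff (u v w : Fin 6 → ℝ) :
    Module.finrank ℝ ↥(Submodule.span ℝ {u, v, w}) = 3 ↔
      ∀ α β γ : ℝ, α • u + β • v + γ • w = 0 → α = 0 ∧ β = 0 ∧ γ = 0 := by
  have hr : Set.range ![u, v, w] = {u, v, w} := by
    ext; simp [eq_comm]; tauto
  have h1 : Module.finrank ℝ ↥(Submodule.span ℝ {u, v, w}) = 3 ↔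
      LinearIndependent ℝ ![u, v, w] := by
    rw [linearIndependent_iff_card_eq_finrank_span, Set.finrank, hr, Fintype.card_fin, eq_comm]
  rw [h1, Fintype.linearIndependent_iff]
  constructor
  · intro h α β γ h0
    have := h ![α, β, γ] (by simpa [Fin.sum_univ_three] using h0)
    exact ⟨this 0, this 1, this 2⟩
  · intro h g hg
    obtain ⟨h0, h1, h2⟩ := h (g 0) (g 1) (g 2) (by simpa [Fin.sum_univ_three] using hg)
    intro i
    fin_cases i <;> assumption

/-- Three isotropic vectors spanning a nondegenerate 3-space are pairwise non-orthogonal (stated for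
the first two). If `(u, v) = 0`, then `(v, w) u - (u, w) v` is in the radical, so independence
forces `(u, w) = 0`, and then `u` itself is in the radical. -/
lemma form33_ne_zero {u v w : Fin 6 → ℝ} (hu : form33 u u = 0) (hv : form33 v v = 0)
    (hd : Module.finrank ℝ ↥(Submodule.span ℝ {u, v, w}) = 3)
    (hn : NondegenerateOn (Submodule.span ℝ {u, v, w})) : form33 u v ≠ 0 := by
  intro huv
  rw [linearIndependent_triple_iff] at hd
  have key : ∀ α β γ : ℝ, (∀ t ∈ ({u, v, w} : Set (Fin 6 → ℝ)),
      form33 (α • u + β • v + γ • w) t = 0) → α = 0 ∧ β = 0 ∧ γ = 0 := by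
    intro α β γ h
    refine hd α β γ (hn _ (Submodule.mem_span_triple.2 ⟨α, β, γ, rfl⟩) fun t ht => ?_)
    obtain ⟨a, b, c, rfl⟩ := Submodule.mem_span_triple.1 ht
    rw [form33_comb_right, h u (by simp), h v (by simp), h w (by simp)]
    ring
  have hvu : form33 v u = 0 := by rw [form33_comm, huv]
  have h1 := key (form33 v w) (-form33 u w) 0 (by
    simp only [Set.mem_insert_iff, Set.mem_singleton_iff]
    rintro t (rfl | rfl | rfl) <;> rw [form33_comb_left] <;> simp [hu, hv, huv, hvu]; ring)
  have huw : form33 u w = 0 := by simpa using h1.2.1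
  have h2 := key 1 0 0 (by
    simp only [Set.mem_insert_iff, Set.mem_singleton_iff]
    rintro t (rfl | rfl | rfl) <;> rw [form33_comb_left] <;> simp [hu, huv, huw])
  exact one_ne_zero h2.1

/-- The Gram matrix with zero diagonal and nonzero off-diagonal entries `p, q, r` is invertible. -/
lemma coeffs_eq_zero {p q r α β γ : ℝ} (hp : p ≠ 0) (hq : q ≠ 0) (hr : r ≠ 0)
    (h1 : β * p + γ * r = 0) (h2 : α * p + γ * q = 0) (h3 : α * r + β * q = 0) :
    α = 0 ∧ β = 0 ∧ γ = 0 := by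
  have hα : (2 * p * r) * α = 0 := by linear_combination r * h2 + p * h3 - q * h1
  have hβ : (2 * p * q) * β = 0 := by linear_combination q * h1 + p * h3 - r * h2
  have hγ : (2 * q * r) * γ = 0 := by linear_combination q * h1 + r * h2 - p * h3
  simp_all

theorem three_cones (a a' a'' : Fin 4 → ℝ) :
    (Module.finrank ℝ ↥(Submodule.span ℝ {sx a, sx a', sx a''}) = 3 ∧
      NondegenerateOn (Submodule.span ℝ {sx a, sx a', sx a''})) ↔
    (q22 (a - a') ≠ 0 ∧ q22 (a' - a'') ≠ 0 ∧ q22 (a - a'') ≠ 0) := by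
  constructor
  · rintro ⟨hd, hn⟩
    have ne : ∀ {x y : Fin 4 → ℝ}, form33 (sx x) (sx y) ≠ 0 → q22 (x - y) ≠ 0 := by
      intro x y h h0
      exact h (by rw [form33_sx, h0]; simp)
    have e1 : ({sx a, sx a', sx a''} : Set (Fin 6 → ℝ)) = {sx a', sx a'', sx a} := by
      ext; simp; tauto
    have e2 : ({sx a, sx a', sx a''} : Set (Fin 6 → ℝ)) = {sx a, sx a'', sx a'} := by
      ext; simp; tauto
    have self := form33_sx_self
    exact ⟨ne (form33_ne_zero (self a) (self a') hd hn),
      ne (form33_ne_zero (self a') (self a'') (e1 ▸ hd) (e1 ▸ hn)),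
      ne (form33_ne_zero (self a) (self a'') (e2 ▸ hd) (e2 ▸ hn))⟩
  · rintro ⟨h1, h2, h3⟩
    have ne : ∀ {x y : Fin 4 → ℝ}, q22 (x - y) ≠ 0 → form33 (sx x) (sx y) ≠ 0 := by
      intro x y h h0
      rw [form33_sx] at h0
      exact h (by linarith)
    have key : ∀ α β γ : ℝ,
        (∀ t ∈ Submodule.span ℝ {sx a, sx a', sx a''},
          form33 (α • sx a + β • sx a' + γ • sx a'') t = 0) → α = 0 ∧ β = 0 ∧ γ = 0 := by
      intro α β γ h
      have k1 := h (sx a) (Submodule.subset_span (by simp))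
      have k2 := h (sx a') (Submodule.subset_span (by simp))
      have k3 := h (sx a'') (Submodule.subset_span (by simp))
      rw [form33_comb_left, form33_sx_self] at k1 k2 k3
      rw [form33_comm (sx a') (sx a), form33_comm (sx a'') (sx a)] at k1
      rw [form33_comm (sx a'') (sx a')] at k2
      exact coeffs_eq_zero (ne h1) (ne h2) (ne h3) (by linarith) (by linarith) (by linarith)
    refine ⟨(linearIndependent_triple_iff _ _ _).2 fun α β γ h0 => key α β γ fun t _ => ?_, ?_⟩
    · rw [h0]; simp [form33]
    · intro w hw h
      obtain ⟨α, β, γ, rfl⟩ := Submodule.mem_span_triple.1 hw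
      obtain ⟨rfl, rfl, rfl⟩ := key α β γ h
      simp
end
end

section
/- (Null-distance property of non-degenerate conjugate conics.) Let V be a 3-dimensional subspace of ℝ⁶ on which the form (·,·) is nondegenerate and indefinite, let V^⊥ be its orthogonal complement, and set S = {x ∈ ℝ⁴ : s_x ∈ V^⊥} and S^⊥ = {x ∈ ℝ⁴ : s_x ∈ V}. Then for every a ∈ S and b ∈ S^⊥ one has ‖a − b‖² = 0. -/
noncomputable section

/-- The (3,3)-product of two polyspherical coordinate vectors measures the squared distance between
the centers. -/
theorem form33_sx_sx (a b : Fin 4 → ℝ) : form33 (sx a) (sx b) = -q22 (a - b) / 2 := by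
  simp [form33, sx, q22, form22]
  ring

theorem null_distance_property (V : Submodule ℝ (Fin 6 → ℝ))
    (hdim : Module.finrank ℝ V = 3) (hind : IndefiniteOn V) :
    ∀ a b : Fin 4 → ℝ, a ∈ {x : Fin 4 → ℝ | sx x ∈ perp33 V} →
      b ∈ {x : Fin 4 → ℝ | sx x ∈ V} → q22 (a - b) = 0 := by
  intro a b ha hb
  have h : form33 (sx a) (sx b) = 0 := ha (sx b) hb
  rw [form33_sx_sx] at h
  linarith
end
end

section
/- Let f : ℝ⁴ → ℝ⁴ be a C¹ diffeomorphism that is conformal for the neutral metric, i.e. there is a nowhere-vanishing function λ : ℝ⁴ → ℝ such that ⟨Df_x(v), Df_x(w)⟩ = λ(x)·⟨v, w⟩ for all x, v, w ∈ ℝ⁴. Then there exist an invertible 6×6 real matrix Λ with ΛᵀJΛ = J or ΛᵀJΛ = −J, where J = diag(1,1,1,−1,−1,−1), and a nonzero constant c ∈ ℝ, such that s_{f(x)} = c·Λ·s_x for all x ∈ ℝ⁴. -/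
/-!
A global conformal `C¹` diffeomorphism of ℝ^{2,2} is a similarity, and similarities act linearly on
polyspherical coordinates. Only `C¹` regularity is available, so the argument is geometric.

*Totally null planes.* The image of a totally null plane is a `C¹` surface with totally null tangent
planes. Such a surface is flat (`null_surface`): locally it is the graph of a map `ℝ² → ℝ²`
between the two definite factors whose derivative is orthogonal, hence (`local_contraction`, applied
to the map and to its inverse) of a local isometry, so the differences of nearby points of the
surface are mutually orthogonal null vectors; differentiating in both points, neighbouring tangent
planes are mutually orthogonal, and they coincide because a totally null plane is its own
orthogonal complement.

*Null lines.* A null line is the intersection of two totally null planes, so it is mapped into a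
null line (`IsConf.line_image`), and onto it by applying the same to the inverse. Within a totally
null plane every line is null, so parallel lines go to parallel lines (`IsConf.parallel`) and
parallelograms to parallelograms. Hence `Df_{x+m} n = Df_x n` for `n`, `m` in a common totally null
plane (`IsConf.fderiv_add_of_nullPair`).

*Rigidity.* Let `m` be null and let `n`, `k` lie in the two totally null planes through `m`, with
`⟨n, k⟩ ≠ 0`. As `Df n` and `Df k` do not change from `x` to `x + m`, neither does the conformal
factor, which is therefore constant. Writing `v` as a sum of two null vectors `n + k` gives
`f (x + v) - f x = Df_{x+n} v`, so `f` scales all squared distances by one constant, and such a map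
is affine (`IsConf.affine`). The matrix `Λ` is then written down explicitly (`lift6`) and
normalized.
-/

open Matrix

noncomputable section

/-- The matrix `J = diag(1,1,1,−1,−1,−1)`. -/
def J33 : Matrix (Fin 6) (Fin 6) ℝ := Matrix.diagonal ![1, 1, 1, -1, -1, -1]

/-! ### The neutral form -/

lemma form22_comm (x y : Fin 4 → ℝ) : form22 x y = form22 y x := by
  simp only [form22]; ring

lemma form22_add_left (x y z : Fin 4 → ℝ) : form22 (x + y) z = form22 x z + form22 y z := by
  simp only [form22, Pi.add_apply]; ring

lemma form22_sub_left (x y z : Fin 4 → ℝ) : form22 (x - y) z = form22 x z - form22 y z := by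
  simp only [form22, Pi.sub_apply]; ring

lemma form22_smul_left (a : ℝ) (x z : Fin 4 → ℝ) : form22 (a • x) z = a * form22 x z := by
  simp only [form22, Pi.smul_apply, smul_eq_mul]; ring

lemma form22_add_right (x y z : Fin 4 → ℝ) : form22 z (x + y) = form22 z x + form22 z y := by
  simp only [form22, Pi.add_apply]; ring

lemma form22_sub_right (x y z : Fin 4 → ℝ) : form22 z (x - y) = form22 z x - form22 z y := by
  simp only [form22, Pi.sub_apply]; ring

lemma form22_smul_right (a : ℝ) (x z : Fin 4 → ℝ) : form22 z (a • x) = a * form22 z x := by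
  simp only [form22, Pi.smul_apply, smul_eq_mul]; ring

lemma form22_nondeg {v : Fin 4 → ℝ} (h : ∀ w, form22 v w = 0) : v = 0 := by
  have h0 := h (Pi.single 0 1)
  have h1 := h (Pi.single 1 1)
  have h2 := h (Pi.single 2 1)
  have h3 := h (Pi.single 3 1)
  simp [form22] at h0 h1 h2 h3
  ext i; fin_cases i <;> simp [*]

/-- Pairing with a fixed vector `w`, as a continuous linear functional. -/
def formL (w : Fin 4 → ℝ) : (Fin 4 → ℝ) →L[ℝ] ℝ :=
  LinearMap.toContinuousLinearMap
    { toFun := fun v => form22 v w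
      map_add' := fun x y => form22_add_left x y w
      map_smul' := fun a x => by simp [form22_smul_left] }

@[simp] lemma formL_apply (w v : Fin 4 → ℝ) : formL w v = form22 v w := rfl

/-- The projection of ℝ^{2,2} onto its positive definite factor, identified with `ℂ`. -/
def pC : (Fin 4 → ℝ) →L[ℝ] ℂ :=
  LinearMap.toContinuousLinearMap
    { toFun := fun v => ⟨v 0, v 1⟩
      map_add' := fun x y => by apply Complex.ext <;> simp
      map_smul' := fun a x => by apply Complex.ext <;> simp }

/-- The projection of ℝ^{2,2} onto its negative definite factor, identified with `ℂ`. -/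
def rC : (Fin 4 → ℝ) →L[ℝ] ℂ :=
  LinearMap.toContinuousLinearMap
    { toFun := fun v => ⟨v 2, v 3⟩
      map_add' := fun x y => by apply Complex.ext <;> simp
      map_smul' := fun a x => by apply Complex.ext <;> simp }

lemma pC_apply (v : Fin 4 → ℝ) : pC v = ⟨v 0, v 1⟩ := rfl
lemma rC_apply (v : Fin 4 → ℝ) : rC v = ⟨v 2, v 3⟩ := rfl

lemma form22_eq (v w : Fin 4 → ℝ) : form22 v w =
    (pC v).re * (pC w).re + (pC v).im * (pC w).im
      - ((rC v).re * (rC w).re + (rC v).im * (rC w).im) := by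
  simp only [form22, pC_apply, rC_apply]; ring

lemma form22_self_eq (v : Fin 4 → ℝ) : form22 v v = ‖pC v‖ ^ 2 - ‖rC v‖ ^ 2 := by
  rw [form22_eq, ← Complex.normSq_eq_norm_sq, ← Complex.normSq_eq_norm_sq,
    Complex.normSq_apply, Complex.normSq_apply]

lemma norm_eq_of_null {v : Fin 4 → ℝ} (h : form22 v v = 0) : ‖pC v‖ = ‖rC v‖ := by
  rw [form22_self_eq, sub_eq_zero] at h
  exact (sq_eq_sq₀ (norm_nonneg _) (norm_nonneg _)).1 h

lemma eq_zero_of_pC_rC {v : Fin 4 → ℝ} (hp : pC v = 0) (hr : rC v = 0) : v = 0 := by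
  rw [pC_apply, Complex.ext_iff] at hp
  rw [rC_apply, Complex.ext_iff] at hr
  simp at hp hr
  ext i; fin_cases i <;> simp [*]

/-- A totally null plane projects isomorphically to both definite factors, since a null vector has
components of equal length there. -/
lemma pC_comp_injective {D : ℂ →L[ℝ] (Fin 4 → ℝ)} (hinj : Function.Injective D)
    (hnull : ∀ h k, form22 (D h) (D k) = 0) :
    Function.Injective (pC.comp D) ∧ Function.Injective (rC.comp D) := by
  constructor <;>
  · rw [injective_iff_map_eq_zero]
    intro a ha
    have h1 := norm_eq_of_null (hnull a a)
    simp only [ContinuousLinearMap.comp_apply] at ha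
    apply hinj
    rw [map_zero]
    apply eq_zero_of_pC_rC
    · first | exact ha | (rw [ha, norm_zero] at h1; exact norm_eq_zero.1 h1)
    · first | exact ha | (rw [ha, norm_zero] at h1; exact norm_eq_zero.1 h1.symm)

/-- A totally null plane is its own orthogonal complement. -/
lemma mem_range_of_orthogonal {D : ℂ →L[ℝ] (Fin 4 → ℝ)} (hinj : Function.Injective D)
    (hnull : ∀ h k, form22 (D h) (D k) = 0) {v : Fin 4 → ℝ} (hv : ∀ k, form22 v (D k) = 0) :
    ∃ h, v = D h := by
  obtain ⟨hp, hr⟩ := pC_comp_injective hinj hnull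
  have hps : Function.Surjective (pC.comp D) :=
    (LinearMap.injective_iff_surjective (f := ((pC.comp D : ℂ →L[ℝ] ℂ) : ℂ →ₗ[ℝ] ℂ))).1 hp
  have hrs : Function.Surjective (rC.comp D) :=
    (LinearMap.injective_iff_surjective (f := ((rC.comp D : ℂ →L[ℝ] ℂ) : ℂ →ₗ[ℝ] ℂ))).1 hr
  obtain ⟨h, hh⟩ := hps (pC v)
  refine ⟨h, ?_⟩
  have hp0 : pC (v - D h) = 0 := by
    rw [map_sub, sub_eq_zero]; exact hh.symm
  obtain ⟨k, hk⟩ := hrs (rC (v - D h))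
  simp only [ContinuousLinearMap.comp_apply] at hk
  have h0 : form22 (v - D h) (D k) = 0 := by
    rw [form22_sub_left, hv, hnull, sub_zero]
  rw [form22_eq, hp0, hk] at h0
  have h1 : rC (v - D h) = 0 := by
    rw [← Complex.normSq_eq_zero, Complex.normSq_apply]
    simp only [Complex.zero_re, Complex.zero_im, zero_mul, add_zero, zero_sub] at h0
    linarith
  exact sub_eq_zero.1 (eq_zero_of_pC_rC hp0 h1)

/-! ### Totally null surfaces are flat -/

/-- Infinitesimal contraction integrates to a local contraction: since `P` is a local
diffeomorphism, `R` is locally a function of `P` defined on a ball, with derivative of norm at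
most `1`. -/
lemma local_contraction {P R : ℂ → ℂ} (hP : ContDiff ℝ 1 P) (hR : ContDiff ℝ 1 R)
    (hinj : ∀ u, Function.Injective (fderiv ℝ P u))
    (hle : ∀ u h, ‖fderiv ℝ R u h‖ ≤ ‖fderiv ℝ P u h‖) (u₀ : ℂ) :
    ∃ U ∈ nhds u₀, ∀ u ∈ U, ∀ u' ∈ U, ‖R u - R u'‖ ≤ ‖P u - P u'‖ := by
  let E : ℂ → (ℂ ≃L[ℝ] ℂ) := fun u =>
    (LinearEquiv.ofInjectiveEndo ((fderiv ℝ P u : ℂ →L[ℝ] ℂ) : ℂ →ₗ[ℝ] ℂ)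
      (hinj u)).toContinuousLinearEquiv
  have hE : ∀ u, ((E u : ℂ ≃L[ℝ] ℂ) : ℂ →L[ℝ] ℂ) = fderiv ℝ P u := by
    intro u
    exact ContinuousLinearMap.ext fun h => rfl
  have hPs : ∀ u, HasStrictFDerivAt P ((E u : ℂ ≃L[ℝ] ℂ) : ℂ →L[ℝ] ℂ) u := by
    intro u
    rw [hE]
    exact hP.contDiffAt.hasStrictFDerivAt (by norm_num)
  let e := (hPs u₀).toOpenPartialHomeomorph P
  have he : ∀ u, e u = P u := fun u => rfl
  have hu₀ : u₀ ∈ e.source := (hPs u₀).mem_toOpenPartialHomeomorph_source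
  obtain ⟨ε, hε, hball⟩ := Metric.isOpen_iff.1 e.open_target (e u₀) (e.map_source hu₀)
  refine ⟨e.source ∩ P ⁻¹' Metric.ball (P u₀) ε, Filter.inter_mem (e.open_source.mem_nhds hu₀)
    (hP.continuous.continuousAt.preimage_mem_nhds (Metric.ball_mem_nhds _ hε)), ?_⟩
  rintro u ⟨hu, hub⟩ u' ⟨hu', hub'⟩
  have hder : ∀ y ∈ Metric.ball (P u₀) ε, HasFDerivWithinAt (R ∘ e.symm)
      ((fderiv ℝ R (e.symm y)).comp (((E (e.symm y)).symm : ℂ ≃L[ℝ] ℂ) : ℂ →L[ℝ] ℂ))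
      (Metric.ball (P u₀) ε) y := by
    intro y hy
    have h1 : HasFDerivAt e.symm (((E (e.symm y)).symm : ℂ ≃L[ℝ] ℂ) : ℂ →L[ℝ] ℂ) y :=
      e.hasFDerivAt_symm (hball hy) (hPs (e.symm y)).hasFDerivAt
    exact (((hR.differentiable (by norm_num)) (e.symm y)).hasFDerivAt.comp y h1).hasFDerivWithinAt
  have hbound : ∀ y ∈ Metric.ball (P u₀) ε,
      ‖(fderiv ℝ R (e.symm y)).comp (((E (e.symm y)).symm : ℂ ≃L[ℝ] ℂ) : ℂ →L[ℝ] ℂ)‖ ≤ 1 := by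
    intro y _
    refine ContinuousLinearMap.opNorm_le_bound _ zero_le_one fun h => ?_
    have h2 := hle (e.symm y) ((E (e.symm y)).symm h)
    rw [← hE] at h2
    simpa using h2
  have h3 := (convex_ball (P u₀) ε).norm_image_sub_le_of_norm_hasFDerivWithin_le hder hbound
    hub' hub
  simp only [Function.comp_apply, one_mul, ← he] at h3
  rw [e.left_inv hu, e.left_inv hu'] at h3
  exact h3

/-- If pairing with `w` is constant along `F` near `u`, then `w` is orthogonal to the range of the
derivative. -/
lemma formL_fderiv_eq_zero {E : Type*} [NormedAddCommGroup E] [NormedSpace ℝ E]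
    {F : E → (Fin 4 → ℝ)} {u : E} (hF : DifferentiableAt ℝ F u) {w : Fin 4 → ℝ}
    {c : ℝ} (hc : ∀ᶠ u' in nhds u, form22 (F u') w = c) (h : E) :
    form22 (fderiv ℝ F u h) w = 0 := by
  have h1 : HasFDerivAt (fun u' => form22 (F u') w) ((formL w).comp (fderiv ℝ F u)) u :=
    (formL w).hasFDerivAt.comp u hF.hasFDerivAt
  have h2 : HasFDerivAt (fun u' => form22 (F u') w) (0 : E →L[ℝ] ℝ) u :=
    (hasFDerivAt_const c u).congr_of_eventuallyEq hc
  have h3 := congrArg (fun L : E →L[ℝ] ℝ => L h) (h1.unique h2)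
  simpa using h3

/-- The tangent planes of a `C¹` totally null surface are locally constant: locally the surface is
the graph of an isometry between the two definite factors, so that the differences of its points
are mutually orthogonal null vectors. -/
lemma null_surface_local {F : ℂ → (Fin 4 → ℝ)} (hF : ContDiff ℝ 1 F)
    (hinj : ∀ u, Function.Injective (fderiv ℝ F u))
    (hnull : ∀ u h k, form22 (fderiv ℝ F u h) (fderiv ℝ F u k) = 0) (u₀ : ℂ) :
    ∃ U ∈ nhds u₀, ∀ u ∈ U, ∀ u' ∈ U, ∀ h k,
      form22 (fderiv ℝ F u h) (fderiv ℝ F u' k) = 0 := by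
  have hFd : Differentiable ℝ F := hF.differentiable (by norm_num)
  have hp : ContDiff ℝ 1 (pC ∘ F) := pC.contDiff.comp hF
  have hr : ContDiff ℝ 1 (rC ∘ F) := rC.contDiff.comp hF
  have hdp : ∀ u, fderiv ℝ (pC ∘ F) u = pC.comp (fderiv ℝ F u) := fun u =>
    (pC.hasFDerivAt.comp u (hFd u).hasFDerivAt).fderiv
  have hdr : ∀ u, fderiv ℝ (rC ∘ F) u = rC.comp (fderiv ℝ F u) := fun u =>
    (rC.hasFDerivAt.comp u (hFd u).hasFDerivAt).fderiv
  obtain ⟨U, hU, hU'⟩ := local_contraction hp hr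
    (fun u => by rw [hdp]; exact (pC_comp_injective (hinj u) (hnull u)).1)
    (fun u h => by rw [hdp, hdr]; exact (norm_eq_of_null (hnull u h h)).ge) u₀
  obtain ⟨V, hV, hV'⟩ := local_contraction hr hp
    (fun u => by rw [hdr]; exact (pC_comp_injective (hinj u) (hnull u)).2)
    (fun u h => by rw [hdp, hdr]; exact (norm_eq_of_null (hnull u h h)).le) u₀
  obtain ⟨W, hWs, hWo, hW₀⟩ := mem_nhds_iff.1 (Filter.inter_mem hU hV)
  have hq : ∀ u ∈ W, ∀ u' ∈ W, form22 (F u - F u') (F u - F u') = 0 := by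
    intro u hu u' hu'
    have h1 := hU' u (hWs hu).1 u' (hWs hu').1
    have h2 := hV' u (hWs hu).2 u' (hWs hu').2
    rw [form22_self_eq, map_sub, map_sub, sub_eq_zero]
    exact congrArg (· ^ 2) (le_antisymm h2 h1)
  have hb : ∀ u ∈ W, ∀ u' ∈ W, form22 (F u) (F u' - F u₀) = form22 (F u₀) (F u' - F u₀) := by
    intro u hu u' hu'
    have h1 := hq u hu u' hu'
    have h2 := hq u hu u₀ hW₀
    have h3 := hq u' hu' u₀ hW₀
    simp only [form22_sub_left, form22_sub_right, form22_comm (F u') (F u),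
      form22_comm (F u₀) (F u), form22_comm (F u₀) (F u')] at h1 h2 h3 ⊢
    linarith
  refine ⟨W, hWo.mem_nhds hW₀, fun u hu u' hu' h k => ?_⟩
  have h1 : ∀ v ∈ W, form22 (F v) (fderiv ℝ F u h) = form22 (F u₀) (fderiv ℝ F u h) := by
    intro v hv
    have h2 := formL_fderiv_eq_zero (hFd u) (w := F v - F u₀)
      (Filter.eventually_of_mem (hWo.mem_nhds hu) fun x hx => hb x hx v hv) h
    rw [form22_comm, form22_sub_left] at h2
    linarith
  rw [form22_comm]
  exact formL_fderiv_eq_zero (hFd u') (Filter.eventually_of_mem (hWo.mem_nhds hu') h1) k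

/-- A `C¹` totally null surface lies in a single affine totally null plane, whose
direction contains all its tangent planes. -/
lemma null_surface {F : ℂ → (Fin 4 → ℝ)} (hF : ContDiff ℝ 1 F)
    (hinj : ∀ u, Function.Injective (fderiv ℝ F u))
    (hnull : ∀ u h k, form22 (fderiv ℝ F u h) (fderiv ℝ F u k) = 0) (u : ℂ) :
    (∀ h, ∃ k, fderiv ℝ F u h = fderiv ℝ F 0 k) ∧ ∃ k, F u - F 0 = fderiv ℝ F 0 k := by
  have hFd : Differentiable ℝ F := hF.differentiable (by norm_num)
  have hloc : IsLocallyConstant fun u => Set.range (fderiv ℝ F u) := by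
    rw [IsLocallyConstant.iff_eventually_eq]
    intro u₀
    obtain ⟨U, hU, hU'⟩ := null_surface_local hF hinj hnull u₀
    have hsub : ∀ u ∈ U, ∀ u' ∈ U, Set.range (fderiv ℝ F u) ⊆ Set.range (fderiv ℝ F u') := by
      rintro u hu u' hu' _ ⟨h, rfl⟩
      obtain ⟨k, hk⟩ := mem_range_of_orthogonal (hinj u') (hnull u') (hU' u hu u' hu' h)
      exact ⟨k, hk.symm⟩
    exact Filter.eventually_of_mem hU fun u hu =>
      (hsub u hu u₀ (mem_of_mem_nhds hU)).antisymm (hsub u₀ (mem_of_mem_nhds hU) u hu)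
  have hconst : ∀ u h, ∃ k, fderiv ℝ F u h = fderiv ℝ F 0 k := by
    intro u h
    have h1 : fderiv ℝ F u h ∈ Set.range (fderiv ℝ F 0) :=
      (hloc.apply_eq_of_preconnectedSpace u 0).le ⟨h, rfl⟩
    obtain ⟨k, hk⟩ := h1
    exact ⟨k, hk.symm⟩
  refine ⟨hconst u, mem_range_of_orthogonal (hinj 0) (hnull 0) fun k => ?_⟩
  have hd : ∀ v, HasFDerivAt (fun u' => form22 (F u') (fderiv ℝ F 0 k))
      ((formL (fderiv ℝ F 0 k)).comp (fderiv ℝ F v)) v := fun v =>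
    (formL _).hasFDerivAt.comp v (hFd v).hasFDerivAt
  have h1 := is_const_of_fderiv_eq_zero (𝕜 := ℝ) (fun v => (hd v).differentiableAt)
    (fun v => by
      rw [(hd v).fderiv]
      refine ContinuousLinearMap.ext fun h => ?_
      obtain ⟨l, hl⟩ := hconst v h
      simp [hl, hnull]) u 0
  rw [form22_sub_left, sub_eq_zero]
  exact h1

/-! ### Conformal maps on totally null planes -/

/-- `f` is a `C¹` conformal map of ℝ^{2,2} with nowhere vanishing conformal factor `lam`. -/
structure IsConf (f : (Fin 4 → ℝ) → (Fin 4 → ℝ)) (lam : (Fin 4 → ℝ) → ℝ) : Prop where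
  contDiff : ContDiff ℝ 1 f
  lam_ne : ∀ x, lam x ≠ 0
  conf : ∀ x v w, form22 (fderiv ℝ f x v) (fderiv ℝ f x w) = lam x * form22 v w

/-- `n` and `m` form a basis of a totally null plane. -/
structure NullPair (n m : Fin 4 → ℝ) : Prop where
  nn : form22 n n = 0
  nm : form22 n m = 0
  mm : form22 m m = 0
  indep : ∀ a b : ℝ, a • n + b • m = 0 → a = 0 ∧ b = 0

/-- The parametrization `a + b i ↦ a n + b m` of the plane spanned by `n` and `m`. -/
def planeMap (n m : Fin 4 → ℝ) : ℂ →L[ℝ] (Fin 4 → ℝ) :=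
  Complex.reCLM.smulRight n + Complex.imCLM.smulRight m

lemma planeMap_apply (n m : Fin 4 → ℝ) (u : ℂ) : planeMap n m u = u.re • n + u.im • m := rfl

namespace IsConf

variable {f : (Fin 4 → ℝ) → (Fin 4 → ℝ)} {lam : (Fin 4 → ℝ) → ℝ}

lemma differentiable (hf : IsConf f lam) : Differentiable ℝ f :=
  hf.contDiff.differentiable (by norm_num)

lemma injective_fderiv (hf : IsConf f lam) (x : Fin 4 → ℝ) :
    Function.Injective (fderiv ℝ f x) := by
  rw [injective_iff_map_eq_zero]
  intro v hv
  refine form22_nondeg fun w => ?_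
  have h := hf.conf x v w
  rw [hv] at h
  have h0 : form22 0 (fderiv ℝ f x w) = 0 := by simp [form22]
  rw [h0] at h
  exact (mul_eq_zero.1 h.symm).resolve_left (hf.lam_ne x)

lemma surjective_fderiv (hf : IsConf f lam) (x : Fin 4 → ℝ) :
    Function.Surjective (fderiv ℝ f x) :=
  (LinearMap.injective_iff_surjective
    (f := ((fderiv ℝ f x : _ →L[ℝ] _) : (Fin 4 → ℝ) →ₗ[ℝ] (Fin 4 → ℝ)))).1 (hf.injective_fderiv x)

/-- A conformal map sends a totally null plane into a totally null plane. -/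
lemma plane_image (hf : IsConf f lam) {n m : Fin 4 → ℝ} (h : NullPair n m) (x : Fin 4 → ℝ)
    (a b : ℝ) :
    (∃ c d : ℝ, fderiv ℝ f (x + (a • n + b • m)) n = c • fderiv ℝ f x n + d • fderiv ℝ f x m) ∧
    ∃ c d : ℝ, f (x + (a • n + b • m)) - f x = c • fderiv ℝ f x n + d • fderiv ℝ f x m := by
  let F : ℂ → (Fin 4 → ℝ) := fun u => f (x + planeMap n m u)
  have hin : ContDiff ℝ 1 fun u : ℂ => x + planeMap n m u :=
    contDiff_const.add (planeMap n m).contDiff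
  have hF : ContDiff ℝ 1 F := hf.contDiff.comp hin
  have hd : ∀ u, fderiv ℝ F u = (fderiv ℝ f (x + planeMap n m u)).comp (planeMap n m) := fun u =>
    ((hf.differentiable _).hasFDerivAt.comp u ((planeMap n m).hasFDerivAt.const_add x)).fderiv
  have hpi : Function.Injective (planeMap n m) := by
    rw [injective_iff_map_eq_zero]
    intro u hu
    obtain ⟨h1, h2⟩ := h.indep _ _ hu
    exact Complex.ext h1 h2
  have hpn : ∀ u v, form22 (planeMap n m u) (planeMap n m v) = 0 := by
    intro u v
    simp [planeMap_apply, form22_add_left, form22_add_right, form22_smul_left, form22_smul_right,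
      h.nn, h.nm, h.mm, form22_comm m n]
  obtain ⟨h1, k, hk⟩ := null_surface hF
    (fun u => by rw [hd]; exact (hf.injective_fderiv _).comp hpi)
    (fun u v w => by simp [hd, hf.conf, hpn]) ⟨a, b⟩
  constructor
  · obtain ⟨l, hl⟩ := h1 1
    refine ⟨l.re, l.im, ?_⟩
    simpa [hd, planeMap_apply] using hl
  · refine ⟨k.re, k.im, ?_⟩
    rw [hd] at hk
    simpa [F, planeMap_apply] using hk

end IsConf

/-- For null `n = (p, r)`, the vectors `(ip, ir)` and `(ip, -ir)` span with `n` the two totally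
null planes through `n`; this is the first of them. -/
def J₁ (n : Fin 4 → ℝ) : Fin 4 → ℝ := ![-n 1, n 0, -n 3, n 2]

/-- The second complementary vector `(ip, -ir)` of a null vector `n = (p, r)`. -/
def J₂ (n : Fin 4 → ℝ) : Fin 4 → ℝ := ![-n 1, n 0, n 3, -n 2]

lemma null_sum_ne_zero {n : Fin 4 → ℝ} (hn : form22 n n = 0) (h0 : n ≠ 0) :
    n 0 * n 0 + n 1 * n 1 ≠ 0 := by
  intro h
  apply h0
  simp only [form22] at hn
  ext i
  fin_cases i <;> simp <;> nlinarith [sq_nonneg (n 0), sq_nonneg (n 1), sq_nonneg (n 2),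
    sq_nonneg (n 3)]

lemma form22_J₁_J₂ {n : Fin 4 → ℝ} (hn : form22 n n = 0) (h0 : n ≠ 0) :
    form22 (J₁ n) (J₂ n) ≠ 0 := by
  have h := null_sum_ne_zero hn h0
  contrapose! h
  simp [form22, J₁, J₂] at hn h
  linarith

lemma nullPair_J₁ {n : Fin 4 → ℝ} (hn : form22 n n = 0) (h0 : n ≠ 0) : NullPair n (J₁ n) := by
  have h := null_sum_ne_zero hn h0
  refine ⟨hn, ?_, ?_, fun a b hab => ?_⟩
  · simp [form22, J₁]; ring
  · simp [form22, J₁] at hn ⊢; linarith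
  · have e0 := congrFun hab 0
    have e1 := congrFun hab 1
    simp [J₁] at e0 e1
    constructor
    · exact (mul_eq_zero.1 (by linear_combination n 0 * e0 + n 1 * e1 :
        a * (n 0 * n 0 + n 1 * n 1) = 0)).resolve_right h
    · exact (mul_eq_zero.1 (by linear_combination n 0 * e1 - n 1 * e0 :
        b * (n 0 * n 0 + n 1 * n 1) = 0)).resolve_right h

lemma nullPair_J₂ {n : Fin 4 → ℝ} (hn : form22 n n = 0) (h0 : n ≠ 0) : NullPair n (J₂ n) := by
  have h := null_sum_ne_zero hn h0
  refine ⟨hn, ?_, ?_, fun a b hab => ?_⟩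
  · simp [form22, J₂]; ring
  · simp [form22, J₂] at hn ⊢; linarith
  · have e0 := congrFun hab 0
    have e1 := congrFun hab 1
    simp [J₂] at e0 e1
    constructor
    · exact (mul_eq_zero.1 (by linear_combination n 0 * e0 + n 1 * e1 :
        a * (n 0 * n 0 + n 1 * n 1) = 0)).resolve_right h
    · exact (mul_eq_zero.1 (by linear_combination n 0 * e1 - n 1 * e0 :
        b * (n 0 * n 0 + n 1 * n 1) = 0)).resolve_right h

lemma NullPair.symm {n m : Fin 4 → ℝ} (h : NullPair n m) : NullPair m n :=
  ⟨h.mm, by rw [form22_comm, h.nm], h.nn, fun a b hab => (h.indep b a (by rw [add_comm, hab])).symm⟩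

lemma NullPair.smul {n m : Fin 4 → ℝ} (h : NullPair n m) {t : ℝ} (ht : t ≠ 0) :
    NullPair (t • n) m :=
  ⟨by simp [form22_smul_left, form22_smul_right, h.nn], by simp [form22_smul_left, h.nm], h.mm,
    fun a b hab => by
      obtain ⟨h1, h2⟩ := h.indep (a * t) b (by rw [← hab, smul_smul])
      exact ⟨(mul_eq_zero.1 h1).resolve_right ht, h2⟩⟩

lemma NullPair.sub_smul {n m : Fin 4 → ℝ} (h : NullPair n m) (t : ℝ) :
    NullPair n (m - t • n) :=
  ⟨h.nn, by simp [form22_sub_right, form22_smul_right, h.nn, h.nm],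
    by simp [form22_sub_right, form22_sub_left, form22_smul_left, form22_smul_right, h.nn, h.nm,
      h.mm, form22_comm m n],
    fun a b hab => by
      obtain ⟨h1, h2⟩ := h.indep (a - b * t) b (by rw [← hab]; module)
      subst h2
      exact ⟨by simpa using h1, rfl⟩⟩

/-! ### Images of null lines -/

namespace IsConf

variable {f g : (Fin 4 → ℝ) → (Fin 4 → ℝ)} {lam mu : (Fin 4 → ℝ) → ℝ}

/-- A conformal map sends null lines into null lines, since a null line is the intersection of two
totally null planes. -/
lemma line_image (hf : IsConf f lam) {n : Fin 4 → ℝ} (hn : form22 n n = 0) (x : Fin 4 → ℝ)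
    (t : ℝ) : ∃ s : ℝ, f (x + t • n) = f x + s • fderiv ℝ f x n := by
  by_cases h0 : n = 0
  · exact ⟨0, by simp [h0]⟩
  obtain ⟨-, a, b, h1⟩ := hf.plane_image (nullPair_J₁ hn h0) x t 0
  obtain ⟨-, c, d, h2⟩ := hf.plane_image (nullPair_J₂ hn h0) x t 0
  rw [zero_smul, add_zero] at h1 h2
  have h3 : (a - c) • n + b • J₁ n = d • J₂ n := by
    apply hf.injective_fderiv x
    rw [map_add, map_smul, map_smul, map_smul]
    have h4 := h1.symm.trans h2
    rw [sub_smul, ← sub_eq_zero]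
    rw [← sub_eq_zero] at h4
    rw [← h4]
    abel
  have h5 := congrArg (fun v => form22 v (J₁ n)) h3
  simp only [form22_add_left, form22_smul_left, (nullPair_J₁ hn h0).nm,
    (nullPair_J₁ hn h0).mm, form22_comm (J₂ n), mul_zero, add_zero] at h5
  have hd : d = 0 := (mul_eq_zero.1 h5.symm).resolve_right (form22_J₁_J₂ hn h0)
  refine ⟨c, ?_⟩
  rw [hd, zero_smul, add_zero] at h2
  rw [← h2]; abel

lemma fderiv_comp_inv (hf : IsConf f lam) (hg : Differentiable ℝ g) (hgf : ∀ x, g (f x) = x)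
    (x v : Fin 4 → ℝ) : fderiv ℝ g (f x) (fderiv ℝ f x v) = v := by
  have h1 : HasFDerivAt (g ∘ f) ((fderiv ℝ g (f x)).comp (fderiv ℝ f x)) x :=
    (hg (f x)).hasFDerivAt.comp x (hf.differentiable x).hasFDerivAt
  have h2 : g ∘ f = id := funext hgf
  rw [h2] at h1
  exact congrArg (fun L : (Fin 4 → ℝ) →L[ℝ] (Fin 4 → ℝ) => L v) (h1.unique (hasFDerivAt_id x))

lemma line_surj (hf : IsConf f lam) (hg : IsConf g mu) (hgf : ∀ x, g (f x) = x)
    (hfg : ∀ x, f (g x) = x) {n : Fin 4 → ℝ} (hn : form22 n n = 0) (x : Fin 4 → ℝ) (s : ℝ) :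
    ∃ t : ℝ, f x + s • fderiv ℝ f x n = f (x + t • n) := by
  obtain ⟨t, ht⟩ := hg.line_image (n := fderiv ℝ f x n) (by rw [hf.conf, hn, mul_zero]) (f x) s
  rw [hgf, fderiv_comp_inv hf hg.differentiable hgf] at ht
  exact ⟨t, by rw [← ht, hfg]⟩

/-- Parallel null lines in a common totally null plane have parallel images: otherwise the image
lines, being full lines of one plane, would meet. -/
lemma parallel (hf : IsConf f lam) (hg : IsConf g mu) (hgf : ∀ x, g (f x) = x)
    (hfg : ∀ x, f (g x) = x) {n m : Fin 4 → ℝ} (h : NullPair n m) (x : Fin 4 → ℝ) :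
    ∃ c : ℝ, fderiv ℝ f (x + m) n = c • fderiv ℝ f x n := by
  obtain ⟨⟨c, d, h1⟩, -⟩ := hf.plane_image h x 0 1
  rw [zero_smul, zero_add, one_smul] at h1
  by_cases hd : d = 0
  · exact ⟨c, by rw [h1, hd, zero_smul, add_zero]⟩
  exfalso
  obtain ⟨e, he⟩ := hf.line_image h.mm x 1
  rw [one_smul] at he
  obtain ⟨t, ht⟩ := hf.line_surj hg hgf hfg h.nn (x + m) (-(e / d))
  obtain ⟨t', ht'⟩ := hf.line_surj hg hgf hfg h.nn x (-(e / d * c))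
  have h2 : f (x + m + t • n) = f (x + t' • n) := by
    rw [← ht, ← ht', h1, he, smul_add, smul_smul, smul_smul,
      show -(e / d) * d = -e by field_simp]
    module
  have h3 : x + m + t • n = x + t' • n := by rw [← hgf (x + m + t • n), h2, hgf]
  have h4 : (t - t') • n + (1 : ℝ) • m = 0 := by
    have h5 := sub_eq_zero.2 h3
    rw [← h5]; module
  exact one_ne_zero (h.indep _ _ h4).2

/-- Parallelograms in a totally null plane map to parallelograms; infinitesimally, the derivative
along `n` is constant in the direction `m`. -/
lemma fderiv_add_of_nullPair (hf : IsConf f lam) (hg : IsConf g mu) (hgf : ∀ x, g (f x) = x)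
    (hfg : ∀ x, f (g x) = x) {n m : Fin 4 → ℝ} (h : NullPair n m) (x : Fin 4 → ℝ) :
    fderiv ℝ f (x + m) n = fderiv ℝ f x n := by
  have key : ∀ τ : ℝ, f (x + m + τ • n) - f (x + m) = f (x + τ • n) - f x := by
    intro τ
    by_cases hτ : τ = 0
    · simp [hτ]
    obtain ⟨s, hs⟩ := hf.line_image h.nn x τ
    obtain ⟨s', hs'⟩ := hf.line_image h.nn (x + m) τ
    obtain ⟨t, ht⟩ := hf.line_image h.mm x 1
    obtain ⟨t', ht'⟩ := hf.line_image h.mm (x + τ • n) 1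
    obtain ⟨p, hp⟩ := hf.parallel hg hgf hfg h x
    obtain ⟨q, hq⟩ := hf.parallel hg hgf hfg (h.smul hτ).symm x
    rw [one_smul] at ht ht'
    have e : x + m + τ • n = x + τ • n + m := by abel
    have h1 : (s' * p - s) • n + (t - t' * q) • m = 0 := by
      apply hf.injective_fderiv x
      rw [map_add, map_smul, map_smul, map_zero]
      have h2 := hs'
      rw [e, ht', hs, ht, hp, hq, ← sub_eq_zero] at h2
      rw [← neg_eq_zero, ← h2]
      module
    have h3 := (h.indep _ _ h1).1
    rw [hs', hp, hs, smul_smul, sub_eq_zero.1 h3]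
    abel
  have hl : ∀ y, HasDerivAt (fun τ : ℝ => f (y + τ • n) - f y) (fderiv ℝ f y n) 0 := by
    intro y
    have h1 : HasDerivAt (fun τ : ℝ => y + τ • n) n 0 := by
      simpa using ((hasDerivAt_id (0 : ℝ)).smul_const n).const_add y
    have h2 : HasFDerivAt f (fderiv ℝ f y) (y + (0 : ℝ) • n) := by
      simpa using (hf.differentiable y).hasFDerivAt
    exact (h2.comp_hasDerivAt (0 : ℝ) h1).sub_const (f y)
  have h1 := hl (x + m)
  rw [funext key] at h1
  exact h1.unique (hl x)

lemma fderiv_add_smul_self (hf : IsConf f lam) (hg : IsConf g mu) (hgf : ∀ x, g (f x) = x)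
    (hfg : ∀ x, f (g x) = x) {n : Fin 4 → ℝ} (hn : form22 n n = 0) (x : Fin 4 → ℝ) (t : ℝ) :
    fderiv ℝ f (x + t • n) n = fderiv ℝ f x n := by
  by_cases h0 : n = 0
  · simp [h0]
  have h := nullPair_J₁ hn h0
  -- a detour through a point off the line, all moves being transverse to `n`
  rw [← hf.fderiv_add_of_nullPair hg hgf hfg (h.sub_smul t), ← hf.fderiv_add_of_nullPair hg hgf hfg
    h x]
  congr 2
  abel

lemma add_null (hf : IsConf f lam) (hg : IsConf g mu) (hgf : ∀ x, g (f x) = x)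
    (hfg : ∀ x, f (g x) = x) {n : Fin 4 → ℝ} (hn : form22 n n = 0) (x : Fin 4 → ℝ) :
    f (x + n) = f x + fderiv ℝ f x n := by
  have hd : ∀ t : ℝ, HasDerivAt (fun t : ℝ => f (x + t • n) - t • fderiv ℝ f x n) 0 t := by
    intro t
    have h1 : HasDerivAt (fun τ : ℝ => x + τ • n) n t := by
      simpa using ((hasDerivAt_id t).smul_const n).const_add x
    have h2 := (hf.differentiable (x + t • n)).hasFDerivAt.comp_hasDerivAt t h1
    rw [hf.fderiv_add_smul_self hg hgf hfg hn] at h2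
    have h3 := h2.sub ((hasDerivAt_id t).smul_const (fderiv ℝ f x n))
    rw [one_smul, sub_self] at h3
    exact h3
  have h := is_const_of_deriv_eq_zero (fun t => (hd t).differentiableAt) (fun t => (hd t).deriv) 1 0
  simp only [one_smul, zero_smul, add_zero, sub_zero] at h
  exact sub_eq_iff_eq_add.1 h

/-- The conformal factor does not change under translation by a null vector `m`, because the
derivative does not change on two vectors, not orthogonal to each other, that span with `m` the two
totally null planes through `m`. -/
lemma lam_add_null (hf : IsConf f lam) (hg : IsConf g mu) (hgf : ∀ x, g (f x) = x)
    (hfg : ∀ x, f (g x) = x) {m : Fin 4 → ℝ} (hm : form22 m m = 0) (x : Fin 4 → ℝ) :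
    lam (x + m) = lam x := by
  by_cases h0 : m = 0
  · simp [h0]
  have h1 := hf.fderiv_add_of_nullPair hg hgf hfg (nullPair_J₁ hm h0).symm x
  have h2 := hf.fderiv_add_of_nullPair hg hgf hfg (nullPair_J₂ hm h0).symm x
  have h3 := hf.conf (x + m) (J₁ m) (J₂ m)
  rw [h1, h2, hf.conf] at h3
  exact (mul_right_cancel₀ (form22_J₁_J₂ hm h0) h3).symm

end IsConf

/-! ### Rigidity -/

/-- The first of two null summands of `v`. -/
def nul₁ (v : Fin 4 → ℝ) : Fin 4 → ℝ :=
  ![(v 0 + v 2) / 2, (v 1 + v 3) / 2, (v 0 + v 2) / 2, (v 1 + v 3) / 2]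

/-- The second of two null summands of `v`. -/
def nul₂ (v : Fin 4 → ℝ) : Fin 4 → ℝ :=
  ![(v 0 - v 2) / 2, (v 1 - v 3) / 2, -((v 0 - v 2) / 2), -((v 1 - v 3) / 2)]

lemma form22_nul₁ (v : Fin 4 → ℝ) : form22 (nul₁ v) (nul₁ v) = 0 := by
  simp [form22, nul₁]

lemma form22_nul₂ (v : Fin 4 → ℝ) : form22 (nul₂ v) (nul₂ v) = 0 := by
  simp [form22, nul₂]

lemma nul_add (v : Fin 4 → ℝ) : nul₁ v + nul₂ v = v := by
  ext i; fin_cases i <;> simp [nul₁, nul₂] <;> ring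

namespace IsConf

variable {f g : (Fin 4 → ℝ) → (Fin 4 → ℝ)} {lam mu : (Fin 4 → ℝ) → ℝ}

lemma lam_add (hf : IsConf f lam) (hg : IsConf g mu) (hgf : ∀ x, g (f x) = x)
    (hfg : ∀ x, f (g x) = x) (x v : Fin 4 → ℝ) : lam (x + v) = lam x := by
  rw [← nul_add v, ← add_assoc, hf.lam_add_null hg hgf hfg (form22_nul₂ v),
    hf.lam_add_null hg hgf hfg (form22_nul₁ v)]

/-- `f` rescales all squared distances by one factor. -/
lemma form22_sub_self (hf : IsConf f lam) (hg : IsConf g mu) (hgf : ∀ x, g (f x) = x)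
    (hfg : ∀ x, f (g x) = x) (x v : Fin 4 → ℝ) :
    form22 (f (x + v) - f x) (f (x + v) - f x) = lam 0 * form22 v v := by
  have h1 : f (x + v) - f x = fderiv ℝ f (x + nul₁ v) v := by
    have e1 := hf.add_null hg hgf hfg (form22_nul₁ v) x
    have e2 := hf.add_null hg hgf hfg (form22_nul₂ v) (x + nul₁ v)
    have e3 := hf.fderiv_add_smul_self hg hgf hfg (form22_nul₁ v) x 1
    rw [one_smul] at e3
    rw [add_assoc, nul_add] at e2
    have e4 : fderiv ℝ f (x + nul₁ v) v = fderiv ℝ f (x + nul₁ v) (nul₁ v)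
        + fderiv ℝ f (x + nul₁ v) (nul₂ v) := by
      rw [← map_add, nul_add]
    rw [e4, e3, e2, e1]
    abel
  have h2 := hf.lam_add hg hgf hfg 0 (x + nul₁ v)
  rw [zero_add] at h2
  rw [h1, hf.conf, h2]

/-- A conformal diffeomorphism of ℝ^{2,2} is affine. -/
lemma affine (hf : IsConf f lam) (hg : IsConf g mu) (hgf : ∀ x, g (f x) = x)
    (hfg : ∀ x, f (g x) = x) (x : Fin 4 → ℝ) : f x = fderiv ℝ f 0 x + f 0 := by
  have hq := hf.form22_sub_self hg hgf hfg
  have h1 : ∀ y, form22 (f y) (f x - f 0) - form22 (f 0) (f x - f 0) - lam 0 * form22 y x = 0 := by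
    intro y
    have e1 := hq 0 x
    have e2 := hq 0 y
    have e3 := hq x (y - x)
    rw [add_sub_cancel] at e3
    rw [zero_add] at e1 e2
    simp only [form22_sub_left, form22_sub_right, form22_comm (f x) (f y), form22_comm x y,
      form22_comm (f 0)] at e1 e2 e3 ⊢
    linarith
  have h2 : ∀ k, form22 (f x - f 0) (fderiv ℝ f 0 k) = lam 0 * form22 x k := by
    intro k
    have d1 : HasFDerivAt (fun y => form22 (f y) (f x - f 0) - form22 (f 0) (f x - f 0)
        - lam 0 * form22 y x)
        ((formL (f x - f 0)).comp (fderiv ℝ f 0) - lam 0 • formL x) 0 :=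
      (((formL (f x - f 0)).hasFDerivAt.comp 0 (hf.differentiable 0).hasFDerivAt).sub_const
        _).sub ((formL x).hasFDerivAt.const_smul (lam 0))
    rw [funext h1] at d1
    have d2 := congrArg (fun L : (Fin 4 → ℝ) →L[ℝ] ℝ => L k)
      (d1.unique (hasFDerivAt_const (0 : ℝ) 0))
    simp at d2
    rw [form22_comm, form22_comm x]
    linarith
  rw [← sub_eq_iff_eq_add, ← sub_eq_zero]
  refine form22_nondeg fun w => ?_
  obtain ⟨k, rfl⟩ := hf.surjective_fderiv 0 w
  rw [form22_sub_left, h2, hf.conf, sub_self]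

end IsConf

lemma IsConf.inv {f g : (Fin 4 → ℝ) → (Fin 4 → ℝ)} {lam : (Fin 4 → ℝ) → ℝ}
    (hf : IsConf f lam) (hg : ContDiff ℝ 1 g) (hgf : ∀ x, g (f x) = x)
    (hfg : ∀ x, f (g x) = x) : IsConf g fun y => (lam (g y))⁻¹ := by
  refine ⟨hg, fun y => inv_ne_zero (hf.lam_ne _), fun y v w => ?_⟩
  obtain ⟨x, rfl⟩ : ∃ x, y = f x := ⟨g y, (hfg y).symm⟩
  obtain ⟨v, rfl⟩ := hf.surjective_fderiv x v
  obtain ⟨w, rfl⟩ := hf.surjective_fderiv x w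
  have hd := hf.fderiv_comp_inv (hg.differentiable (by norm_num)) hgf
  rw [hd, hd, hf.conf, hgf, inv_mul_cancel_left₀ (hf.lam_ne x)]

/-! ### The action of similarities on polyspherical coordinates -/

/-- The middle four coordinates of a vector of ℝ⁶. -/
def mid : (Fin 6 → ℝ) →ₗ[ℝ] (Fin 4 → ℝ) where
  toFun X := ![X 1, X 2, X 3, X 4]
  map_add' X Y := by ext i; fin_cases i <;> simp
  map_smul' a X := by ext i; fin_cases i <;> simp

/-- The action on polyspherical coordinates of the similarity `x ↦ L x + b` with factor `μ`. On
`s_x` the functional `X 0 + X 5` takes the value `1` and `X 5 - X 0` the value `‖x‖²`, and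
`‖L x + b‖² = μ ‖x‖² + 2 ⟨L x, b⟩ + ‖b‖²`. -/
def lift6 (L : (Fin 4 → ℝ) →ₗ[ℝ] (Fin 4 → ℝ)) (b : Fin 4 → ℝ) (μ : ℝ) :
    (Fin 6 → ℝ) →ₗ[ℝ] (Fin 6 → ℝ) where
  toFun X :=
    let y := L (mid X) + (X 0 + X 5) • b
    let δ := μ * (X 5 - X 0) + 2 * form22 (L (mid X)) b + form22 b b * (X 0 + X 5)
    ![((X 0 + X 5) - δ) / 2, y 0, y 1, y 2, y 3, ((X 0 + X 5) + δ) / 2]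
  map_add' X Y := by
    ext i; fin_cases i <;> simp [form22_add_left] <;> ring
  map_smul' a X := by
    ext i; fin_cases i <;> simp [form22_smul_left] <;> ring

lemma dotProduct_J33 (X Y : Fin 6 → ℝ) :
    X ⬝ᵥ (J33 *ᵥ Y) = form22 (mid X) (mid Y) + X 0 * Y 0 - X 5 * Y 5 := by
  simp [J33, Matrix.mulVec_diagonal, dotProduct, Fin.sum_univ_succ, form22, mid]
  ring

lemma J33_mul_self : J33 * J33 = 1 := by
  rw [J33, Matrix.diagonal_mul_diagonal, ← Matrix.diagonal_one]
  congr 1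
  ext i; fin_cases i <;> simp

lemma lift6_form {L : (Fin 4 → ℝ) →ₗ[ℝ] (Fin 4 → ℝ)} (b : Fin 4 → ℝ) {μ : ℝ}
    (hL : ∀ v w, form22 (L v) (L w) = μ * form22 v w) (X Y : Fin 6 → ℝ) :
    lift6 L b μ X ⬝ᵥ (J33 *ᵥ lift6 L b μ Y) = μ * (X ⬝ᵥ (J33 *ᵥ Y)) := by
  have hm : ∀ Z, mid (lift6 L b μ Z) = L (mid Z) + (Z 0 + Z 5) • b := by
    intro Z; ext i; fin_cases i <;> simp [mid, lift6]
  rw [dotProduct_J33, dotProduct_J33, hm, hm]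
  simp only [form22_add_left, form22_add_right, form22_smul_left, form22_smul_right, hL,
    form22_comm b]
  simp [lift6]
  ring

lemma lift6_sx {L : (Fin 4 → ℝ) →ₗ[ℝ] (Fin 4 → ℝ)} (b : Fin 4 → ℝ) {μ : ℝ}
    (hL : ∀ v w, form22 (L v) (L w) = μ * form22 v w) (x : Fin 4 → ℝ) :
    lift6 L b μ (sx x) = sx (L x + b) := by
  have hm : mid (sx x) = x := by
    ext i; fin_cases i <;> simp [mid, sx]
  have h1 : sx x 0 + sx x 5 = 1 := by simp [sx]; ring
  have h2 : sx x 5 - sx x 0 = q22 x := by simp [sx]; ring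
  have hq : q22 (L x + b) = μ * q22 x + 2 * form22 (L x) b + form22 b b := by
    simp only [q22, form22_add_left, form22_add_right, hL, form22_comm b]; ring
  simp only [lift6, LinearMap.coe_mk, AddHom.coe_mk, h1, h2, hm, one_smul, mul_one, ← hq]
  rfl

/-- A linear map scaling the form `J33` by `μ ≠ 0` is `√|μ|` times an element of `O^±(3,3)`. -/
lemma exists_normalized {T : (Fin 6 → ℝ) →ₗ[ℝ] (Fin 6 → ℝ)} {μ : ℝ} (hμ : μ ≠ 0)
    (hT : ∀ X Y, T X ⬝ᵥ (J33 *ᵥ T Y) = μ * (X ⬝ᵥ (J33 *ᵥ Y))) :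
    ∃ Λ : Matrix (Fin 6) (Fin 6) ℝ, IsUnit Λ ∧
      (Λᵀ * J33 * Λ = J33 ∨ Λᵀ * J33 * Λ = -J33) ∧
      ∃ c : ℝ, c ≠ 0 ∧ ∀ X, T X = c • Λ.mulVec X := by
  have hc : Real.sqrt |μ| ≠ 0 := (Real.sqrt_pos.2 (abs_pos.2 hμ)).ne'
  set c := Real.sqrt |μ| with hcdef
  have hcc : c * c = |μ| := Real.mul_self_sqrt (abs_nonneg μ)
  set M : Matrix (Fin 6) (Fin 6) ℝ := LinearMap.toMatrix' T with hM
  have hMv : ∀ X, M *ᵥ X = T X := fun X => LinearMap.toMatrix'_mulVec T X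
  have hMM : Mᵀ * J33 * M = μ • J33 := by
    apply Matrix.toBilin'.injective
    refine LinearMap.ext fun X => LinearMap.ext fun Y => ?_
    rw [Matrix.toBilin'_apply', Matrix.toBilin'_apply', ← Matrix.mulVec_mulVec,
      ← Matrix.mulVec_mulVec, Matrix.dotProduct_mulVec, Matrix.vecMul_transpose, hMv, hMv, hT,
      Matrix.smul_mulVec, dotProduct_smul, smul_eq_mul]
  have hΛ : (c⁻¹ • M)ᵀ * J33 * (c⁻¹ • M) = (μ / |μ|) • J33 := by
    rw [Matrix.transpose_smul, Matrix.smul_mul, Matrix.smul_mul, Matrix.mul_smul, hMM, smul_smul,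
      smul_smul, ← hcc]
    congr 1
    field_simp
  have hor : (c⁻¹ • M)ᵀ * J33 * (c⁻¹ • M) = J33 ∨ (c⁻¹ • M)ᵀ * J33 * (c⁻¹ • M) = -J33 := by
    rcases lt_or_gt_of_ne hμ with h | h
    · right; rw [hΛ, abs_of_neg h, div_neg, div_self hμ, neg_smul, one_smul]
    · left; rw [hΛ, abs_of_pos h, div_self hμ, one_smul]
  refine ⟨c⁻¹ • M, ?_, hor, c, hc, fun X => ?_⟩
  · rcases hor with h | h
    · refine IsUnit.of_mul_eq_one_right (J33 * ((c⁻¹ • M)ᵀ * J33)) ?_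
      rw [Matrix.mul_assoc, h, J33_mul_self]
    · refine IsUnit.of_mul_eq_one_right (-J33 * ((c⁻¹ • M)ᵀ * J33)) ?_
      rw [Matrix.mul_assoc, h, neg_mul_neg, J33_mul_self]
  · rw [Matrix.smul_mulVec, smul_smul, mul_inv_cancel₀ hc, one_smul, hMv]

theorem conformal_maps_act_linearly_on_DPC (f : (Fin 4 → ℝ) → (Fin 4 → ℝ))
    (hf : ContDiff ℝ 1 f) (hbij : Function.Bijective f)
    (hfinv : ContDiff ℝ 1 (Function.invFun f))
    (lam : (Fin 4 → ℝ) → ℝ) (hlam : ∀ x, lam x ≠ 0)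
    (hconf : ∀ x v w, form22 (fderiv ℝ f x v) (fderiv ℝ f x w) = lam x * form22 v w) :
    ∃ Λ : Matrix (Fin 6) (Fin 6) ℝ, IsUnit Λ ∧
      (Λᵀ * J33 * Λ = J33 ∨ Λᵀ * J33 * Λ = -J33) ∧
      ∃ c : ℝ, c ≠ 0 ∧ ∀ x : Fin 4 → ℝ, sx (f x) = c • Λ.mulVec (sx x) := by
  have hgf : ∀ x, Function.invFun f (f x) = x := Function.leftInverse_invFun hbij.injective
  have hfg : ∀ x, f (Function.invFun f x) = x := Function.rightInverse_invFun hbij.surjective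
  have hF : IsConf f lam := ⟨hf, hlam, hconf⟩
  have haff := hF.affine (hF.inv hfinv hgf hfg) hgf hfg
  let L : (Fin 4 → ℝ) →ₗ[ℝ] (Fin 4 → ℝ) := (fderiv ℝ f 0 : _ →L[ℝ] _)
  have hL : ∀ v w, form22 (L v) (L w) = lam 0 * form22 v w := hconf 0
  obtain ⟨Λ, hu, hor, c, hc, h⟩ := exists_normalized (hlam 0) (lift6_form (f 0) hL)
  refine ⟨Λ, hu, hor, c, hc, fun x => ?_⟩
  rw [← h, lift6_sx _ hL, haff x]
  rfl
end
end

section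
/- Let f : ℝ⁴ → ℝ⁴ be a smooth diffeomorphism and λ : ℝ⁴ → ℝ a smooth nowhere-vanishing function such that ⟨Df_x(v), Df_x(w)⟩ = λ(x)²·⟨v, w⟩ for all x, v, w ∈ ℝ⁴ (f is conformal for the neutral metric with conformal factor λ²). Let u : ℝ⁴ → ℝ be twice continuously differentiable. Then the function x ↦ λ(x)·u(f(x)) is a solution of the ultrahyperbolic equation on ℝ⁴ if and only if u is a solution of the ultrahyperbolic equation on ℝ⁴. -/
/-!
The key identity is `□(λ · (u ∘ f)) = λ³ · (□u) ∘ f`, where `□ = ∑ εᵢ ∂ᵢ²` with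
`ε = (1, 1, -1, -1)`; since `f` is onto and `λ` never vanishes, it gives both implications.

Write `Jᵢ = ∂ᵢ f`, `Hᵢⱼ = ∂ᵢ ∂ⱼ f` and `η` for the neutral metric.

* Conformality says `⟨Jᵢ, Jⱼ⟩ = λ² ηᵢⱼ`; inverting the Jacobian matrix yields the dual relation
  `∑ᵢ εᵢ Jᵢᵃ Jᵢᵇ = λ² ηᵃᵇ` (`completeness`). In particular the `Jᵢ` span, so vectors are
  determined by their products with the `Jᵢ` (`form22_expand`).
* Differentiating conformality and permuting indices, as in the Koszul formula, gives
  `⟨Hᵢⱼ, Jₖ⟩ = λ (λⱼ ηᵢₖ + λᵢ ηⱼₖ - λₖ ηᵢⱼ)` (`koszul`).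
* Differentiating once more and antisymmetrising eliminates the third derivatives of `f`: this is
  the vanishing of the sectional curvatures of `λ² η`, the pull-back of a flat metric
  (`curvature`). The coordinate planes `(0, 1)` and `(2, 3)` alone give `□λ = 0`
  (`box_lam`); this is the vanishing of the scalar curvature in dimension four.
* Contracting the Koszul formula gives `∑ᵢ εᵢ (2 λᵢ Jᵢ + λ Hᵢᵢ) = 0` (`first_order_terms`), a
  cancellation special to dimension four.

In the expansion of `□(λ · (u ∘ f))` the terms of order zero in `u` cancel by `□λ = 0`, those of
order one by `first_order_terms`, and those of order two are `λ³ (□u) ∘ f` by `completeness`.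
-/

noncomputable section

/-- The signs of the neutral metric. -/
def eps : Fin 4 → ℝ := ![1, 1, -1, -1]

/-- The metric coefficients `ηᵢⱼ`. -/
def eta (i j : Fin 4) : ℝ := if i = j then eps i else 0

/-- The `i`-th partial derivative of a vector-valued map; `pderiv4` is the case of real values. -/
def dd {E : Type*} [NormedAddCommGroup E] [NormedSpace ℝ E] (i : Fin 4)
    (F : (Fin 4 → ℝ) → E) : (Fin 4 → ℝ) → E :=
  fun x => fderiv ℝ F x (Pi.single i 1)

theorem form22_eq_sum (v w : Fin 4 → ℝ) : form22 v w = ∑ a, eps a * v a * w a := by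
  simp [form22, eps, Fin.sum_univ_four]; ring

theorem form22_comm_s16 (v w : Fin 4 → ℝ) : form22 v w = form22 w v := by
  simp only [form22]; ring

theorem form22_single (i j : Fin 4) :
    form22 (Pi.single i 1) (Pi.single j 1) = eta i j := by
  fin_cases i <;> fin_cases j <;> simp [form22, eta, eps]

/-! ### Coordinate calculus -/

section calculus

variable {E : Type*} [NormedAddCommGroup E] [NormedSpace ℝ E]

theorem contDiff_dd {m n : WithTop ℕ∞} {F : (Fin 4 → ℝ) → E} (i : Fin 4)
    (h : ContDiff ℝ n F) (hmn : m + 1 ≤ n) : ContDiff ℝ m (dd i F) :=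
  (h.fderiv_right hmn).clm_apply contDiff_const

theorem dd_comm {F : (Fin 4 → ℝ) → E} (h : ContDiff ℝ 2 F) (i j : Fin 4) (x : Fin 4 → ℝ) :
    dd i (dd j F) x = dd j (dd i F) x := by
  have hd : DifferentiableAt ℝ (fderiv ℝ F) x :=
    (h.fderiv_right (m := 1) (by norm_num)).differentiable (by norm_num) x
  have key : ∀ i j, dd i (dd j F) x
      = fderiv ℝ (fderiv ℝ F) x (Pi.single i 1) (Pi.single j 1) := by
    intro i j
    unfold dd
    rw [fderiv_clm_apply hd (differentiableAt_const _)]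
    simp
  rw [key, key]
  exact (h.contDiffAt.isSymmSndFDerivAt (by simp)).eq _ _

theorem dd_apply {F : (Fin 4 → ℝ) → (Fin 4 → ℝ)} {x : Fin 4 → ℝ}
    (h : DifferentiableAt ℝ F x) (i a : Fin 4) :
    dd i (fun y => F y a) x = dd i F x a := by
  unfold dd
  rw [fderiv_apply h]
  rfl

theorem dd_mul {g h : (Fin 4 → ℝ) → ℝ} {x : Fin 4 → ℝ} (hg : DifferentiableAt ℝ g x)
    (hh : DifferentiableAt ℝ h x) (i : Fin 4) :
    dd i (fun y => g y * h y) x = dd i g x * h x + g x * dd i h x := by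
  unfold dd
  rw [fderiv_fun_mul hg hh]
  simp; ring

theorem dd_add {g h : (Fin 4 → ℝ) → ℝ} {x : Fin 4 → ℝ} (hg : DifferentiableAt ℝ g x)
    (hh : DifferentiableAt ℝ h x) (i : Fin 4) :
    dd i (fun y => g y + h y) x = dd i g x + dd i h x := by
  unfold dd
  rw [fderiv_fun_add hg hh]
  simp

theorem dd_sum {g : Fin 4 → (Fin 4 → ℝ) → ℝ} {x : Fin 4 → ℝ}
    (hg : ∀ a, DifferentiableAt ℝ (g a) x) (i : Fin 4) :
    dd i (fun y => ∑ a, g a y) x = ∑ a, dd i (g a) x := by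
  unfold dd
  rw [fderiv_fun_sum (fun a _ => hg a)]
  simp

theorem dd_const (c : ℝ) (x : Fin 4 → ℝ) (i : Fin 4) : dd i (fun _ => c) x = 0 := by
  simp [dd]

theorem dd_form22 {V W : (Fin 4 → ℝ) → (Fin 4 → ℝ)} {x : Fin 4 → ℝ}
    (hV : DifferentiableAt ℝ V x) (hW : DifferentiableAt ℝ W x) (i : Fin 4) :
    dd i (fun y => form22 (V y) (W y)) x
      = form22 (dd i V x) (W x) + form22 (V x) (dd i W x) := by
  have hv : ∀ a, DifferentiableAt ℝ (fun y => V y a) x := fun a => differentiableAt_pi.1 hV a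
  have hw : ∀ a, DifferentiableAt ℝ (fun y => W y a) x := fun a => differentiableAt_pi.1 hW a
  simp only [form22_eq_sum]
  rw [dd_sum (fun a => ((hv a).const_mul (eps a)).fun_mul (hw a)), ← Finset.sum_add_distrib]
  refine Finset.sum_congr rfl fun a _ => ?_
  rw [dd_mul ((hv a).const_mul _) (hw a), dd_mul (differentiableAt_const _) (hv a), dd_const,
    dd_apply hV, dd_apply hW]
  ring

/-- The chain rule, in coordinates. -/
theorem dd_comp {u : (Fin 4 → ℝ) → ℝ} {f : (Fin 4 → ℝ) → (Fin 4 → ℝ)} {x : Fin 4 → ℝ}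
    (hu : DifferentiableAt ℝ u (f x)) (hf : DifferentiableAt ℝ f x) (i : Fin 4) :
    dd i (fun y => u (f y)) x = ∑ a, dd a u (f x) * dd i f x a := by
  have h1 : dd i (fun y => u (f y)) x = fderiv ℝ u (f x) (dd i f x) := by
    unfold dd
    rw [show (fun y => u (f y)) = u ∘ f from rfl, fderiv_comp x hu hf]
    rfl
  rw [h1]
  conv_lhs => rw [pi_eq_sum_univ' (dd i f x)]
  rw [map_sum]
  refine Finset.sum_congr rfl fun a _ => ?_
  rw [map_smul, smul_eq_mul, mul_comm]
  rfl

end calculus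

/-! ### Linear algebra of a conformal frame -/

/-- The columns of a conformal matrix are orthogonal because its rows are: a one-sided inverse of a
square matrix is two-sided. -/
theorem completeness {J : Fin 4 → Fin 4 → ℝ} {l : ℝ} (hl : l ≠ 0)
    (h : ∀ i j, form22 (J i) (J j) = l ^ 2 * eta i j) (a b : Fin 4) :
    ∑ i, eps i * J i a * J i b = l ^ 2 * eta a b := by
  let M : Matrix (Fin 4) (Fin 4) ℝ := Matrix.of J
  let N : Matrix (Fin 4) (Fin 4) ℝ := Matrix.of fun a i => (l ^ 2)⁻¹ * (eps a * J i a * eps i)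
  have heps : ∀ i, eps i * eps i = 1 := by intro i; fin_cases i <;> simp [eps]
  have h1 : M * N = 1 := by
    ext i j
    have : (M * N) i j = (l ^ 2)⁻¹ * eps j * form22 (J i) (J j) := by
      rw [form22_eq_sum, Finset.mul_sum, Matrix.mul_apply]
      refine Finset.sum_congr rfl fun a _ => ?_
      simp only [M, N, Matrix.of_apply]; ring
    rw [this, h, eta, Matrix.one_apply]
    split_ifs with hij
    · subst hij
      have := heps i
      field_simp
      linarith
    · simp
  have h2 : (N * M) a b = (1 : Matrix (Fin 4) (Fin 4) ℝ) a b := by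
    rw [mul_eq_one_comm.1 h1]
  have h3 : (N * M) a b = (l ^ 2)⁻¹ * eps a * ∑ i, eps i * J i a * J i b := by
    rw [Finset.mul_sum, Matrix.mul_apply]
    refine Finset.sum_congr rfl fun i _ => ?_
    simp only [M, N, Matrix.of_apply]; ring
  rw [h3, Matrix.one_apply] at h2
  have h4 : ∑ i, eps i * J i a * J i b
      = l ^ 2 * eps a * ((l ^ 2)⁻¹ * eps a * ∑ i, eps i * J i a * J i b) := by
    have := heps a
    field_simp
    rw [pow_two (eps a), this, mul_one]
  rw [h4, h2, eta]
  split_ifs <;> ring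

/-- Parseval's identity for the orthogonal frame `J`. -/
theorem form22_expand {J : Fin 4 → Fin 4 → ℝ} {l : ℝ} (hl : l ≠ 0)
    (h : ∀ i j, form22 (J i) (J j) = l ^ 2 * eta i j) (v w : Fin 4 → ℝ) :
    l ^ 2 * form22 v w = ∑ i, eps i * form22 v (J i) * form22 w (J i) := by
  have h2 : ∑ i, eps i * form22 v (J i) * form22 w (J i)
      = ∑ a, ∑ b, eps a * eps b * v a * w b * ∑ i, eps i * J i a * J i b := by
    simp only [form22_eq_sum, Fin.sum_univ_four]; ring
  rw [h2]
  simp only [completeness hl h]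
  simp [form22, Fin.sum_univ_four, eta, eps]; ring

theorem eq_zero_of_form22 {J : Fin 4 → Fin 4 → ℝ} {l : ℝ} (hl : l ≠ 0)
    (h : ∀ i j, form22 (J i) (J j) = l ^ 2 * eta i j) {v : Fin 4 → ℝ}
    (hv : ∀ i, form22 v (J i) = 0) (a : Fin 4) : v a = 0 := by
  have h1 := form22_expand hl h v (Pi.single a 1)
  simp only [hv, mul_zero, zero_mul, Finset.sum_const_zero] at h1
  have h2 := (mul_eq_zero.1 h1).resolve_left (pow_ne_zero 2 hl)
  fin_cases a <;> simpa [form22, Pi.single_apply] using h2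

/-! ### Consequences of conformality -/

section conformal

variable {f : (Fin 4 → ℝ) → (Fin 4 → ℝ)} {lam : (Fin 4 → ℝ) → ℝ}

/-- The Koszul formula for the pulled-back metric `λ² η`. -/
theorem koszul (hf : ContDiff ℝ 3 f) (hlam : ContDiff ℝ 2 lam)
    (hJ : ∀ x i j, form22 (dd i f x) (dd j f x) = lam x ^ 2 * eta i j)
    (x : Fin 4 → ℝ) (i j k : Fin 4) :
    form22 (dd i (dd j f) x) (dd k f x)
      = lam x * (dd j lam x * eta i k + dd i lam x * eta j k - dd k lam x * eta i j) := by
  have hfd : ∀ i, DifferentiableAt ℝ (dd i f) x := fun i =>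
    (contDiff_dd (m := 2) i hf (by norm_num)).differentiable (by norm_num) x
  have hld : DifferentiableAt ℝ lam x := hlam.differentiable (by norm_num) x
  have key : ∀ i j k, form22 (dd k (dd i f) x) (dd j f x) + form22 (dd k (dd j f) x) (dd i f x)
      = 2 * lam x * dd k lam x * eta i j := by
    intro i j k
    rw [form22_comm_s16 (dd k (dd j f) x), ← dd_form22 (hfd i) (hfd j)]
    simp only [hJ, pow_two]
    rw [dd_mul (hld.fun_mul hld) (differentiableAt_const _), dd_mul hld hld, dd_const]
    ring
  have hs := dd_comm (hf.of_le (by norm_num : (2 : WithTop ℕ∞) ≤ 3))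
  have e1 := key j k i
  have e2 := key k i j
  have e3 := key i j k
  rw [hs j i] at e2
  rw [hs k i, hs k j] at e3
  have hc : ∀ a b, eta a b = eta b a := by
    intro a b; unfold eta; by_cases h : a = b
    · simp [h]
    · simp [h, Ne.symm h]
  rw [hc k i] at e2
  linarith

/-- The sectional curvature of `λ² η` in the coordinate plane `(i, k)` vanishes: the third
derivatives of `f` in the two derivatives of `koszul` agree and cancel. -/
theorem curvature (hf : ContDiff ℝ 3 f) (hlam : ContDiff ℝ 2 lam)
    (hJ : ∀ x i j, form22 (dd i f x) (dd j f x) = lam x ^ 2 * eta i j)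
    (x : Fin 4 → ℝ) {i k : Fin 4} (hik : i ≠ k) :
    form22 (dd i (dd i f) x) (dd k (dd k f) x) - form22 (dd i (dd k f) x) (dd i (dd k f) x)
      = - eta i i * (lam x * dd k (dd k lam) x + dd k lam x ^ 2)
        - eta k k * (lam x * dd i (dd i lam) x + dd i lam x ^ 2) := by
  have hf2 : ∀ i, ContDiff ℝ 2 (dd i f) := fun i => contDiff_dd i hf (by norm_num)
  have hfd : ∀ i, DifferentiableAt ℝ (dd i f) x := fun i =>
    (hf2 i).differentiable (by norm_num) x
  have hfdd : ∀ i j, DifferentiableAt ℝ (dd i (dd j f)) x := fun i j =>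
    (contDiff_dd (m := 1) i (hf2 j) (by norm_num)).differentiable (by norm_num) x
  have hld : DifferentiableAt ℝ lam x := hlam.differentiable (by norm_num) x
  have hldd : ∀ i, DifferentiableAt ℝ (dd i lam) x := fun i =>
    (contDiff_dd (m := 1) i hlam (by norm_num)).differentiable (by norm_num) x
  have hik0 : eta i k = 0 := by simp [eta, hik]
  have hki0 : eta k i = 0 := by simp [eta, Ne.symm hik]
  have e1 := dd_form22 (hfdd i i) (hfd k) k
  have e2 := dd_form22 (hfdd k i) (hfd k) i
  have k1 : (fun y => form22 (dd i (dd i f) y) (dd k f y))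
      = fun y => lam y * (dd k lam y * (- eta i i)) := by
    ext y; rw [koszul hf hlam hJ, hik0]; ring
  have k2 : (fun y => form22 (dd k (dd i f) y) (dd k f y))
      = fun y => lam y * (dd i lam y * eta k k) := by
    ext y; rw [koszul hf hlam hJ, hik0, hki0]; ring
  rw [k1, dd_mul hld ((hldd k).fun_mul (differentiableAt_const _)),
    dd_mul (hldd k) (differentiableAt_const _), dd_const] at e1
  rw [k2, dd_mul hld ((hldd i).fun_mul (differentiableAt_const _)),
    dd_mul (hldd i) (differentiableAt_const _), dd_const,
    dd_comm (hf2 i) i k, dd_comm (hf.of_le (by norm_num)) k i] at e2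
  linarith

/-- The flatness of `λ² η` forces `□λ = 0`. By `koszul` and `form22_expand`, `curvature` expresses the
second derivatives of `λ` in each of the planes `(0, 1)` and `(2, 3)` through `∑ λₚ²`, and the two
values agree. -/
theorem box_lam (hf : ContDiff ℝ 3 f) (hlam : ContDiff ℝ 2 lam) (hlam0 : ∀ x, lam x ≠ 0)
    (hJ : ∀ x i j, form22 (dd i f x) (dd j f x) = lam x ^ 2 * eta i j) (x : Fin 4 → ℝ) :
    ∑ i, eps i * dd i (dd i lam) x = 0 := by
  have hl := hlam0 x
  have hex : ∀ i j k m, form22 (dd i (dd j f) x) (dd k (dd m f) x)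
      = ∑ p, eps p * (dd j lam x * eta i p + dd i lam x * eta j p - dd p lam x * eta i j)
        * (dd m lam x * eta k p + dd k lam x * eta m p - dd p lam x * eta k m) := by
    intro i j k m
    have h1 := form22_expand hl (hJ x) (dd i (dd j f) x) (dd k (dd m f) x)
    simp only [koszul hf hlam hJ] at h1
    apply mul_left_cancel₀ (pow_ne_zero 2 hl)
    rw [h1, Finset.mul_sum]
    refine Finset.sum_congr rfl fun p _ => by ring
  have c1 := curvature hf hlam hJ x (i := 0) (k := 1) (by decide)
  have c2 := curvature hf hlam hJ x (i := 2) (k := 3) (by decide)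
  rw [hex, hex] at c1 c2
  simp [eta, eps, Fin.sum_univ_four] at c1 c2
  have hbox : ∑ i, eps i * dd i (dd i lam) x = dd 0 (dd 0 lam) x + dd 1 (dd 1 lam) x
      - dd 2 (dd 2 lam) x - dd 3 (dd 3 lam) x := by
    simp [eps, Fin.sum_univ_four]; ring
  rw [hbox]
  apply mul_left_cancel₀ hl
  linarith

theorem first_order_terms (hf : ContDiff ℝ 3 f) (hlam : ContDiff ℝ 2 lam)
    (hlam0 : ∀ x, lam x ≠ 0)
    (hJ : ∀ x i j, form22 (dd i f x) (dd j f x) = lam x ^ 2 * eta i j)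
    (x : Fin 4 → ℝ) (a : Fin 4) :
    ∑ i, eps i * (2 * dd i lam x * dd i f x a + lam x * dd i (dd i f) x a) = 0 := by
  refine eq_zero_of_form22 (hlam0 x) (hJ x)
    (v := fun a => ∑ i, eps i * (2 * dd i lam x * dd i f x a + lam x * dd i (dd i f) x a)) ?_ a
  intro k
  have h1 : form22 (fun a => ∑ i, eps i * (2 * dd i lam x * dd i f x a
      + lam x * dd i (dd i f) x a)) (dd k f x)
      = ∑ i, eps i * (2 * dd i lam x * form22 (dd i f x) (dd k f x)
        + lam x * form22 (dd i (dd i f) x) (dd k f x)) := by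
    simp only [form22, Fin.sum_univ_four]; ring
  rw [h1]
  simp only [hJ, koszul hf hlam hJ]
  fin_cases k <;> simp [Fin.sum_univ_four, eta, eps] <;> ring

/-- The conformal covariance `□(λ · (u ∘ f)) = λ³ · (□u) ∘ f`. -/
theorem box_conformal (hf : ContDiff ℝ 3 f) (hlam : ContDiff ℝ 2 lam)
    (hlam0 : ∀ x, lam x ≠ 0)
    (hJ : ∀ x i j, form22 (dd i f x) (dd j f x) = lam x ^ 2 * eta i j)
    {u : (Fin 4 → ℝ) → ℝ} (hu : ContDiff ℝ 2 u) (x : Fin 4 → ℝ) :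
    ∑ i, eps i * dd i (dd i (fun y => lam y * u (f y))) x
      = lam x ^ 3 * ∑ a, eps a * dd a (dd a u) (f x) := by
  have hf1 : Differentiable ℝ f := hf.differentiable (by norm_num)
  have hfd : ∀ i, Differentiable ℝ (dd i f) := fun i =>
    (contDiff_dd (m := 2) i hf (by norm_num)).differentiable (by norm_num)
  have hld : Differentiable ℝ lam := hlam.differentiable (by norm_num)
  have hldd : ∀ i, Differentiable ℝ (dd i lam) := fun i =>
    (contDiff_dd (m := 1) i hlam (by norm_num)).differentiable (by norm_num)
  have hud : Differentiable ℝ u := hu.differentiable (by norm_num)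
  have hudd : ∀ i, Differentiable ℝ (dd i u) := fun i =>
    (contDiff_dd (m := 1) i hu (by norm_num)).differentiable (by norm_num)
  have huf : Differentiable ℝ (fun y => u (f y)) := hud.comp hf1
  have hduf : ∀ a, Differentiable ℝ (fun y => dd a u (f y)) := fun a => (hudd a).comp hf1
  have hfa : ∀ i a, Differentiable ℝ (fun y => dd i f y a) := fun i a =>
    differentiable_pi.1 (hfd i) a
  have hS : ∀ i, Differentiable ℝ (fun y => ∑ a, dd a u (f y) * dd i f y a) := fun i =>
    Differentiable.fun_sum fun a _ => (hduf a).fun_mul (hfa i a)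
  have first : ∀ i, dd i (fun y => lam y * u (f y))
      = fun y => dd i lam y * u (f y) + lam y * ∑ a, dd a u (f y) * dd i f y a := by
    intro i; ext y
    rw [dd_mul (hld y) (huf y), dd_comp (hud _) (hf1 y)]
  have second : ∀ i, dd i (dd i (fun y => lam y * u (f y))) x
      = dd i (dd i lam) x * u (f x)
        + 2 * dd i lam x * (∑ a, dd a u (f x) * dd i f x a)
        + lam x * ∑ a, ((∑ b, dd b (dd a u) (f x) * dd i f x b) * dd i f x a
            + dd a u (f x) * dd i (dd i f) x a) := by
    intro i
    rw [first, dd_add ((hldd i x).fun_mul (huf x)) ((hld x).fun_mul (hS i x)),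
      dd_mul (hldd i x) (huf x), dd_mul (hld x) (hS i x), dd_comp (hud _) (hf1 x),
      dd_sum (fun a => (hduf a x).fun_mul (hfa i a x))]
    have : ∀ a, dd i (fun y => dd a u (f y) * dd i f y a) x
        = (∑ b, dd b (dd a u) (f x) * dd i f x b) * dd i f x a
            + dd a u (f x) * dd i (dd i f) x a := by
      intro a
      rw [dd_mul (hduf a x) (hfa i a x), dd_comp (hudd a _) (hf1 x), dd_apply (hfd i x)]
    simp only [this]
    ring
  have regroup : ∑ i, eps i * dd i (dd i (fun y => lam y * u (f y))) x
      = (∑ i, eps i * dd i (dd i lam) x) * u (f x)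
        + ∑ a, dd a u (f x)
          * ∑ i, eps i * (2 * dd i lam x * dd i f x a + lam x * dd i (dd i f) x a)
        + lam x * ∑ a, ∑ b, dd b (dd a u) (f x) * ∑ i, eps i * dd i f x a * dd i f x b := by
    simp only [second, Fin.sum_univ_four]; ring
  rw [regroup, box_lam hf hlam hlam0 hJ]
  simp only [first_order_terms hf hlam hlam0 hJ, completeness (hlam0 x) (hJ x)]
  simp [eta, Fin.sum_univ_four]; ring

end conformal

theorem box_eq_sum (u : (Fin 4 → ℝ) → ℝ) (x : Fin 4 → ℝ) :
    pderiv4 0 (pderiv4 0 u) x + pderiv4 1 (pderiv4 1 u) x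
      - pderiv4 2 (pderiv4 2 u) x - pderiv4 3 (pderiv4 3 u) x
      = ∑ i, eps i * dd i (dd i u) x := by
  have : ∀ i, pderiv4 i (pderiv4 i u) x = dd i (dd i u) x := fun _ => rfl
  simp [this, eps, Fin.sum_univ_four]; ring

theorem conformal_invariance_of_UHE (f : (Fin 4 → ℝ) → (Fin 4 → ℝ))
    (hf : ContDiff ℝ (⊤ : ℕ∞) f) (hbij : Function.Bijective f)
    (hfinv : ContDiff ℝ (⊤ : ℕ∞) (Function.invFun f))
    (lam : (Fin 4 → ℝ) → ℝ) (hlam : ContDiff ℝ (⊤ : ℕ∞) lam) (hlam0 : ∀ x, lam x ≠ 0)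
    (hconf : ∀ x v w, form22 (fderiv ℝ f x v) (fderiv ℝ f x w) = (lam x) ^ 2 * form22 v w)
    (u : (Fin 4 → ℝ) → ℝ) (hu : ContDiff ℝ 2 u) :
    IsUltrahyperbolic (fun x => lam x * u (f x)) ↔ IsUltrahyperbolic u := by
  have hf3 : ContDiff ℝ 3 f := hf.of_le (by simpa using WithTop.coe_le_coe.2 (le_top : (3 : ℕ∞) ≤ ⊤))
  have hl2 : ContDiff ℝ 2 lam := hlam.of_le (by simpa using WithTop.coe_le_coe.2 (le_top : (2 : ℕ∞) ≤ ⊤))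
  have hJ : ∀ x i j, form22 (dd i f x) (dd j f x) = lam x ^ 2 * eta i j := by
    intro x i j
    rw [← form22_single]
    exact hconf x _ _
  have hcd : ContDiff ℝ 2 (fun x => lam x * u (f x)) :=
    hl2.mul (hu.comp (hf3.of_le (by norm_num)))
  simp only [IsUltrahyperbolic, hu, hcd, true_and, box_eq_sum,
    box_conformal hf3 hl2 hlam0 hJ hu]
  constructor
  · intro h y
    obtain ⟨x, rfl⟩ := hbij.2 y
    exact (mul_eq_zero.1 (h x)).resolve_left (pow_ne_zero 3 (hlam0 x))
  · intro h x
    rw [h, mul_zero]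
end
end
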